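/- Fix t ≥ 0 and let (γ,σ) be a Lévy pair with σ compactly supported, with cumulants c_1 = γ + ∫ s dσ(s) and c_n = ∫ s^{n−2}(1+s²) dσ(s) for n ≥ 2. For each N let U_{N,t} be the vector of the Gaussian model and let M_N be an N×N random Hermitian matrix whose law satisfies E[exp(i·Tr(A·M_N))] = exp( N · E[ Ψ_{γ,σ}( (U_{N,t})* A U_{N,t} / N ) ] ) for every Hermitian A. Then for every k ≥ 1, lim_{N→∞} E[(1/N)·Tr(M_N^k)] = Σ_{π ∈ Part(k)} e^{−κ(π)·t} · ∏_{J ∈ π} c_{|J|}. -/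

import Mathlib

/-!
The mean of `tr M^k` is computed exactly at finite `N` as a sum over partitions of `{1, …, k}`, and
each term is then analysed as `N → ∞`.

*Finite `N`.* Since `σ` has compact support, its Lévy exponent is smooth with derivatives of at
most quadratic growth (`levyExponent_smooth`). The Fourier transform of `M` is therefore smooth, which
first gives moments of every order (`allMom_of_smooth_charFun`) and then, by differentiating `k` times at
the origin and expanding with Faà di Bruno's formula, a sum over partitions of the product of the
`N c_{|J|}` over the blocks `J` times the mean trace of a word in the rank-one matrices `u u* / N`, with
one independent copy of `u` for each block (`moment_of_fourier`, `trace_moment_formula`).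

*Factorization.* By invariance of the model under sign changes and permutations of the coordinates,
the mean of a word of such matrices is a scalar matrix. Hence a factor whose letters do not occur in the
rest of the word splits off (`wordMean_factor`).

*Indecomposable words.* The trace of a word is the product of the normalized inner products along its
cyclic edges. Given the indices `X` of the basis vectors, such an inner product is `1` on an edge joining
a letter to itself, `e^{-t}` on an edge joining distinct letters with the same index, and `0` otherwise,
up to an error `O(N^{-1/2})` in every `L^p`. If no proper factor of the word splits off, an assignment
with `c ≥ 2` distinct indices changes index at least `2c` times along the cycle
(`two_mul_card_le_changes`) and so contributes `O(N^{-c})`; as there are `O(N^c)` choices of the `c`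
values, only the constant assignments survive the normalization, and the limit is `e^{-t}` to the number
of cyclically adjacent pairs of distinct letters (`tendsto_wordMean_indecomp`).

*Reduction to that case.* On a block of the smallest noncrossing partition above `π`, the word of `π` is
indecomposable, for otherwise the noncrossing partition could be refined (`indecomp_class`). The block
with the largest minimum is an interval of what remains, so the blocks can be removed one at a time
(`tendsto_wordMean`), and the exponents add up to `κ(π)`.
-/

open MeasureTheory ProbabilityTheory Matrix Filter Topology
open scoped ENNReal

noncomputable section

/-- The standard complex Gaussian law on `ℂ` (`E|g|² = 1`): real and imaginary parts
are independent centered real Gaussians of variance `1/2`. -/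
def stdCplxGaussian : Measure ℂ :=
  Measure.map (fun p : ℝ × ℝ => (p.1 : ℂ) + (p.2 : ℂ) * Complex.I)
    ((gaussianReal 0 (1 / 2)).prod (gaussianReal 0 (1 / 2)))

/-- The uniform law on `Fin N`. -/
def uniformFin (N : ℕ) : Measure (Fin N) :=
  (N : ℝ≥0∞)⁻¹ • ∑ i : Fin N, Measure.dirac i

/-- The law of the vector `U_{N,t} = e^{-t/2} √N X_N + √(1-e^{-t}) G_N` of the Gaussian
model, where `X_N` is uniform on the canonical basis of `ℂ^N`, independent of `G_N`
whose entries are i.i.d. standard complex Gaussians. -/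
def gaussModelLaw (t : ℝ) (N : ℕ) : Measure (Fin N → ℂ) :=
  Measure.map
    (fun p : Fin N × (Fin N → ℂ) => fun j =>
      ((Real.exp (-t / 2) * Real.sqrt N : ℝ) : ℂ) * (if j = p.1 then 1 else 0) +
        ((Real.sqrt (1 - Real.exp (-t)) : ℝ) : ℂ) * p.2 j)
    ((uniformFin N).prod (Measure.pi fun _ : Fin N => stdCplxGaussian))

/-- The `i`-th entry (`0`-indexed) of a vector in `ℂ^N`, extended by `0`. -/
def entryV {N : ℕ} (u : Fin N → ℂ) (i : ℕ) : ℂ :=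
  if h : i < N then u ⟨i, h⟩ else 0


/-- A setoid (partition) on `Fin k` is non-crossing if there are no
`x < y < z < w` with `x ∼ z`, `y ∼ w` and `x ≁ y`. -/
def NonCrossing {k : ℕ} (s : Setoid (Fin k)) : Prop :=
  ∀ x y z w : Fin k, x < y → y < z → z < w → s.r x z → s.r y w → s.r x y

/-- The smallest non-crossing partition coarser than `s` (`nc(π)` in the paper). -/
def ncPart {k : ℕ} (s : Setoid (Fin k)) : Setoid (Fin k) :=
  sInf {r : Setoid (Fin k) | s ≤ r ∧ NonCrossing r}

/-- The cyclic successor of `a` inside its `s`-equivalence class: the smallest element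
of the class greater than `a` if there is one, and the least element of the class
otherwise. -/
def nextInClass {k : ℕ} (s : Setoid (Fin k)) (a : Fin k) : Fin k := by
  classical
  exact if h : (Finset.univ.filter fun x => s.r a x ∧ a < x).Nonempty
    then (Finset.univ.filter fun x => s.r a x ∧ a < x).min' h
    else (Finset.univ.filter fun x => s.r a x).min'
      ⟨a, Finset.mem_filter.mpr ⟨Finset.mem_univ a, Setoid.refl a⟩⟩

/-- `κ(π)`: the total number of times one changes from one block of `π` to another when
running cyclically through each connected component of `π` (the blocks of `nc(π)`). -/
def kappa {k : ℕ} (s : Setoid (Fin k)) : ℕ := by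
  classical
  exact (Finset.univ.filter fun a : Fin k => ¬ s.r a (nextInClass (ncPart s) a)).card

/-- Partitions of `{0,…,k-1}` encoded by their leader functions: `b ℓ` is the least
element of the block of `ℓ`.  Such functions are exactly the idempotent, deflationary
maps `Fin k → Fin k`; the blocks of the associated partition are the fibers of `b`. -/
def leaderFuns (k : ℕ) : Finset (Fin k → Fin k) :=
  Finset.univ.filter fun b => (∀ ℓ, b (b ℓ) = b ℓ) ∧ ∀ ℓ, b ℓ ≤ ℓ

/-- Number of blocks of the partition encoded by the leader function `b`. -/
def numBlocks {k : ℕ} (b : Fin k → Fin k) : ℕ :=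
  (Finset.univ.image b).card


/-- The size of the block with leader `j` of the partition encoded by `b`. -/
def fiberCard {k : ℕ} (b : Fin k → Fin k) (j : Fin k) : ℕ :=
  (Finset.univ.filter fun ℓ => b ℓ = j).card

instance matrixMeasurableSpace {m n α : Type*} [MeasurableSpace α] :
    MeasurableSpace (Matrix m n α) :=
  inferInstanceAs (MeasurableSpace (m → n → α))

/-- The integrand of the Lévy–Khintchine formula. -/
def levyKernel (s ξ : ℝ) : ℂ :=
  if s = 0 then -(ξ : ℂ) ^ 2 / 2
  else (Complex.exp (Complex.I * s * ξ) - 1 - Complex.I * s * ξ / (1 + (s : ℂ) ^ 2)) *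
      ((1 + (s : ℂ) ^ 2) / (s : ℂ) ^ 2)

/-- The Lévy exponent `Ψ_{γ,σ}` of the Lévy pair `(γ, σ)`. -/
def levyExponent (γ : ℝ) (σ : Measure ℝ) (ξ : ℝ) : ℂ :=
  Complex.I * γ * ξ + ∫ s, levyKernel s ξ ∂σ

/-- The cumulants of the Lévy pair `(γ, σ)`. -/
def cum (γ : ℝ) (σ : Measure ℝ) (n : ℕ) : ℝ :=
  if n = 1 then γ + ∫ s, s ∂σ else ∫ s, s ^ (n - 2) * (1 + s ^ 2) ∂σ

/-! ### Indecomposable words -/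

/-- The consecutive pairs along the path `x, l, y`. -/
def pathEdges {ι : Type*} : ι → List ι → ι → List (ι × ι)
  | x, [], y => [(x, y)]
  | x, z :: l, y => (x, z) :: pathEdges z l y

/-- The cyclically consecutive pairs of a word. -/
def cycEdges {ι : Type*} : List ι → List (ι × ι)
  | [] => []
  | x :: l => pathEdges x l x

/-- A word is indecomposable if no proper nonempty factor uses letters which do not occur in the
rest of the word. -/
def Indecomp {ι : Type*} (L : List ι) : Prop :=
  ∀ l1 l2 l3, L = l1 ++ l2 ++ l3 → l2 ≠ [] → l1 ++ l3 ≠ [] → ∃ z ∈ l2, z ∈ l1 ++ l3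

/-- The number of pairs of a list of edges which are separated by a two-colouring. -/
def bdry {ι : Type*} (V : ι → Bool) (E : List (ι × ι)) : ℕ :=
  E.countP fun e => V e.1 != V e.2

theorem length_pathEdges {ι : Type*} (l : List ι) :
    ∀ x y : ι, (pathEdges x l y).length = l.length + 1 := by
  induction l with
  | nil => intro x y; rfl
  | cons z l ih => intro x y; simp [pathEdges, ih]

theorem length_cycEdges {ι : Type*} (L : List ι) : (cycEdges L).length = L.length := by
  cases L with
  | nil => rfl
  | cons x l => simp [cycEdges, length_pathEdges]

theorem mem_pathEdges {ι : Type*} (l : List ι) :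
    ∀ x y : ι, ∀ e ∈ pathEdges x l y, (e.1 = x ∨ e.1 ∈ l) ∧ (e.2 = y ∨ e.2 ∈ l) := by
  induction l with
  | nil => intro x y e he; simp [pathEdges] at he; simp [he]
  | cons z l ih =>
    intro x y e he
    simp only [pathEdges, List.mem_cons] at he
    rcases he with rfl | he
    · simp
    · have := ih z y e he
      simp only [List.mem_cons]
      tauto

theorem mem_cycEdges {ι : Type*} (L : List ι) : ∀ e ∈ cycEdges L, e.1 ∈ L ∧ e.2 ∈ L := by
  cases L with
  | nil => simp [cycEdges]
  | cons x l =>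
    intro e he
    simpa using mem_pathEdges l x x e he

/-- A path which meets both colours splits at its first change of colour. -/
theorem bdry_path_split {ι : Type*} (V : ι → Bool) (l : List ι) :
    ∀ x y : ι, (∃ z ∈ l, V z ≠ V x) → ∃ p z q, l = p ++ z :: q ∧ (∀ w ∈ p, V w = V x) ∧
      V z ≠ V x ∧ bdry V (pathEdges x l y) = 1 + bdry V (pathEdges z q y) := by
  induction l with
  | nil => intro x y h; simp at h
  | cons a l ih =>
    intro x y h
    by_cases ha : V a = V x
    · have h' : ∃ z ∈ l, V z ≠ V a := by
        obtain ⟨z, hz, hne⟩ := h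
        rcases List.mem_cons.mp hz with rfl | hz
        · exact absurd ha hne
        · exact ⟨z, hz, by rwa [ha]⟩
      obtain ⟨p, z, q, rfl, hp, hz, hc⟩ := ih a y h'
      refine ⟨a :: p, z, q, by simp, ?_, by rwa [← ha], ?_⟩
      · intro w hw
        rcases List.mem_cons.mp hw with rfl | hw
        · exact ha
        · rw [hp w hw, ha]
      · rw [← hc]
        simp [bdry, pathEdges, ha]
    · refine ⟨[], a, l, rfl, by simp, ha, ?_⟩
      simp only [bdry, pathEdges, List.countP_cons]
      have : (V x != V a) = true := by simpa using Ne.symm ha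
      simp [this, add_comm]

theorem bdry_path_pos {ι : Type*} (V : ι → Bool) (l : List ι) :
    ∀ x y : ι, V x ≠ V y → 1 ≤ bdry V (pathEdges x l y) := by
  induction l with
  | nil => intro x y h; simp [bdry, pathEdges, h]
  | cons a l ih =>
    intro x y h
    simp only [bdry, pathEdges, List.countP_cons]
    by_cases ha : V x = V a
    · have := ih a y (by rwa [← ha])
      simp only [bdry] at this
      omega
    · have : (V x != V a) = true := by simpa using ha
      simp [this]

/-- Every nontrivial two-colouring of the letters of an indecomposable word changes colour at
least four times around the word: two changes only would exhibit a factor using its own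
letters, and the number of changes is even. -/
theorem four_le_bdry {ι : Type*} (V : ι → Bool) (L : List ι) (hL : Indecomp L)
    (h1 : ∃ x ∈ L, ∃ y ∈ L, V x ≠ V y) : 4 ≤ bdry V (cycEdges L) := by
  cases L with
  | nil => simp at h1
  | cons x l =>
    have hex : ∃ z ∈ l, V z ≠ V x := by
      by_contra hcon
      push Not at hcon
      obtain ⟨u, hu, v, hv, huv⟩ := h1
      have key : ∀ w ∈ x :: l, V w = V x := by
        intro w hw
        rcases List.mem_cons.mp hw with rfl | hw
        · rfl
        · exact hcon w hw
      exact huv ((key u hu).trans (key v hv).symm)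
    obtain ⟨p, z, q, rfl, hp, hz, hc⟩ := bdry_path_split V l x x hex
    have hex2 : ∃ w ∈ q, V w ≠ V z := by
      by_contra hcon
      push Not at hcon
      obtain ⟨w, hw, hw'⟩ := hL (x :: p) (z :: q) [] (by simp) (by simp) (by simp)
      simp only [List.append_nil, List.mem_cons] at hw hw'
      have a1 : V w = V z := by rcases hw with rfl | hw; rfl; exact hcon w hw
      have a2 : V w = V x := by rcases hw' with rfl | hw; rfl; exact hp w hw
      exact hz (a1.symm.trans a2)
    obtain ⟨p2, z2, q2, rfl, hp2, hz2, hc2⟩ := bdry_path_split V q z x hex2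
    have hz2x : V z2 = V x := by
      revert hz hz2; cases V z <;> cases V z2 <;> cases V x <;> simp
    have hex3 : ∃ w ∈ q2, V w ≠ V z2 := by
      by_contra hcon
      push Not at hcon
      obtain ⟨w, hw, hw'⟩ := hL (x :: p) (z :: p2) (z2 :: q2) (by simp) (by simp) (by simp)
      simp only [List.mem_append, List.mem_cons] at hw hw'
      have a1 : V w = V z := by rcases hw with rfl | hw; rfl; exact hp2 w hw
      have a2 : V w = V x := by
        rcases hw' with (rfl | hw) | (rfl | hw)
        · rfl
        · exact hp w hw
        · exact hz2x
        · rw [hcon w hw, hz2x]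
      exact hz (a1.symm.trans a2)
    obtain ⟨p3, z3, q3, rfl, hp3, hz3, hc3⟩ := bdry_path_split V q2 z2 x hex3
    have := bdry_path_pos V q3 z3 x (by rwa [← hz2x])
    simp only [cycEdges]
    omega

/-- If `X` takes at least two values on the letters of an indecomposable word, then the number of
cyclic changes of `X` is at least twice the number of values. -/
theorem two_mul_card_le_changes {ι κ : Type*} [DecidableEq κ] (X : ι → κ) (L : List ι)
    (hL : Indecomp L) (h2 : 2 ≤ (L.map X).toFinset.card) :
    2 * (L.map X).toFinset.card ≤ (cycEdges L).countP (fun e => X e.1 ≠ X e.2) := by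
  have hdouble : ∀ (I : Finset κ) (E : List (ι × ι)),
      ∑ v ∈ I, bdry (fun i => decide (X i = v)) E ≤ 2 * E.countP (fun e => X e.1 ≠ X e.2) := by
    intro I E
    induction E with
    | nil => simp [bdry]
    | cons e E ih =>
      simp only [bdry, List.countP_cons] at ih ⊢
      rw [Finset.sum_add_distrib, mul_add]
      refine add_le_add ih ?_
      by_cases h : X e.1 = X e.2
      · simp [h]
      · calc _ ≤ ∑ v ∈ I, ((if v = X e.1 then 1 else 0) + (if v = X e.2 then 1 else 0)) := by
              apply Finset.sum_le_sum
              intro v _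
              by_cases h1 : X e.1 = v <;> by_cases h3 : X e.2 = v <;> simp [h1, h3]
          _ ≤ 2 := by
              rw [Finset.sum_add_distrib, Finset.sum_ite_eq', Finset.sum_ite_eq']
              split_ifs <;> omega
          _ = _ := by simp [h]
  have h4 : ∀ v ∈ (L.map X).toFinset, 4 ≤ bdry (fun i => decide (X i = v)) (cycEdges L) := by
    intro v hv
    apply four_le_bdry _ _ hL
    obtain ⟨x, hx, hxv⟩ := List.mem_map.mp (List.mem_toFinset.mp hv)
    obtain ⟨w, hw, hwv⟩ := Finset.exists_mem_ne (show 1 < (L.map X).toFinset.card by omega) v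
    obtain ⟨y, hy, hyw⟩ := List.mem_map.mp (List.mem_toFinset.mp hw)
    exact ⟨x, hx, y, hy, by simp [hxv, hyw, hwv]⟩
  have := Finset.sum_le_sum h4
  have h5 := hdouble (L.map X).toFinset (cycEdges L)
  simp only [Finset.sum_const, smul_eq_mul] at this
  omega

/-! ### Finite and uniformly bounded moments -/

set_option linter.unusedSectionVars false

theorem holder_two_mul (p : ℕ) :
    ENNReal.HolderTriple ((2 * p : ℕ) : ℝ≥0∞) ((2 * p : ℕ) : ℝ≥0∞) (p : ℝ≥0∞) := by
  constructor
  push_cast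
  rw [ENNReal.mul_inv (by simp) (by simp), ← add_mul, ENNReal.inv_two_add_inv_two, one_mul]

/-- A complex random variable with finite absolute moments of every order. -/
def AllMom {Ω : Type*} [MeasurableSpace Ω] (μ : Measure Ω) (f : Ω → ℂ) : Prop :=
  ∀ p : ℕ, MemLp f p μ

namespace AllMom
variable {Ω : Type*} [MeasurableSpace Ω] {μ : Measure Ω} {f g : Ω → ℂ}

theorem integrable (h : AllMom μ f) : Integrable f μ := by
  rw [← memLp_one_iff_integrable]; simpa using h 1

theorem const [IsFiniteMeasure μ] (c : ℂ) : AllMom μ (fun _ => c) := fun _ => memLp_const c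

theorem add (hf : AllMom μ f) (hg : AllMom μ g) : AllMom μ (fun x => f x + g x) :=
  fun p => (hf p).add (hg p)

theorem neg (hf : AllMom μ f) : AllMom μ (fun x => - f x) := fun p => (hf p).neg

theorem sub (hf : AllMom μ f) (hg : AllMom μ g) : AllMom μ (fun x => f x - g x) :=
  fun p => (hf p).sub (hg p)

theorem mul (hf : AllMom μ f) (hg : AllMom μ g) : AllMom μ (fun x => f x * g x) := fun p =>
  have := holder_two_mul p
  MemLp.mul' (hg (2 * p)) (hf (2 * p))

theorem const_mul (hf : AllMom μ f) (c : ℂ) : AllMom μ (fun x => c * f x) :=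
  fun p => (hf p).const_mul c

theorem mono (hf : AllMom μ f) (hg : AEStronglyMeasurable g μ) (h : ∀ x, ‖g x‖ ≤ ‖f x‖) :
    AllMom μ g := fun p => (hf p).mono hg (ae_of_all _ h)

theorem star (hf : AllMom μ f) : AllMom μ (fun x => star (f x)) :=
  hf.mono (continuous_star.comp_aestronglyMeasurable (hf 0).1) (fun x => by simp)

theorem ofReal_re (hf : AllMom μ f) : AllMom μ (fun x => ((f x).re : ℂ)) :=
  hf.mono ((Complex.continuous_ofReal.comp Complex.continuous_re).comp_aestronglyMeasurable
    (hf 0).1) (fun x => by simpa using Complex.abs_re_le_norm (f x))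

theorem ofReal_norm (hf : AllMom μ f) : AllMom μ (fun x => ((‖f x‖ : ℝ) : ℂ)) :=
  hf.mono ((Complex.continuous_ofReal.comp continuous_norm).comp_aestronglyMeasurable
    (hf 0).1) (fun x => by simp)

theorem sum {ι : Type*} (s : Finset ι) {F : ι → Ω → ℂ} (h : ∀ i ∈ s, AllMom μ (F i)) :
    AllMom μ (fun x => ∑ i ∈ s, F i x) := fun p => memLp_finsetSum s fun i hi => h i hi p

theorem prod [IsFiniteMeasure μ] {ι : Type*} (s : Finset ι) {F : ι → Ω → ℂ}
    (h : ∀ i ∈ s, AllMom μ (F i)) : AllMom μ (fun x => ∏ i ∈ s, F i x) := by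
  classical
  induction s using Finset.induction_on with
  | empty => simpa using AllMom.const (1 : ℂ)
  | insert a s ha ih =>
    simp only [Finset.prod_insert ha]
    exact (h a (by simp)).mul (ih fun i hi => h i (by simp [hi]))

theorem pow [IsFiniteMeasure μ] (hf : AllMom μ f) (n : ℕ) : AllMom μ (fun x => f x ^ n) := by
  simpa using AllMom.prod (μ := μ) (Finset.range n) (F := fun _ => f) (fun _ _ => hf)

theorem comp_mp {Ω' : Type*} [MeasurableSpace Ω'] {ν : Measure Ω'} {φ : Ω' → Ω}
    (hf : AllMom μ f) (hφ : MeasurePreserving φ ν μ) : AllMom ν (fun x => f (φ x)) :=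
  fun p => (hf p).comp_measurePreserving hφ

end AllMom

/-- A family of complex random variables, indexed by `i : I` and living on possibly different
probability spaces, whose absolute moments of each order are bounded uniformly in `i`. -/
def UnifMom {I : Type*} {Ω : I → Type*} [∀ i, MeasurableSpace (Ω i)] (μ : ∀ i, Measure (Ω i))
    (f : ∀ i, Ω i → ℂ) : Prop :=
  ∀ p : ℕ, ∃ C : NNReal, ∀ i, AEStronglyMeasurable (f i) (μ i) ∧ eLpNorm (f i) p (μ i) ≤ C

namespace UnifMom
variable {I : Type*} {Ω : I → Type*} [∀ i, MeasurableSpace (Ω i)] {μ : ∀ i, Measure (Ω i)}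
  [∀ i, IsProbabilityMeasure (μ i)] {f g : ∀ i, Ω i → ℂ}

theorem const {c : I → ℂ} (K : NNReal) (h : ∀ i, ‖c i‖ ≤ K) : UnifMom μ (fun i _ => c i) := by
  intro p
  refine ⟨K, fun i => ⟨aestronglyMeasurable_const, ?_⟩⟩
  rcases Nat.eq_zero_or_pos p with rfl | hp
  · simp
  · rw [eLpNorm_const _ (by simpa using hp.ne') (IsProbabilityMeasure.ne_zero _)]
    simp only [measure_univ, ENNReal.one_rpow, mul_one]
    rw [enorm_eq_nnnorm]
    exact_mod_cast h i

theorem mono_exp {p q : ℕ} (hpq : p ≤ q) {C : ℝ≥0∞} {i : I}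
    (hm : AEStronglyMeasurable (f i) (μ i)) (h : eLpNorm (f i) q (μ i) ≤ C) :
    eLpNorm (f i) p (μ i) ≤ C :=
  (eLpNorm_le_eLpNorm_of_exponent_le (by exact_mod_cast hpq) hm).trans h

theorem add (hf : UnifMom μ f) (hg : UnifMom μ g) : UnifMom μ (fun i x => f i x + g i x) := by
  intro p
  obtain ⟨C, hC⟩ := hf (p + 1)
  obtain ⟨D, hD⟩ := hg (p + 1)
  refine ⟨C + D, fun i => ⟨(hC i).1.add (hD i).1, ?_⟩⟩
  refine mono_exp (f := fun i x => f i x + g i x) (Nat.le_succ p) ((hC i).1.add (hD i).1) ?_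
  refine (eLpNorm_add_le (hC i).1 (hD i).1 (by norm_cast; omega)).trans ?_
  rw [ENNReal.coe_add]
  exact add_le_add (hC i).2 (hD i).2

theorem mul (hf : UnifMom μ f) (hg : UnifMom μ g) : UnifMom μ (fun i x => f i x * g i x) := by
  intro p
  obtain ⟨C, hC⟩ := hf (2 * p)
  obtain ⟨D, hD⟩ := hg (2 * p)
  have := holder_two_mul p
  refine ⟨C * D, fun i => ⟨(hC i).1.mul (hD i).1, ?_⟩⟩
  refine (eLpNorm_smul_le_mul_eLpNorm (p := ((2 * p : ℕ) : ℝ≥0∞)) (q := ((2 * p : ℕ) : ℝ≥0∞))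
    (hD i).1 (hC i).1).trans ?_
  rw [ENNReal.coe_mul]
  exact mul_le_mul' (hC i).2 (hD i).2

theorem mono (hf : UnifMom μ f) (hg : ∀ i, AEStronglyMeasurable (g i) (μ i))
    (h : ∀ i x, ‖g i x‖ ≤ ‖f i x‖) : UnifMom μ g := by
  intro p
  obtain ⟨C, hC⟩ := hf p
  exact ⟨C, fun i => ⟨hg i, (eLpNorm_mono (h i)).trans (hC i).2⟩⟩

theorem meas (hf : UnifMom μ f) (i : I) : AEStronglyMeasurable (f i) (μ i) := by
  obtain ⟨C, hC⟩ := hf 0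
  exact (hC i).1

theorem ofReal_norm (hf : UnifMom μ f) : UnifMom μ (fun i x => ((‖f i x‖ : ℝ) : ℂ)) :=
  hf.mono (fun i => (Complex.continuous_ofReal.comp continuous_norm).comp_aestronglyMeasurable
    (hf.meas i)) (fun i x => by simp)

theorem listProd {ι : Type*} (L : List ι) {F : ι → ∀ i, Ω i → ℂ} (h : ∀ e ∈ L, UnifMom μ (F e)) :
    UnifMom μ (fun i x => (L.map fun e => F e i x).prod) := by
  induction L with
  | nil => simpa using UnifMom.const (μ := μ) (c := fun _ => 1) 1 (by simp)
  | cons e L ih =>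
    simp only [List.map_cons, List.prod_cons]
    exact (h e (by simp)).mul (ih fun e he => h e (by simp [he]))

theorem integrable (hf : UnifMom μ f) (i : I) : Integrable (f i) (μ i) := by
  obtain ⟨C, hC⟩ := hf 1
  rw [← memLp_one_iff_integrable]
  exact ⟨(hC i).1, by simpa using (hC i).2.trans_lt ENNReal.coe_lt_top⟩

theorem integral_bound (hf : UnifMom μ f) : ∃ C : ℝ, 0 ≤ C ∧ ∀ i, ‖∫ x, f i x ∂(μ i)‖ ≤ C := by
  obtain ⟨C, hC⟩ := hf 1
  refine ⟨C, C.2, fun i => ?_⟩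
  refine (norm_integral_le_integral_norm _).trans ?_
  rw [integral_norm_eq_lintegral_enorm (hC i).1, ← eLpNorm_one_eq_lintegral_enorm]
  exact ENNReal.toReal_le_of_le_ofReal C.2 (by simpa using (hC i).2)

/-- Bounds on the even moments suffice. -/
theorem of_even_moments {Y : ∀ i, Ω i → ℝ} (hY : ∀ i, AEStronglyMeasurable (Y i) (μ i))
    (hint : ∀ m : ℕ, ∀ i, Integrable (fun x => Y i x ^ (2 * m)) (μ i))
    (hb : ∀ m : ℕ, ∃ C : ℝ, ∀ i, ∫ x, Y i x ^ (2 * m) ∂(μ i) ≤ C) :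
    UnifMom μ (fun i x => (Y i x : ℂ)) := by
  intro p
  have hm : ∀ i, AEStronglyMeasurable (fun x => (Y i x : ℂ)) (μ i) := fun i =>
    Complex.continuous_ofReal.comp_aestronglyMeasurable (hY i)
  obtain ⟨C, hC⟩ := hb (p + 1)
  have hq : ((2 * (p + 1) : ℕ) : ℝ≥0∞) ≠ 0 := by norm_cast
  refine ⟨(max C 0).toNNReal ^ (1 / (2 * (p + 1) : ℕ) : ℝ), fun i => ⟨hm i, ?_⟩⟩
  refine mono_exp (f := fun i x => (Y i x : ℂ)) (q := 2 * (p + 1)) (by omega) (hm i) ?_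
  rw [eLpNorm_eq_lintegral_rpow_enorm_toReal hq (ENNReal.natCast_ne_top _)]
  rw [ENNReal.coe_rpow_of_nonneg _ (by positivity)]
  simp only [ENNReal.toReal_natCast]
  refine ENNReal.rpow_le_rpow ?_ (by positivity)
  have : ∀ x, ‖(Y i x : ℂ)‖ₑ ^ ((2 * (p + 1) : ℕ) : ℝ) = ENNReal.ofReal (Y i x ^ (2 * (p + 1))) := by
    intro x
    rw [ENNReal.rpow_natCast, enorm_eq_nnnorm, ← ENNReal.coe_pow, ENNReal.ofReal]
    congr 1
    ext
    rw [Real.coe_toNNReal _ ((even_two_mul _).pow_nonneg _)]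
    push_cast
    rw [Complex.norm_real, Real.norm_eq_abs, (even_two_mul _).pow_abs]
  simp_rw [this]
  rw [← ofReal_integral_eq_lintegral_ofReal (hint _ i)
    (ae_of_all _ fun x => (even_two_mul _).pow_nonneg _)]
  exact ENNReal.ofReal_le_ofReal ((hC i).trans (le_max_left _ _))

end UnifMom

/-! ### Smoothness of compactly supported Lévy exponents -/

/-- The `n`-th derivative in `ξ` of the Lévy–Khintchine kernel. -/
def levyKernelD : ℕ → ℝ → ℝ → ℂ
  | 0, s, ξ => levyKernel s ξ
  | 1, s, ξ => if s = 0 then -(ξ : ℂ)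
      else Complex.I * (Complex.exp (Complex.I * s * ξ) * (1 + (s : ℂ) ^ 2) - 1) / s
  | n + 2, s, ξ => Complex.I ^ (n + 2) * (s : ℂ) ^ n * (1 + (s : ℂ) ^ 2) *
      Complex.exp (Complex.I * s * ξ)

theorem one_add_sq_ne_zero (s : ℝ) : (1 + (s : ℂ) ^ 2) ≠ 0 := by
  have : (1 + s ^ 2 : ℝ) ≠ 0 := by positivity
  exact_mod_cast this

theorem hasDerivAt_cexp_line (s ξ : ℝ) :
    HasDerivAt (fun ξ : ℝ => Complex.exp (Complex.I * s * ξ))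
      (Complex.exp (Complex.I * s * ξ) * (Complex.I * s)) ξ := by
  have h : HasDerivAt (fun ξ : ℝ => Complex.I * s * (ξ : ℂ)) (Complex.I * s) ξ := by
    simpa using (Complex.ofRealCLM.hasDerivAt (x := ξ)).const_mul (Complex.I * s)
  exact h.cexp

theorem hasDerivAt_levyKernelD (n : ℕ) (s ξ : ℝ) :
    HasDerivAt (levyKernelD n s) (levyKernelD (n + 1) s ξ) ξ := by
  have hξ : HasDerivAt (fun ξ : ℝ => (ξ : ℂ)) 1 ξ := Complex.ofRealCLM.hasDerivAt (x := ξ)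
  have he := hasDerivAt_cexp_line s ξ
  rcases n with _ | _ | n
  · by_cases hs : s = 0
    · have : levyKernelD 0 s = fun ξ : ℝ => -(ξ : ℂ) ^ 2 / 2 := by
        funext x; simp [levyKernelD, levyKernel, hs]
      rw [this]
      simp only [levyKernelD, hs, if_true]
      convert! ((hξ.pow 2).neg.div_const 2) using 1
      simp
      ring
    · have hsc : (s : ℂ) ≠ 0 := by exact_mod_cast hs
      have h1 := one_add_sq_ne_zero s
      have : levyKernelD 0 s = fun ξ : ℝ => (Complex.exp (Complex.I * s * ξ) - 1 -
          Complex.I * s * ξ / (1 + (s : ℂ) ^ 2)) * ((1 + (s : ℂ) ^ 2) / (s : ℂ) ^ 2) := by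
        funext x; simp [levyKernelD, levyKernel, hs]
      rw [this]
      simp only [levyKernelD, hs, if_false]
      convert! ((he.sub_const 1).sub ((hξ.const_mul (Complex.I * s)).div_const
        (1 + (s : ℂ) ^ 2))).mul_const ((1 + (s : ℂ) ^ 2) / (s : ℂ) ^ 2) using 1
      field_simp
  · by_cases hs : s = 0
    · have : levyKernelD 1 s = fun ξ : ℝ => -(ξ : ℂ) := by
        funext x; simp [levyKernelD, hs]
      rw [this]
      convert! hξ.neg using 1
      simp [levyKernelD, hs]
    · have hsc : (s : ℂ) ≠ 0 := by exact_mod_cast hs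
      have : levyKernelD 1 s = fun ξ : ℝ => Complex.I * (Complex.exp (Complex.I * s * ξ) *
          (1 + (s : ℂ) ^ 2) - 1) / s := by
        funext x; simp [levyKernelD, hs]
      rw [this]
      convert! (((he.mul_const (1 + (s : ℂ) ^ 2)).sub_const 1).const_mul Complex.I).div_const
        (s : ℂ) using 1
      simp only [levyKernelD]
      field_simp
      ring
  · simp only [levyKernelD]
    convert! he.const_mul (Complex.I ^ (n + 2) * (s : ℂ) ^ n * (1 + (s : ℂ) ^ 2)) using 1
    ring

theorem measurable_levyKernelD (n : ℕ) (ξ : ℝ) : Measurable fun s => levyKernelD n s ξ := by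
  rcases n with _ | _ | n
  · simp only [levyKernelD, levyKernel]
    exact Measurable.ite (measurableSet_singleton 0) (by fun_prop) (by fun_prop)
  · simp only [levyKernelD]
    exact Measurable.ite (measurableSet_singleton 0) (by fun_prop) (by fun_prop)
  · simp only [levyKernelD]
    fun_prop

theorem norm_cexp_line (s ξ : ℝ) : ‖Complex.exp (Complex.I * s * ξ)‖ = 1 := by
  rw [show Complex.I * s * ξ = ((s * ξ : ℝ) : ℂ) * Complex.I by push_cast; ring]
  exact Complex.norm_exp_ofReal_mul_I _

theorem levyKernelD_zero_zero (s : ℝ) : levyKernelD 0 s 0 = 0 := by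
  by_cases hs : s = 0 <;> simp [levyKernelD, levyKernel, hs]

theorem levyKernelD_one_zero (s : ℝ) : levyKernelD 1 s 0 = Complex.I * s := by
  by_cases hs : s = 0
  · simp [levyKernelD, hs]
  · have hsc : (s : ℂ) ≠ 0 := by exact_mod_cast hs
    simp [levyKernelD, hs]
    field_simp

/-- If `f' = g` with `‖g x‖ ≤ C (1 + |x|) ^ p`, then `‖f x‖ ≤ ‖f 0‖ + C (1 + |x|) ^ (p + 1)`. -/
theorem norm_le_of_deriv_growth {f g : ℝ → ℂ} (h : ∀ x, HasDerivAt f (g x) x) {C : ℝ} (hC : 0 ≤ C)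
    {p : ℕ} (hg : ∀ x, ‖g x‖ ≤ C * (1 + |x|) ^ p) (x : ℝ) :
    ‖f x‖ ≤ ‖f 0‖ + C * (1 + |x|) ^ (p + 1) := by
  have key := (convex_Icc (-|x|) |x|).norm_image_sub_le_of_norm_hasDerivWithin_le
    (f := f) (f' := g) (C := C * (1 + |x|) ^ p) (fun y _ => (h y).hasDerivWithinAt)
    (fun y hy => (hg y).trans (by
      have : |y| ≤ |x| := abs_le.mpr hy
      gcongr))
    (x := 0) (y := x) (by simp) ⟨neg_abs_le x, le_abs_self x⟩
  have h1 : ‖f x‖ ≤ ‖f 0‖ + ‖f x - f 0‖ := by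
    simpa using norm_add_le (f 0) (f x - f 0)
  refine h1.trans (add_le_add le_rfl (key.trans ?_))
  rw [sub_zero, Real.norm_eq_abs, pow_succ, ← mul_assoc]
  have : |x| ≤ 1 + |x| := by linarith
  gcongr

/-- The derivatives of order at least two are bounded; integrating up, all derivatives grow at most
quadratically in `ξ`, uniformly for `|s| ≤ R`. -/
theorem levyKernelD_growth (n : ℕ) {R : ℝ} (hR : 0 ≤ R) :
    ∃ C, 0 ≤ C ∧ ∀ s, |s| ≤ R → ∀ ξ, ‖levyKernelD n s ξ‖ ≤ C * (1 + |ξ|) ^ 2 := by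
  have h2 : ∀ n : ℕ, ∀ s, |s| ≤ R → ∀ ξ, ‖levyKernelD (n + 2) s ξ‖ ≤ R ^ n * (1 + R ^ 2) := by
    intro n s hs ξ
    simp only [levyKernelD, norm_mul, norm_pow, Complex.norm_I, one_pow, one_mul, norm_cexp_line,
      mul_one, Complex.norm_real, Real.norm_eq_abs]
    have : ‖(1 + (s : ℂ) ^ 2)‖ ≤ 1 + R ^ 2 := by
      refine (norm_add_le _ _).trans ?_
      simp only [norm_one, norm_pow, Complex.norm_real, Real.norm_eq_abs]
      gcongr
    gcongr
  have h1 : ∀ s, |s| ≤ R → ∀ ξ, ‖levyKernelD 1 s ξ‖ ≤ (R + (1 + R ^ 2)) * (1 + |ξ|) ^ 1 := by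
    intro s hs ξ
    have := norm_le_of_deriv_growth (hasDerivAt_levyKernelD 1 s) (C := 1 + R ^ 2) (by positivity)
      (p := 0) (fun x => by simpa using h2 0 s hs x) ξ
    rw [levyKernelD_one_zero] at this
    simp only [norm_mul, Complex.norm_I, one_mul, Complex.norm_real, Real.norm_eq_abs] at this
    have h0 : |s| ≤ R * (1 + |ξ|) := by
      nlinarith [abs_nonneg ξ, abs_nonneg s, mul_nonneg hR (abs_nonneg ξ)]
    simp only [zero_add, pow_one] at this ⊢
    linarith
  rcases n with _ | _ | n
  · refine ⟨R + (1 + R ^ 2), by positivity, fun s hs ξ => ?_⟩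
    have := norm_le_of_deriv_growth (hasDerivAt_levyKernelD 0 s) (C := R + (1 + R ^ 2))
      (by positivity) (p := 1) (h1 s hs) ξ
    rwa [levyKernelD_zero_zero, norm_zero, zero_add] at this
  · refine ⟨R + (1 + R ^ 2), by positivity, fun s hs ξ => (h1 s hs ξ).trans ?_⟩
    have : 1 ≤ 1 + |ξ| := by linarith [abs_nonneg ξ]
    gcongr
    norm_num
  · refine ⟨R ^ n * (1 + R ^ 2), by positivity, fun s hs ξ => (h2 n s hs ξ).trans ?_⟩
    have : 1 ≤ (1 + |ξ|) ^ 2 := one_le_pow₀ (by linarith [abs_nonneg ξ])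
    exact le_mul_of_one_le_right (by positivity) this

/-- A compactly supported Lévy exponent is smooth with derivatives of at most quadratic growth,
and its derivatives at `0` are the cumulants up to powers of `i`. -/
theorem levyExponent_smooth (γ : ℝ) (σ : Measure ℝ) [IsFiniteMeasure σ]
    (hσc : ∃ R : ℝ, σ (Set.Icc (-R) R)ᶜ = 0) :
    ∃ D : ℕ → ℝ → ℂ, D 0 = levyExponent γ σ ∧ (∀ n ξ, HasDerivAt (D n) (D (n + 1) ξ) ξ) ∧
      (∀ n, ∃ C, 0 ≤ C ∧ ∀ ξ, ‖D n ξ‖ ≤ C * (1 + |ξ|) ^ 2) ∧ D 0 0 = 0 ∧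
      ∀ n, 1 ≤ n → D n 0 = Complex.I ^ n * (cum γ σ n : ℂ) := by
  obtain ⟨R, hR0, hR⟩ : ∃ R : ℝ, 0 ≤ R ∧ ∀ᵐ s ∂σ, |s| ≤ R := by
    obtain ⟨R, hR⟩ := hσc
    refine ⟨max R 0, le_max_right _ _, ?_⟩
    rw [ae_iff]
    refine measure_mono_null (fun s hs => ?_) hR
    simp only [Set.mem_ofPred_eq, Set.mem_compl_iff, Set.mem_Icc, ← abs_le] at hs ⊢
    exact fun h => hs (h.trans (le_max_left _ _))
  choose C hC0 hC using fun n => levyKernelD_growth n hR0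
  have hint : ∀ n ξ, Integrable (fun s => levyKernelD n s ξ) σ := fun n ξ =>
    Integrable.of_bound (measurable_levyKernelD n ξ).aestronglyMeasurable (C n * (1 + |ξ|) ^ 2)
      (hR.mono fun s hs => hC n s hs ξ)
  have hder : ∀ n ξ, HasDerivAt (fun ξ => ∫ s, levyKernelD n s ξ ∂σ)
      (∫ s, levyKernelD (n + 1) s ξ ∂σ) ξ := by
    intro n ξ
    refine (hasDerivAt_integral_of_dominated_loc_of_deriv_le (s := Metric.ball ξ 1)
      (F := fun ξ s => levyKernelD n s ξ) (F' := fun ξ s => levyKernelD (n + 1) s ξ)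
      (bound := fun _ => C (n + 1) * (1 + (|ξ| + 1)) ^ 2)
      (Metric.ball_mem_nhds ξ one_pos)
      (Eventually.of_forall fun x => (measurable_levyKernelD n x).aestronglyMeasurable)
      (hint n ξ) (measurable_levyKernelD (n + 1) ξ).aestronglyMeasurable ?_
      (integrable_const _) ?_).2
    · refine hR.mono fun s hs x hx => (hC (n + 1) s hs x).trans ?_
      have h1 : |x| ≤ |ξ| + 1 := by
        have h2 : |x - ξ| < 1 := by simpa [Real.dist_eq] using hx
        have := abs_add_le ξ (x - ξ)
        rw [add_sub_cancel] at this
        linarith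
      have := hC0 (n + 1)
      gcongr
    · exact ae_of_all _ fun s x _ => hasDerivAt_levyKernelD n s x
  have hbd : ∀ n ξ, ‖∫ s, levyKernelD n s ξ ∂σ‖ ≤ C n * σ.real Set.univ * (1 + |ξ|) ^ 2 := by
    intro n ξ
    refine (norm_integral_le_of_norm_le_const (hR.mono fun s hs => hC n s hs ξ)).trans
      (le_of_eq (by ring))
  refine ⟨fun n ξ => (if n = 0 then Complex.I * γ * ξ else if n = 1 then Complex.I * γ else 0) +
    ∫ s, levyKernelD n s ξ ∂σ, ?_, ?_, ?_, ?_, ?_⟩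
  · funext ξ
    simp [levyExponent, levyKernelD]
  · intro n ξ
    refine HasDerivAt.add ?_ (hder n ξ)
    rcases n with _ | _ | n
    · simpa using (Complex.ofRealCLM.hasDerivAt (x := ξ)).const_mul (Complex.I * γ)
    · simpa using hasDerivAt_const ξ (Complex.I * (γ : ℂ))
    · simpa using hasDerivAt_const ξ (0 : ℂ)
  · intro n
    refine ⟨|γ| + C n * σ.real Set.univ, by have := hC0 n; positivity, fun ξ => ?_⟩
    refine (norm_add_le _ _).trans ?_
    rw [add_mul]
    refine add_le_add ?_ (hbd n ξ)
    have h1 : 1 ≤ (1 + |ξ|) ^ 2 := one_le_pow₀ (by linarith [abs_nonneg ξ])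
    have h2 : |ξ| ≤ (1 + |ξ|) ^ 2 := by nlinarith [abs_nonneg ξ]
    split_ifs
    · simpa using mul_le_mul_of_nonneg_left h2 (abs_nonneg γ)
    · simpa using mul_le_mul_of_nonneg_left h1 (abs_nonneg γ)
    · simp; positivity
  · simp [levyKernelD_zero_zero]
  · intro n hn
    rcases n with _ | _ | n
    · omega
    · simp only [zero_add, levyKernelD_one_zero]
      rw [integral_const_mul, integral_complex_ofReal]
      simp [cum]
      ring
    · have : ∀ s : ℝ, levyKernelD (n + 2) s 0 =
          Complex.I ^ (n + 2) * ((s ^ n * (1 + s ^ 2) : ℝ) : ℂ) := by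
        intro s; simp [levyKernelD]; ring
      simp only [add_assoc, Nat.reduceAdd, this]
      rw [integral_const_mul, integral_complex_ofReal]
      simp [cum]

/-! ### Moments from smooth characteristic functions -/

/-- Symmetric second differences of a twice continuously differentiable function are `O(h²)`. -/
theorem second_difference_bound {g g1 g2 : ℝ → ℂ} (h1 : ∀ x, HasDerivAt g (g1 x) x)
    (h2 : ∀ x, HasDerivAt g1 (g2 x) x) (hc : Continuous g2) :
    ∃ K : ℝ, 0 ≤ K ∧ ∀ h, |h| ≤ 1 → ‖g h + g (-h) - 2 * g 0‖ ≤ K * h ^ 2 := by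
  obtain ⟨K, hK⟩ := isCompact_Icc.exists_bound_of_continuousOn
    (s := Set.Icc (-1 : ℝ) 1) hc.continuousOn
  have hK0 : 0 ≤ K := (norm_nonneg _).trans (hK 0 (by simp))
  have hneg : ∀ x, HasDerivAt (fun x => g (-x)) (-g1 (-x)) x := fun x => by
    simpa [Function.comp_def] using (h1 (-x)).scomp x (hasDerivAt_neg x)
  have hr : ∀ x, HasDerivAt (fun x => g x + g (-x) - 2 * g 0) (g1 x - g1 (-x)) x := fun x => by
    simpa [sub_eq_add_neg] using ((h1 x).add (hneg x)).sub_const (2 * g 0)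
  have hd : ∀ x, |x| ≤ 1 → ‖g1 x - g1 (-x)‖ ≤ 2 * K * |x| := by
    intro x hx
    have hmem : ∀ y, |y| ≤ 1 → y ∈ Set.Icc (-1 : ℝ) 1 := fun y hy => abs_le.mp hy
    have := (convex_Icc (-1 : ℝ) 1).norm_image_sub_le_of_norm_hasDerivWithin_le
      (f := g1) (f' := g2) (C := K) (fun y _ => (h2 y).hasDerivWithinAt) (fun y hy => hK y hy)
      (hmem (-x) (by simpa using hx)) (hmem x hx)
    refine this.trans (le_of_eq ?_)
    rw [Real.norm_eq_abs, sub_neg_eq_add, ← two_mul, abs_mul]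
    simp; ring
  refine ⟨2 * K, by positivity, fun h hh => ?_⟩
  have := (convex_Icc (-|h|) |h|).norm_image_sub_le_of_norm_hasDerivWithin_le
    (f := fun x => g x + g (-x) - 2 * g 0) (f' := fun x => g1 x - g1 (-x)) (C := 2 * K * |h|)
    (fun y _ => (hr y).hasDerivWithinAt)
    (fun y hy => (hd y ((abs_le.mpr hy).trans hh)).trans (by
      have : |y| ≤ |h| := abs_le.mpr hy
      gcongr))
    (x := 0) (y := h) (Set.mem_Icc.mpr ⟨neg_nonpos.mpr (abs_nonneg h), abs_nonneg h⟩)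
    (Set.mem_Icc.mpr ⟨neg_abs_le h, le_abs_self h⟩)
  simp only [neg_zero, sub_zero] at this
  rw [show g 0 + g 0 - 2 * g 0 = 0 by ring, sub_zero, Real.norm_eq_abs] at this
  refine this.trans (le_of_eq ?_)
  rw [mul_assoc, ← sq, sq_abs]

/-- Differentiation of `E[(i Y)^m exp (i Y s)]` under the integral sign. -/
theorem hasDerivAt_integral_pow_cexp {Ω : Type*} [MeasurableSpace Ω] {P : Measure Ω}
    {Y : Ω → ℝ} (hY : Measurable Y) (m : ℕ) (h0 : Integrable (fun ω => Y ω ^ m) P)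
    (h1 : Integrable (fun ω => Y ω ^ (m + 1)) P) (s : ℝ) :
    HasDerivAt (fun s : ℝ => ∫ ω, (Complex.I * Y ω) ^ m * Complex.exp (Complex.I * Y ω * s) ∂P)
      (∫ ω, (Complex.I * Y ω) ^ (m + 1) * Complex.exp (Complex.I * Y ω * s) ∂P) s := by
  have hmeas : ∀ (n : ℕ) (s : ℝ), AEStronglyMeasurable
      (fun ω => (Complex.I * Y ω) ^ n * Complex.exp (Complex.I * Y ω * s)) P := by
    intro n s
    exact Measurable.aestronglyMeasurable (by fun_prop)
  have hnorm : ∀ (n : ℕ) (s : ℝ) ω, ‖(Complex.I * Y ω) ^ n * Complex.exp (Complex.I * Y ω * s)‖ =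
      ‖Y ω ^ n‖ := by
    intro n s ω
    rw [norm_mul, norm_cexp_line]
    simp
  refine (hasDerivAt_integral_of_dominated_loc_of_deriv_le (s := Set.univ)
    (F := fun (s : ℝ) ω => (Complex.I * Y ω) ^ m * Complex.exp (Complex.I * Y ω * s))
    (F' := fun (s : ℝ) ω => (Complex.I * Y ω) ^ (m + 1) * Complex.exp (Complex.I * Y ω * s))
    (bound := fun ω => ‖Y ω ^ (m + 1)‖) univ_mem (Eventually.of_forall fun x => hmeas m x) ?_
    (hmeas (m + 1) s) (ae_of_all _ fun ω x _ => (hnorm (m + 1) x ω).le) h1.norm ?_).2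
  · exact (h0.norm).mono' (hmeas m s) (ae_of_all _ fun ω => (hnorm m s ω).le)
  · refine ae_of_all _ fun ω x _ => ?_
    convert! (hasDerivAt_cexp_line (Y ω) x).const_mul ((Complex.I * Y ω) ^ m) using 1
    ring

/-- A real random variable whose characteristic function is infinitely differentiable has finite
moments of all orders. Each pair of further moments comes from bounding symmetric second
differences of the derivative already identified and applying Fatou's lemma. -/
theorem allMom_of_smooth_charFun {Ω : Type*} [MeasurableSpace Ω] {P : Measure Ω}
    [IsProbabilityMeasure P] {Y : Ω → ℝ} (hY : Measurable Y) (φ : ℕ → ℝ → ℂ)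
    (h0 : ∀ s : ℝ, ∫ ω, Complex.exp (Complex.I * Y ω * s) ∂P = φ 0 s)
    (hφ : ∀ n s, HasDerivAt (φ n) (φ (n + 1) s) s) : AllMom P (fun ω => (Y ω : ℂ)) := by
  have key : ∀ n : ℕ, Integrable (fun ω => Y ω ^ (2 * n)) P ∧ ∀ s : ℝ,
      ∫ ω, (Complex.I * Y ω) ^ (2 * n) * Complex.exp (Complex.I * Y ω * s) ∂P = φ (2 * n) s := by
    intro n
    induction n with
    | zero => exact ⟨by simp, fun s => by simpa using h0 s⟩
    | succ n ih =>
      obtain ⟨hint, heq⟩ := ih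
      have hcont : Continuous (φ (2 * n + 2)) :=
        continuous_iff_continuousAt.mpr fun s => (hφ _ s).continuousAt
      obtain ⟨K, hK0, hK⟩ := second_difference_bound (hφ (2 * n)) (hφ (2 * n + 1)) hcont
      have hintc : ∀ s : ℝ, Integrable (fun ω => (Complex.I * Y ω) ^ (2 * n) *
          Complex.exp (Complex.I * Y ω * s)) P := fun s =>
        hint.norm.mono' (Measurable.aestronglyMeasurable (by fun_prop))
          (ae_of_all _ fun ω => by rw [norm_mul, norm_cexp_line]; simp)
      have hpt : ∀ (h : ℝ) ω, (((Y ω) ^ (2 * n) * (2 - 2 * Real.cos (Y ω * h)) : ℝ) : ℂ) =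
          -(-1) ^ n * ((Complex.I * Y ω) ^ (2 * n) * Complex.exp (Complex.I * Y ω * h) +
          (Complex.I * Y ω) ^ (2 * n) * Complex.exp (Complex.I * Y ω * (-h : ℝ)) -
          2 * ((Complex.I * Y ω) ^ (2 * n) * Complex.exp (Complex.I * Y ω * (0 : ℝ)))) := by
        intro h ω
        have e1 : Complex.exp (Complex.I * Y ω * h) + Complex.exp (Complex.I * Y ω * (-h : ℝ)) =
            2 * Complex.cos (Y ω * h) := by
          rw [Complex.cos]
          push_cast
          rw [show Complex.I * Y ω * h = Y ω * h * Complex.I by ring,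
            show Complex.I * Y ω * -h = -(Y ω * h) * Complex.I by ring]
          ring
        have e2 : (Complex.I * (Y ω : ℂ)) ^ (2 * n) = (-1) ^ n * (Y ω : ℂ) ^ (2 * n) := by
          rw [mul_pow, pow_mul, Complex.I_sq]
        have e3 : ((-1 : ℂ) ^ n) * (-1) ^ n = 1 := by rw [← mul_pow]; simp
        rw [← mul_add, e1, e2]
        push_cast
        simp only [mul_zero, Complex.exp_zero]
        linear_combination ((Y ω : ℂ) ^ (2 * n) * (2 * Complex.cos (Y ω * h) - 2)) * e3
      have hintr : ∀ h : ℝ, Integrable (fun ω => Y ω ^ (2 * n) * (2 - 2 * Real.cos (Y ω * h))) P := by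
        intro h
        refine (hint.norm.mul_const 4).mono' (Measurable.aestronglyMeasurable (by fun_prop))
          (ae_of_all _ fun ω => ?_)
        rw [norm_mul]
        gcongr
        rw [Real.norm_eq_abs, abs_le]
        constructor <;> linarith [Real.neg_one_le_cos (Y ω * h), Real.cos_le_one (Y ω * h)]
      have hbound : ∀ h : ℝ, |h| ≤ 1 →
          ∫ ω, Y ω ^ (2 * n) * (2 - 2 * Real.cos (Y ω * h)) ∂P ≤ K * h ^ 2 := by
        intro h hh
        refine le_trans ?_ (hK h hh)
        have e : ((∫ ω, Y ω ^ (2 * n) * (2 - 2 * Real.cos (Y ω * h)) ∂P : ℝ) : ℂ) =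
            -(-1) ^ n * (φ (2 * n) h + φ (2 * n) (-h) - 2 * φ (2 * n) 0) := by
          rw [← integral_complex_ofReal]
          simp_rw [hpt]
          have hab : Integrable (fun ω => (Complex.I * Y ω) ^ (2 * n) *
              Complex.exp (Complex.I * Y ω * h) + (Complex.I * Y ω) ^ (2 * n) *
              Complex.exp (Complex.I * Y ω * (-h : ℝ))) P := (hintc h).add (hintc (-h))
          rw [integral_const_mul, integral_sub hab
            ((hintc 0).const_mul 2), integral_add (hintc h) (hintc (-h)), integral_const_mul,
            heq, heq, heq]
        calc _ ≤ ‖((∫ ω, Y ω ^ (2 * n) * (2 - 2 * Real.cos (Y ω * h)) ∂P : ℝ) : ℂ)‖ := by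
              rw [Complex.norm_real]; exact le_abs_self _
          _ = _ := by rw [e, norm_mul]; simp
      have hY2 : Integrable (fun ω => Y ω ^ (2 * (n + 1))) P := by
        set F : ℕ → Ω → ℝ := fun m ω => Y ω ^ (2 * n) * (2 - 2 * Real.cos (Y ω * (1 / (m + 1)))) *
          (m + 1) ^ 2 with hF
        have hFpos : ∀ m ω, 0 ≤ F m ω := fun m ω => by
          have h1 := Real.cos_le_one (Y ω * (1 / (m + 1)))
          have h2 : 0 ≤ Y ω ^ (2 * n) := (even_two_mul n).pow_nonneg _
          have h3 : 0 ≤ 2 - 2 * Real.cos (Y ω * (1 / (m + 1))) := by linarith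
          simp only [hF]; positivity
        have hlim : ∀ ω, Tendsto (fun m => F m ω) atTop (𝓝 (Y ω ^ (2 * (n + 1)))) := by
          intro ω
          have hder : Tendsto (fun x : ℝ => (2 - 2 * Real.cos (Y ω * x)) * (1 / x) ^ 2) (𝓝[≠] 0)
              (𝓝 (Y ω ^ 2)) := by
            have hs : HasDerivAt (fun x : ℝ => Real.sin (Y ω / 2 * x)) (Y ω / 2) 0 := by
              simpa using (((hasDerivAt_id (0 : ℝ)).const_mul (Y ω / 2)).sin)
            have := (hs.tendsto_slope_zero).pow 2
            have := this.const_mul 4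
            rw [show 4 * (Y ω / 2) ^ 2 = Y ω ^ 2 by ring] at this
            refine this.congr fun x => ?_
            simp only [zero_add, mul_zero, Real.sin_zero, sub_zero, smul_eq_mul]
            rw [show Y ω * x = 2 * (Y ω / 2 * x) by ring, Real.cos_two_mul, mul_pow,
              Real.sin_sq]
            ring
          have hseq : Tendsto (fun m : ℕ => (1 / ((m : ℝ) + 1))) atTop (𝓝[≠] 0) := by
            rw [tendsto_nhdsWithin_iff]
            refine ⟨tendsto_one_div_add_atTop_nhds_zero_nat, Eventually.of_forall fun m => ?_⟩
            simp only [Set.mem_compl_iff, Set.mem_singleton_iff]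
            positivity
          have := ((hder.comp hseq).const_mul (Y ω ^ (2 * n)))
          rw [← pow_add] at this
          refine this.congr fun m => ?_
          simp only [hF, Function.comp]
          rw [one_div_one_div]
          ring
        have hFint : ∀ m, Integrable (F m) P := fun m => (hintr _).mul_const _
        have hFb : ∀ m, ∫⁻ ω, ENNReal.ofReal (F m ω) ∂P ≤ ENNReal.ofReal K := by
          intro m
          rw [← ofReal_integral_eq_lintegral_ofReal (hFint m) (ae_of_all _ (hFpos m))]
          refine ENNReal.ofReal_le_ofReal ?_
          simp only [hF]
          rw [integral_mul_const]
          have hm : (0 : ℝ) < (m : ℝ) + 1 := by positivity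
          have := hbound (1 / ((m : ℝ) + 1)) (by
            rw [abs_of_pos (by positivity), div_le_one hm]; linarith [Nat.cast_nonneg (α := ℝ) m])
          calc _ ≤ K * (1 / ((m : ℝ) + 1)) ^ 2 * (m + 1) ^ 2 := by gcongr
            _ = K := by field_simp
        have hmeasF : ∀ m, Measurable (F m) := fun m => by simp only [hF]; fun_prop
        have hfat : ∫⁻ ω, ENNReal.ofReal (Y ω ^ (2 * (n + 1))) ∂P ≤ ENNReal.ofReal K := by
          calc _ = ∫⁻ ω, liminf (fun m => ENNReal.ofReal (F m ω)) atTop ∂P := by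
                refine lintegral_congr fun ω => ?_
                exact ((ENNReal.tendsto_ofReal (hlim ω)).liminf_eq).symm
            _ ≤ liminf (fun m => ∫⁻ ω, ENNReal.ofReal (F m ω) ∂P) atTop :=
                lintegral_liminf_le fun m => (hmeasF m).ennreal_ofReal
            _ ≤ liminf (fun _ : ℕ => ENNReal.ofReal K) atTop :=
                liminf_le_liminf (Eventually.of_forall hFb)
            _ = ENNReal.ofReal K := liminf_const _
        refine ⟨Measurable.aestronglyMeasurable (by fun_prop), ?_⟩
        rw [hasFiniteIntegral_iff_ofReal
          (ae_of_all _ fun ω => (even_two_mul (n + 1)).pow_nonneg _)]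
        exact hfat.trans_lt ENNReal.ofReal_lt_top
      have hY1 : Integrable (fun ω => Y ω ^ (2 * n + 1)) P := by
        refine (hint.add hY2).mono' (Measurable.aestronglyMeasurable (by fun_prop))
          (ae_of_all _ fun ω => ?_)
        have h2 : 0 ≤ (|Y ω|) ^ (2 * n) := by positivity
        simp only [Pi.add_apply, norm_pow, Real.norm_eq_abs]
        rw [← (even_two_mul n).pow_abs, ← (even_two_mul (n + 1)).pow_abs,
          show 2 * (n + 1) = 2 * n + 2 by ring, pow_succ, pow_add (|Y ω|) (2 * n) 2]
        nlinarith [sq_nonneg (|Y ω| - 1), abs_nonneg (Y ω)]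
      refine ⟨hY2, fun s => ?_⟩
      have s1 : ∀ s : ℝ, ∫ ω, (Complex.I * Y ω) ^ (2 * n + 1) *
          Complex.exp (Complex.I * Y ω * s) ∂P = φ (2 * n + 1) s := fun s =>
        (hasDerivAt_integral_pow_cexp hY (2 * n) hint hY1 s).unique (by
          rw [show (fun s : ℝ => ∫ ω, (Complex.I * Y ω) ^ (2 * n) *
            Complex.exp (Complex.I * Y ω * s) ∂P) = φ (2 * n) from funext heq]
          exact hφ _ s)
      exact (hasDerivAt_integral_pow_cexp hY (2 * n + 1) hY1 hY2 s).unique (by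
          rw [show (fun s : ℝ => ∫ ω, (Complex.I * Y ω) ^ (2 * n + 1) *
            Complex.exp (Complex.I * Y ω * s) ∂P) = φ (2 * n + 1) from funext s1]
          exact hφ _ s)
  intro p
  have hm : AEStronglyMeasurable (fun ω => (Y ω : ℂ)) P :=
    Measurable.aestronglyMeasurable (by fun_prop)
  have h2 : MemLp (fun ω => (Y ω : ℂ)) ((2 * (p + 1) : ℕ) : ℝ≥0∞) P := by
    rw [← integrable_norm_rpow_iff hm (by norm_cast) (ENNReal.natCast_ne_top _)]
    refine (key (p + 1)).1.congr (ae_of_all _ fun ω => ?_)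
    simp only [ENNReal.toReal_natCast, Real.rpow_natCast, Complex.norm_real, Real.norm_eq_abs,
      (even_two_mul (p + 1)).pow_abs]
  exact h2.mono_exponent (by norm_cast; omega)

/-! ### Recursion for sums over partitions -/

/-- The block with leader `j` of the partition encoded by `b`, as a set of natural numbers. -/
def fib {k : ℕ} (b : Fin k → Fin k) (j : Fin k) : Finset ℕ :=
  (Finset.univ.filter fun ℓ => b ℓ = j).map Fin.valEmbedding

theorem mem_fib {k : ℕ} (b : Fin k → Fin k) (j : Fin k) (n : ℕ) :
    n ∈ fib b j ↔ ∃ h : n < k, b ⟨n, h⟩ = j := by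
  simp only [fib, Finset.mem_map, Finset.mem_filter, Finset.mem_univ, true_and,
    Fin.valEmbedding_apply]
  constructor
  · rintro ⟨ℓ, h, rfl⟩
    exact ⟨ℓ.2, h⟩
  · rintro ⟨h, hb⟩
    exact ⟨⟨n, h⟩, hb, rfl⟩

theorem card_fib {k : ℕ} (b : Fin k → Fin k) (j : Fin k) : (fib b j).card = fiberCard b j := by
  simp [fib, fiberCard]

/-- Extension of a leader function by the value `v` at the new last point. -/
def extendLeader {k : ℕ} (b : Fin k → Fin k) (v : Fin (k + 1)) : Fin (k + 1) → Fin (k + 1) :=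
  Fin.snoc (α := fun _ => Fin (k + 1)) (fun ℓ => (b ℓ).castSucc) v

theorem extendLeader_castSucc {k : ℕ} (b : Fin k → Fin k) (v : Fin (k + 1)) (ℓ : Fin k) :
    extendLeader b v ℓ.castSucc = (b ℓ).castSucc := by
  simp [extendLeader]

theorem extendLeader_last {k : ℕ} (b : Fin k → Fin k) (v : Fin (k + 1)) :
    extendLeader b v (Fin.last k) = v := by
  simp [extendLeader]

theorem mem_leaderFuns {k : ℕ} {b : Fin k → Fin k} :
    b ∈ leaderFuns k ↔ (∀ ℓ, b (b ℓ) = b ℓ) ∧ ∀ ℓ, b ℓ ≤ ℓ := by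
  simp [leaderFuns]

/-- A partition of `k + 1` points is a partition of the first `k` points together with the choice,
for the last point, of an existing block or of a new singleton block. -/
theorem sum_leaderFuns_succ' (k : ℕ) (F : (Fin (k + 1) → Fin (k + 1)) → ℂ) :
    ∑ b' ∈ leaderFuns (k + 1), F b' = ∑ b ∈ leaderFuns k,
      ((∑ j ∈ Finset.univ.image b, F (extendLeader b j.castSucc)) +
        F (extendLeader b (Fin.last k))) := by
  have hsplit : ∀ b : Fin k → Fin k, (∑ j ∈ Finset.univ.image b, F (extendLeader b j.castSucc)) +
        F (extendLeader b (Fin.last k)) = ∑ v ∈ insert (Fin.last k)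
          ((Finset.univ.image b).map Fin.castSuccEmb), F (extendLeader b v) := by
    intro b
    rw [Finset.sum_insert (by simp [Fin.castSucc_ne_last]), Finset.sum_map, add_comm]
    rfl
  simp_rw [hsplit]
  rw [Finset.sum_sigma']
  symm
  refine Finset.sum_bij (fun p _ => extendLeader p.1 p.2) ?_ ?_ ?_ (fun _ _ => rfl)
  · rintro ⟨b, v⟩ h
    simp only [Finset.mem_sigma, mem_leaderFuns, Finset.mem_insert, Finset.mem_map,
      Finset.mem_image, Finset.mem_univ, true_and, exists_exists_eq_and,
      Fin.coe_castSuccEmb] at h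
    obtain ⟨⟨h1, h2⟩, h3⟩ := h
    rw [mem_leaderFuns]
    refine ⟨fun ℓ => ?_, fun ℓ => ?_⟩
    · induction ℓ using Fin.lastCases with
      | cast ℓ => simp only [extendLeader_castSucc, h1]
      | last =>
        rcases h3 with rfl | ⟨a, rfl⟩
        · simp only [extendLeader_last]
        · simp only [extendLeader_last, extendLeader_castSucc, h1]
    · induction ℓ using Fin.lastCases with
      | cast ℓ => simpa only [extendLeader_castSucc, Fin.castSucc_le_castSucc_iff] using h2 ℓ
      | last => exact Fin.le_last _
  · rintro ⟨b, v⟩ h ⟨b', v'⟩ h' heq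
    have hb : b = b' := by
      ext ℓ
      have := congrFun heq ℓ.castSucc
      simp only [extendLeader_castSucc] at this
      exact congrArg Fin.val (Fin.castSucc_injective k this)
    have hv := congrFun heq (Fin.last k)
    simp only [extendLeader_last] at hv
    rw [hb, hv]
  · intro b' hb'
    rw [mem_leaderFuns] at hb'
    obtain ⟨h1, h2⟩ := hb'
    have hlt : ∀ ℓ : Fin k, ((b' ℓ.castSucc : Fin (k + 1)) : ℕ) < k := fun ℓ =>
      (Fin.le_def.mp (h2 ℓ.castSucc)).trans_lt (by simp)
    have hext : extendLeader (fun ℓ => (⟨b' ℓ.castSucc, hlt ℓ⟩ : Fin k)) (b' (Fin.last k)) = b' := by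
      funext ℓ
      induction ℓ using Fin.lastCases with
      | cast ℓ => rw [extendLeader_castSucc]; rfl
      | last => rw [extendLeader_last]
    refine ⟨⟨fun ℓ => ⟨b' ℓ.castSucc, hlt ℓ⟩, b' (Fin.last k)⟩, ?_, hext⟩
    simp only [Finset.mem_sigma, mem_leaderFuns, Finset.mem_insert, Finset.mem_map,
      Finset.mem_image, Finset.mem_univ, true_and, exists_exists_eq_and,
      Fin.coe_castSuccEmb]
    refine ⟨⟨fun ℓ => Fin.ext ?_, fun ℓ => Fin.le_def.mpr ?_⟩, ?_⟩
    · change ((b' (b' ℓ.castSucc) : Fin (k + 1)) : ℕ) = b' ℓ.castSucc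
      rw [h1]
    · exact Fin.le_def.mp (h2 ℓ.castSucc)
    · rcases Fin.eq_castSucc_or_eq_last (b' (Fin.last k)) with ⟨a, ha⟩ | h
      · right
        refine ⟨a, ?_⟩
        rw [ha]
        have := h1 (Fin.last k)
        rw [ha] at this
        exact Fin.ext (congrArg Fin.val this)
      · exact Or.inl h

theorem fib_extend_castSucc {k : ℕ} (b : Fin k → Fin k) (v : Fin (k + 1)) (j : Fin k) :
    fib (extendLeader b v) j.castSucc =
      if v = j.castSucc then insert k (fib b j) else fib b j := by
  have h0 : ∀ n (h : n < k), extendLeader b v ⟨n, h.trans (Nat.lt_succ_self k)⟩ = (b ⟨n, h⟩).castSucc := fun n h =>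
    extendLeader_castSucc b v ⟨n, h⟩
  have h1 : ∀ h, extendLeader b v ⟨k, h⟩ = v := fun h => extendLeader_last b v
  ext n
  split_ifs with hv <;> simp only [Finset.mem_insert, mem_fib] <;> constructor
  · rintro ⟨h, hb⟩
    rcases Nat.lt_succ_iff_lt_or_eq.mp h with h' | rfl
    · rw [h0 n h'] at hb
      exact Or.inr ⟨h', Fin.castSucc_injective k hb⟩
    · exact Or.inl rfl
  · rintro (rfl | ⟨h, hb⟩)
    · exact ⟨Nat.lt_succ_self _, by rw [h1, hv]⟩
    · exact ⟨h.trans (Nat.lt_succ_self k), by rw [h0 n h, hb]⟩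
  · rintro ⟨h, hb⟩
    rcases Nat.lt_succ_iff_lt_or_eq.mp h with h' | rfl
    · rw [h0 n h'] at hb
      exact ⟨h', Fin.castSucc_injective k hb⟩
    · exact absurd ((h1 h).symm.trans hb) hv
  · rintro ⟨h, hb⟩
    exact ⟨h.trans (Nat.lt_succ_self k), by rw [h0 n h, hb]⟩

theorem fib_extend_last {k : ℕ} (b : Fin k → Fin k) :
    fib (extendLeader b (Fin.last k)) (Fin.last k) = {k} := by
  ext n
  simp only [Finset.mem_singleton, mem_fib]
  constructor
  · rintro ⟨h, hb⟩
    rcases Nat.lt_succ_iff_lt_or_eq.mp h with h' | rfl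
    · exact absurd ((extendLeader_castSucc b _ ⟨n, h'⟩).symm.trans hb) (Fin.castSucc_ne_last _)
    · rfl
  · rintro rfl
    exact ⟨Nat.lt_succ_self _, extendLeader_last b _⟩

theorem image_extend_last {k : ℕ} (b : Fin k → Fin k) :
    Finset.univ.image (extendLeader b (Fin.last k)) =
      insert (Fin.last k) ((Finset.univ.image b).map Fin.castSuccEmb) := by
  ext v
  simp only [Finset.mem_image, Finset.mem_univ, true_and, Finset.mem_insert, Finset.mem_map,
    Fin.exists_fin_succ', extendLeader_castSucc, extendLeader_last, Fin.coe_castSuccEmb,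
    exists_exists_eq_and]
  tauto

theorem image_extend_castSucc {k : ℕ} (b : Fin k → Fin k) {j : Fin k}
    (hj : j ∈ Finset.univ.image b) :
    Finset.univ.image (extendLeader b j.castSucc) =
      (Finset.univ.image b).map Fin.castSuccEmb := by
  obtain ⟨i, -, rfl⟩ := Finset.mem_image.mp hj
  ext v
  simp only [Finset.mem_image, Finset.mem_univ, true_and, Finset.mem_map,
    Fin.exists_fin_succ', extendLeader_castSucc, extendLeader_last, Fin.coe_castSuccEmb,
    exists_exists_eq_and]
  constructor
  · rintro (h | h)
    exacts [h, ⟨i, h⟩]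
  · exact Or.inl

/-- Recursion for sums over partitions: the new point joins an existing block or forms a
singleton. -/
theorem sum_leaderFuns_succ (k : ℕ) (G : Finset ℕ → ℂ) :
    ∑ b ∈ leaderFuns (k + 1), ∏ j ∈ Finset.univ.image b, G (fib b j) =
      ∑ b ∈ leaderFuns k,
        ((∑ j ∈ Finset.univ.image b, (∏ i ∈ (Finset.univ.image b).erase j, G (fib b i)) *
          G (insert k (fib b j))) + (∏ j ∈ Finset.univ.image b, G (fib b j)) * G {k}) := by
  rw [sum_leaderFuns_succ']
  refine Finset.sum_congr rfl fun b _ => ?_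
  congr 1
  · refine Finset.sum_congr rfl fun j hj => ?_
    rw [image_extend_castSucc b hj, Finset.prod_map, ← Finset.prod_erase_mul _ _ hj]
    simp only [Fin.coe_castSuccEmb, fib_extend_castSucc, if_true]
    congr 1
    refine Finset.prod_congr rfl fun i hi => ?_
    rw [if_neg]
    intro h
    exact (Finset.ne_of_mem_erase hi) (Fin.castSucc_injective k h).symm
  · rw [image_extend_last, Finset.prod_insert (by simp [Fin.castSucc_ne_last]), fib_extend_last,
      Finset.prod_map, mul_comm]
    congr 1
    refine Finset.prod_congr rfl fun i hi => ?_
    rw [Fin.coe_castSuccEmb, fib_extend_castSucc, if_neg (Fin.castSucc_ne_last i).symm]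

/-! ### Moments from the logarithm of the Fourier transform -/

section Abstract

variable {E : Type*} [AddCommGroup E] [Module ℝ E] {Ω Ω' : Type*} [MeasurableSpace Ω]
  [MeasurableSpace Ω'] {P : Measure Ω} {μ : Measure Ω'} {Y : E →ₗ[ℝ] (Ω → ℝ)}
  {q : E →ₗ[ℝ] (Ω' → ℝ)} {D : ℕ → ℝ → ℂ} {c : ℂ}

/-- The mixed partial derivative, in the directions `B ℓ` for `ℓ ∈ S`, of the log-Fourier
transform `A ↦ c E[D 0 (q A)]`. -/
def logFourierDeriv (μ : Measure Ω') (q : E →ₗ[ℝ] (Ω' → ℝ)) (D : ℕ → ℝ → ℂ) (c : ℂ) (B : ℕ → E)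
    (S : Finset ℕ) (A : E) : ℂ :=
  c * ∫ u, D S.card (q A u) * ∏ ℓ ∈ S, (q (B ℓ) u : ℂ) ∂μ

/-- The mixed derivative of `exp (c E[D 0 (q A)])` in the directions `B 0, …, B (k - 1)`, expanded
over partitions by Faà di Bruno's formula. -/
def fourierDeriv (μ : Measure Ω') (q : E →ₗ[ℝ] (Ω' → ℝ)) (D : ℕ → ℝ → ℂ) (c : ℂ) (B : ℕ → E)
    (k : ℕ) (A : E) : ℂ :=
  (∑ b ∈ leaderFuns k, ∏ j ∈ Finset.univ.image b, logFourierDeriv μ q D c B (fib b j) A) *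
    Complex.exp (logFourierDeriv μ q D c B ∅ A)

theorem hasDerivAt_logFourierDeriv [IsProbabilityMeasure μ] (hqm : ∀ A, Measurable (q A))
    (hq : ∀ A, AllMom μ (fun u => (q A u : ℂ)))
    (hD : ∀ n ξ, HasDerivAt (D n) (D (n + 1) ξ) ξ)
    (hDb : ∀ n, ∃ C, 0 ≤ C ∧ ∀ ξ, ‖D n ξ‖ ≤ C * (1 + |ξ|) ^ 2)
    (B : ℕ → E) (S : Finset ℕ) (m : ℕ) (hm : m ∉ S) (A : E) (s : ℝ) :
    HasDerivAt (fun s : ℝ => logFourierDeriv μ q D c B S (A + s • B m))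
      (logFourierDeriv μ q D c B (insert m S) (A + s • B m)) s := by
  have hDc : ∀ n, Continuous (D n) := fun n =>
    continuous_iff_continuousAt.mpr fun ξ => (hD n ξ).continuousAt
  have hmeas : ∀ n A (S : Finset ℕ), Measurable (fun u => D n (q A u) * ∏ ℓ ∈ S, (q (B ℓ) u : ℂ)) := by
    intro n A S
    refine ((hDc n).measurable.comp (hqm A)).mul (Finset.measurable_fun_prod _ fun ℓ _ => ?_)
    exact Complex.measurable_ofReal.comp (hqm _)
  have hprod : ∀ S : Finset ℕ, AllMom μ (fun u => ∏ ℓ ∈ S, (q (B ℓ) u : ℂ)) := fun S =>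
    AllMom.prod S fun ℓ _ => hq (B ℓ)
  obtain ⟨C, hC0, hC⟩ := hDb (S.card + 1)
  obtain ⟨C', hC0', hC'⟩ := hDb S.card
  have hg : ∀ r : ℝ, AllMom μ (fun u => (((1 + |q A u| + r * |q (B m) u|) ^ 2 : ℝ) : ℂ)) := by
    intro r
    have h1 : ∀ A, AllMom μ (fun u => ((|q A u| : ℝ) : ℂ)) := fun A => by
      simpa using (hq A).ofReal_norm
    have := (((AllMom.const (μ := μ) (1 : ℂ)).add (h1 A)).add ((h1 (B m)).const_mul (r : ℂ))).pow 2
    simpa using this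
  unfold logFourierDeriv
  refine HasDerivAt.const_mul c ?_
  refine (hasDerivAt_integral_of_dominated_loc_of_deriv_le (s := Metric.ball s 1)
    (F := fun (s : ℝ) u => D S.card (q (A + s • B m) u) * ∏ ℓ ∈ S, (q (B ℓ) u : ℂ))
    (F' := fun (s : ℝ) u => D (insert m S).card (q (A + s • B m) u) *
      ∏ ℓ ∈ insert m S, (q (B ℓ) u : ℂ))
    (bound := fun u => ‖((C * (1 + |q A u| + (|s| + 1) * |q (B m) u|) ^ 2 : ℝ) : ℂ) *
      ∏ ℓ ∈ insert m S, (q (B ℓ) u : ℂ)‖) (Metric.ball_mem_nhds s one_pos)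
    (Eventually.of_forall fun x => (hmeas _ _ _).aestronglyMeasurable) ?_
    (hmeas _ _ _).aestronglyMeasurable ?_ ?_ ?_).2
  · refine (AllMom.mono ((hg |s|).const_mul (C' : ℂ)) ?_ ?_ |>.mul (hprod S)).integrable
    · exact ((hDc _).measurable.comp (hqm _)).aestronglyMeasurable
    · intro u
      refine (hC' _).trans ?_
      rw [norm_mul, Complex.norm_real, Complex.norm_real, Real.norm_of_nonneg hC0',
        Real.norm_of_nonneg (sq_nonneg _)]
      gcongr ?_ * ?_ ^ 2
      rw [add_assoc]
      gcongr
      simp only [map_add, map_smul, Pi.add_apply, Pi.smul_apply, smul_eq_mul]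
      exact (abs_add_le _ _).trans (by rw [abs_mul])
  · refine ae_of_all _ fun u x hx => ?_
    rw [norm_mul, norm_mul]
    gcongr
    rw [Finset.card_insert_of_notMem hm]
    refine (hC _).trans ?_
    rw [Complex.norm_real, Real.norm_of_nonneg (by positivity)]
    gcongr ?_ * ?_ ^ 2
    rw [add_assoc]
    gcongr
    simp only [map_add, map_smul, Pi.add_apply, Pi.smul_apply, smul_eq_mul]
    refine (abs_add_le _ _).trans ?_
    rw [abs_mul]
    gcongr
    have := Metric.mem_ball.mp hx
    rw [Real.dist_eq] at this
    linarith [abs_sub_abs_le_abs_sub x s]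
  · refine Integrable.norm (AllMom.integrable ?_)
    have := ((hg (|s| + 1)).const_mul (C : ℂ)).mul (hprod (insert m S))
    simpa using this
  · refine ae_of_all _ fun u x _ => ?_
    rw [Finset.card_insert_of_notMem hm]
    simp only [Finset.prod_insert hm, ← mul_assoc]
    refine HasDerivAt.mul_const ?_ _
    have h1 : HasDerivAt (fun x : ℝ => q (A + x • B m) u) (q (B m) u) x := by
      simp only [map_add, map_smul, Pi.add_apply, Pi.smul_apply, smul_eq_mul]
      simpa using ((hasDerivAt_id x).mul_const (q (B m) u)).const_add (q A u)
    have := (hD S.card (q (A + x • B m) u)).scomp x h1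
    rw [Complex.real_smul, mul_comm] at this
    exact this

theorem hasDerivAt_fourierDeriv [IsProbabilityMeasure μ] (hqm : ∀ A, Measurable (q A))
    (hq : ∀ A, AllMom μ (fun u => (q A u : ℂ)))
    (hD : ∀ n ξ, HasDerivAt (D n) (D (n + 1) ξ) ξ)
    (hDb : ∀ n, ∃ C, 0 ≤ C ∧ ∀ ξ, ‖D n ξ‖ ≤ C * (1 + |ξ|) ^ 2)
    (B : ℕ → E) (k : ℕ) (A : E) (s : ℝ) :
    HasDerivAt (fun s : ℝ => fourierDeriv μ q D c B k (A + s • B k))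
      (fourierDeriv μ q D c B (k + 1) (A + s • B k)) s := by
  have hH := fun S hS => hasDerivAt_logFourierDeriv (c := c) hqm hq hD hDb B S k hS A s
  have h0 := (hH ∅ (by simp)).cexp
  have hfib : ∀ (b : Fin k → Fin k) j, k ∉ fib b j := fun b j h => by
    obtain ⟨h, -⟩ := (mem_fib b j k).mp h
    exact lt_irrefl _ h
  have h1 : HasDerivAt (fun s : ℝ => ∑ b ∈ leaderFuns k, ∏ j ∈ Finset.univ.image b,
      logFourierDeriv μ q D c B (fib b j) (A + s • B k)) (∑ b ∈ leaderFuns k,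
        ∑ j ∈ Finset.univ.image b, (∏ i ∈ (Finset.univ.image b).erase j,
          logFourierDeriv μ q D c B (fib b i) (A + s • B k)) •
            logFourierDeriv μ q D c B (insert k (fib b j)) (A + s • B k)) s :=
    HasDerivAt.fun_sum fun b _ => HasDerivAt.fun_finsetProd fun j _ => hH _ (hfib b j)
  convert! h1.mul h0 using 1
  unfold fourierDeriv
  rw [sum_leaderFuns_succ k (fun S => logFourierDeriv μ q D c B S (A + s • B k)),
    Finset.sum_add_distrib, add_mul]
  simp only [smul_eq_mul, Finset.sum_mul, insert_empty_eq]
  congr 1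
  refine Finset.sum_congr rfl fun b _ => ?_
  ring

/-- Joint moments of a family of linear functionals from the logarithm of their joint Fourier
transform: each block of a partition contributes one joint cumulant. -/
theorem moment_of_fourier [IsProbabilityMeasure P] [IsProbabilityMeasure μ]
    (hYm : ∀ A, Measurable (Y A)) (hqm : ∀ A, Measurable (q A))
    (hq : ∀ A, AllMom μ (fun u => (q A u : ℂ)))
    (hD : ∀ n ξ, HasDerivAt (D n) (D (n + 1) ξ) ξ)
    (hDb : ∀ n, ∃ C, 0 ≤ C ∧ ∀ ξ, ‖D n ξ‖ ≤ C * (1 + |ξ|) ^ 2) (hD0 : D 0 0 = 0)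
    {κ : ℕ → ℂ} (hκ : ∀ n, 1 ≤ n → D n 0 = Complex.I ^ n * κ n)
    (hlaw : ∀ A, ∫ ω, Complex.exp (Complex.I * Y A ω) ∂P = Complex.exp (c * ∫ u, D 0 (q A u) ∂μ)) :
    (∀ A, AllMom P (fun ω => (Y A ω : ℂ))) ∧ ∀ (B : ℕ → E) (k : ℕ),
      ∫ ω, ∏ ℓ : Fin k, (Y (B ℓ) ω : ℂ) ∂P = ∑ b ∈ leaderFuns k, ∏ j ∈ Finset.univ.image b,
        (c * κ (fiberCard b j) * ∫ u, ∏ ℓ ∈ fib b j, (q (B ℓ) u : ℂ) ∂μ) := by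
  have hleader0 : leaderFuns 0 = {Fin.elim0} := by
    ext b; rw [mem_leaderFuns]; simp [Subsingleton.elim b Fin.elim0]
  have h0 : ∀ B A, ∫ ω, Complex.exp (Complex.I * Y A ω) ∂P = fourierDeriv μ q D c B 0 A := by
    intro B A
    rw [hlaw, fourierDeriv, hleader0]
    simp [logFourierDeriv]
  have hmom : ∀ A, AllMom P (fun ω => (Y A ω : ℂ)) := by
    intro A
    refine allMom_of_smooth_charFun (hYm A) (fun n s => fourierDeriv μ q D c (fun _ => A) n (s • A)) ?_ ?_
    · intro s
      rw [← h0]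
      simp only [map_smul, Pi.smul_apply, smul_eq_mul]
      refine integral_congr_ae (ae_of_all _ fun ω => ?_)
      push_cast
      ring_nf
    · intro n s
      simpa using hasDerivAt_fourierDeriv (c := c) hqm hq hD hDb (fun _ => A) n 0 s
  refine ⟨hmom, fun B k => ?_⟩
  have hall : ∀ k A, ∫ ω, (∏ ℓ ∈ Finset.range k, (Complex.I * Y (B ℓ) ω)) *
      Complex.exp (Complex.I * Y A ω) ∂P = fourierDeriv μ q D c B k A := by
    intro k
    induction k with
    | zero => intro A; simpa using h0 B A
    | succ k ih =>
      intro A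
      have hpm : ∀ k, AllMom P (fun ω => ∏ ℓ ∈ Finset.range k, (Complex.I * (Y (B ℓ) ω : ℂ))) :=
        fun k => AllMom.prod _ fun ℓ _ => (hmom (B ℓ)).const_mul _
      have hms : ∀ k A, AEStronglyMeasurable (fun ω => (∏ ℓ ∈ Finset.range k,
          (Complex.I * Y (B ℓ) ω)) * Complex.exp (Complex.I * Y A ω)) P := by
        intro k A
        have := hYm A
        have := fun ℓ => hYm (B ℓ)
        refine Measurable.aestronglyMeasurable (Measurable.mul ?_ (by fun_prop))
        exact Finset.measurable_fun_prod _ fun ℓ _ => by fun_prop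
      have hnorm : ∀ (x : ℝ), ‖Complex.exp (Complex.I * x)‖ = 1 := fun x => by
        simp [Complex.norm_exp]
      have hder : HasDerivAt (fun s : ℝ => ∫ ω, (∏ ℓ ∈ Finset.range k, (Complex.I * Y (B ℓ) ω)) *
          Complex.exp (Complex.I * Y (A + s • B k) ω) ∂P)
          (∫ ω, (∏ ℓ ∈ Finset.range (k + 1), (Complex.I * Y (B ℓ) ω)) *
          Complex.exp (Complex.I * Y (A + (0 : ℝ) • B k) ω) ∂P) 0 := by
        refine (hasDerivAt_integral_of_dominated_loc_of_deriv_le (s := Set.univ)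
          (F := fun (s : ℝ) ω => (∏ ℓ ∈ Finset.range k, (Complex.I * Y (B ℓ) ω)) *
            Complex.exp (Complex.I * Y (A + s • B k) ω))
          (F' := fun (s : ℝ) ω => (∏ ℓ ∈ Finset.range (k + 1), (Complex.I * Y (B ℓ) ω)) *
            Complex.exp (Complex.I * Y (A + s • B k) ω))
          (bound := fun ω => ‖∏ ℓ ∈ Finset.range (k + 1), (Complex.I * (Y (B ℓ) ω : ℂ))‖) univ_mem
          (Eventually.of_forall fun x => hms _ _) ?_ (hms _ _) ?_ (hpm _).integrable.norm ?_).2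
        · exact (hpm k).integrable.norm.mono' (hms _ _) (ae_of_all _ fun ω => by
            rw [norm_mul, hnorm, mul_one])
        · exact ae_of_all _ fun ω x _ => by rw [norm_mul, hnorm, mul_one]
        · refine ae_of_all _ fun ω x _ => ?_
          have e : ∀ x : ℝ, Complex.exp (Complex.I * Y (A + x • B k) ω) =
              Complex.exp (Complex.I * Y A ω) * Complex.exp (Complex.I * Y (B k) ω * x) := by
            intro x
            rw [← Complex.exp_add]
            congr 1
            simp only [map_add, map_smul, Pi.add_apply, Pi.smul_apply, smul_eq_mul]
            push_cast
            ring
          simp only [e]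
          convert! ((hasDerivAt_cexp_line (Y (B k) ω) x).const_mul
            (Complex.exp (Complex.I * Y A ω))).const_mul
              (∏ ℓ ∈ Finset.range k, (Complex.I * (Y (B ℓ) ω : ℂ))) using 1
          rw [Finset.prod_range_succ]
          ring
      simp_rw [ih] at hder
      have := hder.unique (hasDerivAt_fourierDeriv (c := c) hqm hq hD hDb B k A 0)
      simpa using this
  have hlog0 : ∀ S, logFourierDeriv μ q D c B S 0 = c * D S.card 0 * ∫ u, ∏ ℓ ∈ S, (q (B ℓ) u : ℂ) ∂μ := by
    intro S
    simp only [logFourierDeriv, map_zero, Pi.zero_apply]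
    rw [integral_const_mul, mul_assoc]
  have h := hall k 0
  rw [fourierDeriv, hlog0 ∅] at h
  simp only [map_zero, Pi.zero_apply, Complex.ofReal_zero, mul_zero, Complex.exp_zero, mul_one,
    Finset.card_empty, hD0, zero_mul, Finset.prod_mul_distrib, Finset.prod_const,
    Finset.card_range, integral_const_mul] at h
  have hI : Complex.I ^ k ≠ 0 := pow_ne_zero _ Complex.I_ne_zero
  have hr : ∀ ω, ∏ ℓ ∈ Finset.range k, (Y (B ℓ) ω : ℂ) = ∏ ℓ : Fin k, (Y (B ℓ) ω : ℂ) := fun ω =>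
    (Fin.prod_univ_eq_prod_range (fun ℓ => (Y (B ℓ) ω : ℂ)) k).symm
  simp_rw [hr] at h
  refine mul_left_cancel₀ hI (h.trans ?_)
  rw [Finset.mul_sum]
  refine Finset.sum_congr rfl fun b _ => ?_
  have hcard : ∑ j ∈ Finset.univ.image b, fiberCard b j = k := by
    have := Finset.card_eq_sum_card_image b Finset.univ
    simpa [fiberCard] using this.symm
  rw [show Complex.I ^ k = ∏ j ∈ Finset.univ.image b, Complex.I ^ fiberCard b j by
    rw [Finset.prod_pow_eq_pow_sum, hcard], ← Finset.prod_mul_distrib]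
  refine Finset.prod_congr rfl fun j hj => ?_
  have hpos : 1 ≤ fiberCard b j := by
    obtain ⟨i, -, rfl⟩ := Finset.mem_image.mp hj
    exact Finset.card_pos.mpr ⟨i, by simp⟩
  rw [hlog0, card_fib, hκ _ hpos]
  ring

end Abstract

/-! ### Moments of the matrix model -/

section Abstract

variable {E : Type*} [AddCommGroup E] [Module ℝ E] {Ω Ω' : Type*} [MeasurableSpace Ω]
  [MeasurableSpace Ω'] {P : Measure Ω} {μ : Measure Ω'} {Y : E →ₗ[ℝ] (Ω → ℝ)}
  {q : E →ₗ[ℝ] (Ω' → ℝ)} {D : ℕ → ℝ → ℂ} {c : ℂ}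

/-- A product over blocks of integrals is an integral over independent copies indexed by the
blocks. -/
theorem prod_blocks_eq_integral_pi [IsProbabilityMeasure μ] {k : ℕ} (b : Fin k → Fin k)
    (g : Fin k → Ω' → ℂ) :
    ∏ j ∈ Finset.univ.image b, ∫ u, ∏ ℓ ∈ Finset.univ.filter (fun ℓ => b ℓ = j), g ℓ u ∂μ =
      ∫ x : Fin k → Ω', ∏ ℓ, g ℓ (x (b ℓ)) ∂(Measure.pi fun _ => μ) := by
  have h1 : ∀ x : Fin k → Ω', ∏ ℓ, g ℓ (x (b ℓ)) =
      ∏ j, ∏ ℓ ∈ Finset.univ.filter (fun ℓ => b ℓ = j), g ℓ (x j) := by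
    intro x
    rw [← Finset.prod_fiberwise_of_maps_to (g := b) (t := Finset.univ) (fun _ _ => Finset.mem_univ _)]
    refine Finset.prod_congr rfl fun j _ => Finset.prod_congr rfl fun ℓ hℓ => ?_
    rw [(Finset.mem_filter.mp hℓ).2]
  simp_rw [h1]
  rw [integral_fintype_prod_eq_prod
    (fun j u => ∏ ℓ ∈ Finset.univ.filter (fun ℓ => b ℓ = j), g ℓ u)]
  refine Finset.prod_subset (Finset.subset_univ _) fun j _ hj => ?_
  rw [Finset.filter_false_of_mem]
  · simp
  · intro ℓ _ h
    exact hj (Finset.mem_image.mpr ⟨ℓ, Finset.mem_univ _, h⟩)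

/-- The moment formula with the product of the means over the blocks written as one integral over
independent copies, indexed by the leaders of the blocks. -/
theorem moment_of_fourier_pi [IsProbabilityMeasure P] [IsProbabilityMeasure μ]
    (hYm : ∀ A, Measurable (Y A)) (hqm : ∀ A, Measurable (q A))
    (hq : ∀ A, AllMom μ (fun u => (q A u : ℂ)))
    (hD : ∀ n ξ, HasDerivAt (D n) (D (n + 1) ξ) ξ)
    (hDb : ∀ n, ∃ C, 0 ≤ C ∧ ∀ ξ, ‖D n ξ‖ ≤ C * (1 + |ξ|) ^ 2) (hD0 : D 0 0 = 0)
    {κ : ℕ → ℂ} (hκ : ∀ n, 1 ≤ n → D n 0 = Complex.I ^ n * κ n)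
    (hlaw : ∀ A, ∫ ω, Complex.exp (Complex.I * Y A ω) ∂P = Complex.exp (c * ∫ u, D 0 (q A u) ∂μ))
    {k : ℕ} (B : Fin k → E) :
    ∫ ω, ∏ ℓ, (Y (B ℓ) ω : ℂ) ∂P = ∑ b ∈ leaderFuns k,
      (∏ j ∈ Finset.univ.image b, c * κ (fiberCard b j)) *
        ∫ x : Fin k → Ω', ∏ ℓ, (q (B ℓ) (x (b ℓ)) : ℂ) ∂(Measure.pi fun _ => μ) := by
  have h := (moment_of_fourier hYm hqm hq hD hDb hD0 hκ hlaw).2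
    (fun n => if h : n < k then B ⟨n, h⟩ else 0) k
  simp only [Fin.is_lt, dite_true, Fin.eta] at h
  rw [h]
  refine Finset.sum_congr rfl fun b _ => ?_
  rw [← prod_blocks_eq_integral_pi b (fun ℓ u => (q (B ℓ) u : ℂ)), ← Finset.prod_mul_distrib]
  refine Finset.prod_congr rfl fun j _ => ?_
  congr 1
  refine integral_congr_ae (ae_of_all _ fun u => ?_)
  simp only [fib, Finset.prod_map, Fin.valEmbedding_apply, Fin.is_lt, dite_true, Fin.eta]

theorem prod_add_mul_eq {k : ℕ} (c : ℂ) (f g : Fin k → ℂ) :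
    ∏ ℓ, (f ℓ + c * g ℓ) = ∑ T ∈ Finset.univ.powerset,
      c ^ (Finset.univ \ T).card * ∏ ℓ, (if ℓ ∈ T then f ℓ else g ℓ) := by
  rw [Finset.prod_add]
  refine Finset.sum_congr rfl fun T _ => ?_
  rw [Finset.prod_mul_distrib, Finset.prod_const, mul_left_comm]
  congr 1
  rw [← Finset.prod_sdiff (Finset.subset_univ T), mul_comm]
  congr 1
  · exact Finset.prod_congr rfl fun ℓ hℓ => by rw [if_neg (Finset.mem_sdiff.mp hℓ).2]
  · exact Finset.prod_congr rfl fun ℓ hℓ => by rw [if_pos hℓ]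

/-- Both sides of the moment formula are multilinear, so it extends to complex combinations. -/
theorem complex_moment_of_fourier [IsProbabilityMeasure P] [IsProbabilityMeasure μ]
    (hYm : ∀ A, Measurable (Y A)) (hqm : ∀ A, Measurable (q A))
    (hq : ∀ A, AllMom μ (fun u => (q A u : ℂ)))
    (hD : ∀ n ξ, HasDerivAt (D n) (D (n + 1) ξ) ξ)
    (hDb : ∀ n, ∃ C, 0 ≤ C ∧ ∀ ξ, ‖D n ξ‖ ≤ C * (1 + |ξ|) ^ 2) (hD0 : D 0 0 = 0)
    {κ : ℕ → ℂ} (hκ : ∀ n, 1 ≤ n → D n 0 = Complex.I ^ n * κ n)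
    (hlaw : ∀ A, ∫ ω, Complex.exp (Complex.I * Y A ω) ∂P = Complex.exp (c * ∫ u, D 0 (q A u) ∂μ))
    {k : ℕ} (A B : Fin k → E) (z : ℂ) :
    ∫ ω, ∏ ℓ, ((Y (A ℓ) ω : ℂ) + z * Y (B ℓ) ω) ∂P = ∑ b ∈ leaderFuns k,
      (∏ j ∈ Finset.univ.image b, c * κ (fiberCard b j)) *
        ∫ x : Fin k → Ω', ∏ ℓ, ((q (A ℓ) (x (b ℓ)) : ℂ) + z * q (B ℓ) (x (b ℓ)))
          ∂(Measure.pi fun _ => μ) := by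
  have hmom := (moment_of_fourier hYm hqm hq hD hDb hD0 hκ hlaw).1
  have hmom' : ∀ A (j : Fin k), AllMom (Measure.pi fun _ : Fin k => μ)
      (fun x => (q A (x j) : ℂ)) := fun A j =>
    (hq A).comp_mp (measurePreserving_eval (fun _ : Fin k => μ) j)
  simp_rw [prod_add_mul_eq]
  rw [integral_finsetSum]
  swap
  · intro T _
    refine AllMom.integrable ((AllMom.prod _ fun ℓ _ => ?_).const_mul _)
    split_ifs
    exacts [hmom _, hmom _]
  have hR : ∀ b : Fin k → Fin k, ∫ x : Fin k → Ω', ∑ T ∈ (Finset.univ : Finset (Fin k)).powerset,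
      z ^ (Finset.univ \ T).card * ∏ ℓ, (if ℓ ∈ T then (q (A ℓ) (x (b ℓ)) : ℂ)
        else (q (B ℓ) (x (b ℓ)) : ℂ)) ∂(Measure.pi fun _ => μ) =
      ∑ T ∈ (Finset.univ : Finset (Fin k)).powerset, z ^ (Finset.univ \ T).card *
        ∫ x : Fin k → Ω', ∏ ℓ, (q (if ℓ ∈ T then A ℓ else B ℓ) (x (b ℓ)) : ℂ)
          ∂(Measure.pi fun _ => μ) := by
    intro b
    rw [integral_finsetSum]
    · refine Finset.sum_congr rfl fun T _ => ?_
      rw [integral_const_mul]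
      congr 1
      refine integral_congr_ae (ae_of_all _ fun x => Finset.prod_congr rfl fun ℓ _ => ?_)
      split_ifs <;> rfl
    · intro T _
      refine AllMom.integrable ((AllMom.prod _ fun ℓ _ => ?_).const_mul _)
      split_ifs
      exacts [hmom' _ _, hmom' _ _]
  simp_rw [hR, Finset.mul_sum]
  rw [Finset.sum_comm]
  refine Finset.sum_congr rfl fun T _ => ?_
  rw [integral_const_mul]
  have := moment_of_fourier_pi hYm hqm hq hD hDb hD0 hκ hlaw (fun ℓ => if ℓ ∈ T then A ℓ else B ℓ)
  have e : ∀ ω, ∏ ℓ, (if ℓ ∈ T then (Y (A ℓ) ω : ℂ) else (Y (B ℓ) ω : ℂ)) =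
      ∏ ℓ, (Y (if ℓ ∈ T then A ℓ else B ℓ) ω : ℂ) := fun ω =>
    Finset.prod_congr rfl fun ℓ _ => by split_ifs <;> rfl
  simp_rw [e, this, Finset.mul_sum]
  exact Finset.sum_congr rfl fun b _ => by ring

end Abstract

/-- The trace of a product of `k` matrices as a combination of products of `k` entries. -/
theorem exists_trace_expansion (N k : ℕ) : ∃ (τ : Type) (_ : Fintype τ) (a : τ → ℂ)
    (e : τ → Fin k → Fin N × Fin N), ∀ W : Fin k → Matrix (Fin N) (Fin N) ℂ,
      (List.ofFn W).prod.trace = ∑ i, a i * ∏ ℓ, W ℓ (e i ℓ).1 (e i ℓ).2 := by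
  have key : ∀ (k : ℕ) (p r : Fin N), ∃ (τ : Type) (_ : Fintype τ) (a : τ → ℂ)
      (e : τ → Fin k → Fin N × Fin N), ∀ W : Fin k → Matrix (Fin N) (Fin N) ℂ,
      (List.ofFn W).prod p r = ∑ i, a i * ∏ ℓ, W ℓ (e i ℓ).1 (e i ℓ).2 := by
    intro k
    induction k with
    | zero =>
      intro p r
      refine ⟨Unit, inferInstance, fun _ => (1 : Matrix (Fin N) (Fin N) ℂ) p r,
        fun _ ℓ => ℓ.elim0, fun W => ?_⟩
      simp
    | succ k ih =>
      intro p r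
      choose τ hτ a e h using fun s => ih s r
      refine ⟨Σ s, τ s, inferInstance, fun i => a i.1 i.2,
        fun i => Fin.cons (p, i.1) (e i.1 i.2), fun W => ?_⟩
      rw [List.ofFn_succ, List.prod_cons, Matrix.mul_apply, Fintype.sum_sigma]
      refine Finset.sum_congr rfl fun s _ => ?_
      rw [h, Finset.mul_sum]
      refine Finset.sum_congr rfl fun i _ => ?_
      rw [Fin.prod_univ_succ]
      simp only [Fin.cons_zero, Fin.cons_succ]
      ring
  choose τ hτ a e h using fun s => key k s s
  refine ⟨Σ s, τ s, inferInstance, fun i => a i.1 i.2, fun i => e i.1 i.2, fun W => ?_⟩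
  rw [Matrix.trace, Fintype.sum_sigma]
  exact Finset.sum_congr rfl fun s _ => h s W

/-- The rank-one matrix `u u* / N`. -/
def rankOne {N : ℕ} (u : Fin N → ℂ) : Matrix (Fin N) (Fin N) ℂ :=
  (N : ℂ)⁻¹ • vecMulVec u (star u)

theorem rankOne_apply {N : ℕ} (u : Fin N → ℂ) (p r : Fin N) :
    rankOne u p r = (N : ℂ)⁻¹ * (u p * star (u r)) := by
  simp [rankOne, vecMulVec_apply]

/-- Moments of the matrix model as a sum over partitions of traces of products of rank-one
matrices, with one independent random vector per block. -/
theorem trace_moment_formula {N k : ℕ} {Ω Ω' : Type*} [MeasurableSpace Ω]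
    [MeasurableSpace Ω'] {P : Measure Ω} [IsProbabilityMeasure P] {μ : Measure Ω'}
    [IsProbabilityMeasure μ] (u : Ω' → Fin N → ℂ) (hum : Measurable u)
    (hu : ∀ j, AllMom μ (fun x => u x j)) (γ : ℝ) (σ : Measure ℝ) [IsFiniteMeasure σ]
    (hσc : ∃ R : ℝ, σ (Set.Icc (-R) R)ᶜ = 0) (M : Ω → Matrix (Fin N) (Fin N) ℂ)
    (hMmeas : Measurable M) (hHerm : ∀ ω, (M ω).IsHermitian)
    (hlaw : ∀ A : Matrix (Fin N) (Fin N) ℂ, A.IsHermitian →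
      ∫ ω, Complex.exp (Complex.I * (A * M ω).trace) ∂P =
        Complex.exp ((N : ℂ) *
          ∫ x, levyExponent γ σ ((star (u x) ⬝ᵥ A.mulVec (u x)).re / N) ∂μ)) :
    ∫ ω, (M ω ^ k).trace ∂P = ∑ b ∈ leaderFuns k,
      (∏ j ∈ Finset.univ.image b, (N : ℂ) * cum γ σ (fiberCard b j)) *
        ∫ x : Fin k → Ω', (List.ofFn fun ℓ => rankOne (u (x (b ℓ)))).prod.trace
          ∂(Measure.pi fun _ => μ) := by
  classical
  obtain ⟨D, hDlev, hD, hDb, hD0, hκ⟩ := levyExponent_smooth γ σ hσc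
  let Y : Matrix (Fin N) (Fin N) ℂ →ₗ[ℝ] (Ω → ℝ) :=
    { toFun := fun A ω => ((A * M ω).trace).re
      map_add' := fun A B => by funext ω; simp [add_mul]
      map_smul' := fun r A => by funext ω; simp }
  let q : Matrix (Fin N) (Fin N) ℂ →ₗ[ℝ] (Ω' → ℝ) :=
    { toFun := fun A x => (star (u x) ⬝ᵥ A.mulVec (u x)).re / N
      map_add' := fun A B => by funext x; simp [add_mulVec, add_div]
      map_smul' := fun r A => by funext x; simp [smul_mulVec, mul_div_assoc] }
  have hMe : ∀ p r, Measurable (fun ω => M ω p r) := fun p r =>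
    (measurable_pi_apply r).comp ((measurable_pi_apply p).comp hMmeas)
  have hue : ∀ p, Measurable (fun x => u x p) := fun p => (measurable_pi_apply p).comp hum
  have hYm : ∀ A, Measurable (Y A) := by
    intro A
    refine Complex.measurable_re.comp ?_
    simp only [Matrix.trace, Matrix.diag, Matrix.mul_apply]
    exact Finset.measurable_fun_sum _ fun i _ => Finset.measurable_fun_sum _ fun j _ =>
      (hMe j i).const_mul _
  have hqm : ∀ A, Measurable (q A) := by
    intro A
    refine (Complex.measurable_re.comp ?_).div_const _
    simp only [dotProduct, Matrix.mulVec, Pi.star_apply]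
    exact Finset.measurable_fun_sum _ fun i _ => (continuous_star.measurable.comp (hue i)).mul
      (Finset.measurable_fun_sum _ fun j _ => (hue j).const_mul _)
  have hq : ∀ A, AllMom μ (fun x => (q A x : ℂ)) := by
    intro A
    have h1 : AllMom μ (fun x => star (u x) ⬝ᵥ A.mulVec (u x)) := by
      simp only [dotProduct, Matrix.mulVec, Pi.star_apply]
      exact AllMom.sum _ fun i _ => (hu i).star.mul
        (AllMom.sum _ fun j _ => (hu j).const_mul _)
    have h2 := h1.ofReal_re.const_mul ((N : ℂ)⁻¹)
    refine h2.mono ?_ fun x => ?_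
    · exact (Complex.measurable_ofReal.comp (hqm A)).aestronglyMeasurable
    · simp [q, div_eq_inv_mul]
  -- Only the Hermitian part of `A` contributes to `Re Tr (A M)` and to `Re (u* A u)`.
  have hlaw' : ∀ A, ∫ ω, Complex.exp (Complex.I * Y A ω) ∂P =
      Complex.exp ((N : ℂ) * ∫ x, D 0 (q A x) ∂μ) := by
    intro A
    have hA : ((2 : ℂ)⁻¹ • (A + Aᴴ)).IsHermitian := by
      rw [Matrix.IsHermitian, conjTranspose_smul, conjTranspose_add, conjTranspose_conjTranspose,
        add_comm]
      simp
    have h := hlaw _ hA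
    have hre : ∀ z : ℂ, (2 : ℂ)⁻¹ * (z + star z) = (z.re : ℂ) := fun z => by
      have := Complex.add_conj z
      rw [starRingEnd_apply] at this
      rw [this]; push_cast; ring
    have e1 : ∀ ω, (((2 : ℂ)⁻¹ • (A + Aᴴ)) * M ω).trace = Y A ω := by
      intro ω
      change _ = (((A * M ω).trace).re : ℂ)
      rw [← hre, smul_mul, trace_smul, add_mul, trace_add, smul_eq_mul]
      congr 2
      rw [← trace_conjTranspose, conjTranspose_mul, (hHerm ω).eq, trace_mul_comm]
    have e2 : ∀ x, (star (u x) ⬝ᵥ ((2 : ℂ)⁻¹ • (A + Aᴴ)).mulVec (u x)).re / N = q A x := by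
      intro x
      change _ = (star (u x) ⬝ᵥ A.mulVec (u x)).re / N
      rw [smul_mulVec, dotProduct_smul, add_mulVec, dotProduct_add, smul_eq_mul]
      have : star (u x) ⬝ᵥ Aᴴ.mulVec (u x) = star (star (u x) ⬝ᵥ A.mulVec (u x)) := by
        rw [← star_dotProduct_star, star_mulVec, star_star, dotProduct_mulVec]
      rw [this, hre, Complex.ofReal_re]
    simp_rw [e1, e2] at h
    rw [h, hDlev]
  obtain ⟨τ, hτ, a, e, hexp⟩ := exists_trace_expansion N k
  -- Entries are recovered from the real functionals by `z = Re z - i Re (i z)`.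
  have hz : ∀ z : ℂ, (z.re : ℂ) + -Complex.I * ((Complex.I * z).re : ℂ) = z := fun z => by
    apply Complex.ext <;> simp
  have hMentry : ∀ ω (p r : Fin N), M ω p r = (Y (single r p 1) ω : ℂ) +
      -Complex.I * Y (Complex.I • single r p 1) ω := by
    intro ω p r
    change _ = (((single r p 1 * M ω).trace).re : ℂ) +
      -Complex.I * (((((Complex.I • single r p 1 : Matrix (Fin N) (Fin N) ℂ)) * M ω).trace).re : ℂ)
    rw [smul_mul, trace_smul, smul_eq_mul, hz, trace_single_mul]
    simp
  have hWentry : ∀ x (p r : Fin N), rankOne (u x) p r = (q (single r p 1) x : ℂ) +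
      -Complex.I * q (Complex.I • single r p 1) x := by
    intro x p r
    change _ = (((star (u x) ⬝ᵥ (single r p 1).mulVec (u x)).re / N : ℝ) : ℂ) + -Complex.I *
      (((star (u x) ⬝ᵥ ((Complex.I • single r p 1 :
        Matrix (Fin N) (Fin N) ℂ)).mulVec (u x)).re / N : ℝ) : ℂ)
    rw [smul_mulVec, dotProduct_smul, smul_eq_mul]
    have h1 : star (u x) ⬝ᵥ (single r p (1 : ℂ)).mulVec (u x) = u x p * star (u x r) := by
      rw [single_mulVec]
      change star (u x) ⬝ᵥ Pi.single r _ = _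
      rw [dotProduct_single]
      simp [mul_comm]
    rw [h1, rankOne_apply, Complex.ofReal_div, Complex.ofReal_div, ← mul_div_assoc, ← add_div, hz,
      div_eq_inv_mul]
    simp
  have hmom := (moment_of_fourier hYm hqm hq hD hDb hD0 hκ hlaw').1
  have hpow : ∀ ω, (M ω ^ k).trace = ∑ i, a i * ∏ ℓ, ((Y (single (e i ℓ).2 (e i ℓ).1 1) ω : ℂ) +
      -Complex.I * Y (Complex.I • single (e i ℓ).2 (e i ℓ).1 1) ω) := by
    intro ω
    rw [← List.prod_replicate, ← List.ofFn_const, hexp]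
    simp only [hMentry]
  have hW : ∀ (b : Fin k → Fin k) (x : Fin k → Ω'),
      (List.ofFn fun ℓ => rankOne (u (x (b ℓ)))).prod.trace =
      ∑ i, a i * ∏ ℓ, ((q (single (e i ℓ).2 (e i ℓ).1 1) (x (b ℓ)) : ℂ) +
      -Complex.I * q (Complex.I • single (e i ℓ).2 (e i ℓ).1 1) (x (b ℓ))) := by
    intro b x
    rw [hexp]
    simp only [hWentry]
  simp_rw [hpow, hW]
  rw [integral_finsetSum]
  swap
  · exact fun i _ => AllMom.integrable ((AllMom.prod _ fun ℓ _ =>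
      (hmom _).add ((hmom _).const_mul _)).const_mul _)
  simp_rw [integral_const_mul]
  have hmom' : ∀ A (j : Fin k), AllMom (Measure.pi fun _ : Fin k => μ)
      (fun x => (q A (x j) : ℂ)) := fun A j =>
    (hq A).comp_mp (measurePreserving_eval (fun _ : Fin k => μ) j)
  have hsum : ∀ b : Fin k → Fin k, ∫ x : Fin k → Ω',
      ∑ i, a i * ∏ ℓ, ((q (single (e i ℓ).2 (e i ℓ).1 1) (x (b ℓ)) : ℂ) +
      -Complex.I * q (Complex.I • single (e i ℓ).2 (e i ℓ).1 1) (x (b ℓ)))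
        ∂(Measure.pi fun _ => μ) = ∑ i, a i * ∫ x : Fin k → Ω',
        ∏ ℓ, ((q (single (e i ℓ).2 (e i ℓ).1 1) (x (b ℓ)) : ℂ) +
      -Complex.I * q (Complex.I • single (e i ℓ).2 (e i ℓ).1 1) (x (b ℓ)))
        ∂(Measure.pi fun _ => μ) := by
    intro b
    rw [integral_finsetSum]
    · simp_rw [integral_const_mul]
    · exact fun i _ => AllMom.integrable ((AllMom.prod _ fun ℓ _ =>
        (hmom' _ _).add ((hmom' _ _).const_mul _)).const_mul _)
  simp_rw [hsum, Finset.mul_sum]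
  rw [Finset.sum_comm]
  refine Finset.sum_congr rfl fun i _ => ?_
  rw [complex_moment_of_fourier hYm hqm hq hD hDb hD0 hκ hlaw'
    (fun ℓ => single (e i ℓ).2 (e i ℓ).1 1)
    (fun ℓ => Complex.I • single (e i ℓ).2 (e i ℓ).1 1) (-Complex.I), Finset.mul_sum]
  exact Finset.sum_congr rfl fun b _ => by ring

/-! ### The vectors of the Gaussian model -/

theorem measurable_stdCplx : Measurable
    (fun p : ℝ × ℝ => (p.1 : ℂ) + (p.2 : ℂ) * Complex.I) := by fun_prop

instance isProbabilityMeasure_stdCplxGaussian : IsProbabilityMeasure stdCplxGaussian :=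
  Measure.isProbabilityMeasure_map measurable_stdCplx.aemeasurable

theorem measurePreserving_stdCplx : MeasurePreserving
    (fun p : ℝ × ℝ => (p.1 : ℂ) + (p.2 : ℂ) * Complex.I)
    ((gaussianReal 0 (1 / 2)).prod (gaussianReal 0 (1 / 2))) stdCplxGaussian :=
  ⟨measurable_stdCplx, rfl⟩

theorem measurePreserving_neg_gaussianReal (v : NNReal) :
    MeasurePreserving (fun x : ℝ => -x) (gaussianReal 0 v) (gaussianReal 0 v) :=
  ⟨measurable_neg, by simpa using gaussianReal_map_neg (μ := 0) (v := v)⟩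

theorem measurePreserving_neg_stdCplx :
    MeasurePreserving (fun z : ℂ => -z) stdCplxGaussian stdCplxGaussian := by
  refine ⟨measurable_neg, ?_⟩
  have h := (measurePreserving_neg_gaussianReal (1 / 2)).prod
    (measurePreserving_neg_gaussianReal (1 / 2))
  have h2 := measurePreserving_stdCplx.comp h
  rw [stdCplxGaussian, Measure.map_map measurable_neg measurable_stdCplx]
  have e : (fun z : ℂ => -z) ∘ (fun p : ℝ × ℝ => (p.1 : ℂ) + (p.2 : ℂ) * Complex.I) =
      (fun p : ℝ × ℝ => (p.1 : ℂ) + (p.2 : ℂ) * Complex.I) ∘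
        (Prod.map (fun x : ℝ => -x) (fun x : ℝ => -x)) := by
    funext p
    simp only [Function.comp, Prod.map]
    push_cast
    ring
  rw [e]
  exact h2.map_eq

theorem allMom_gaussianReal : AllMom (gaussianReal 0 (1 / 2)) (fun x : ℝ => (x : ℂ)) := fun p => by
  have h := memLp_id_gaussianReal' (μ := 0) (v := 1 / 2) (p : ℝ≥0∞) (ENNReal.natCast_ne_top p)
  exact h.ofReal

theorem allMom_stdCplx : AllMom stdCplxGaussian (fun z : ℂ => z) := by
  have h : AllMom ((gaussianReal 0 (1 / 2)).prod (gaussianReal 0 (1 / 2)))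
      (fun p : ℝ × ℝ => (p.1 : ℂ) + (p.2 : ℂ) * Complex.I) := by
    have h1 := allMom_gaussianReal.comp_mp (measurePreserving_fst
      (μ := gaussianReal 0 (1 / 2)) (ν := gaussianReal 0 (1 / 2)))
    have h2 := (allMom_gaussianReal.comp_mp (measurePreserving_snd
      (μ := gaussianReal 0 (1 / 2)) (ν := gaussianReal 0 (1 / 2)))).const_mul Complex.I
    simpa [mul_comm] using h1.add h2
  intro p
  rw [stdCplxGaussian, memLp_map_measure_iff (by fun_prop) measurable_stdCplx.aemeasurable]
  exact h p

theorem integral_stdCplx : ∫ z, z ∂stdCplxGaussian = 0 := by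
  have h := measurePreserving_neg_stdCplx.integral_comp
    (MeasurableEquiv.neg ℂ).measurableEmbedding (fun z : ℂ => z)
  rw [integral_neg] at h
  have : (2 : ℂ) * ∫ z, z ∂stdCplxGaussian = 0 := by linear_combination -h
  simpa using this

theorem integral_normSq_stdCplx : ∫ z, star z * z ∂stdCplxGaussian = 1 := by
  have hsq : ∫ x : ℝ, x ^ 2 ∂(gaussianReal 0 (1 / 2)) = 1 / 2 := by
    have h := variance_id_gaussianReal (μ := 0) (v := 1 / 2)
    rw [variance_eq_integral (by fun_prop)] at h
    simpa using h
  have hi : Integrable (fun x : ℝ => x ^ 2) (gaussianReal 0 (1 / 2)) :=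
    (memLp_id_gaussianReal' (μ := 0) (v := 1 / 2) 2 (by simp)).integrable_sq
  rw [stdCplxGaussian, integral_map measurable_stdCplx.aemeasurable (by fun_prop)]
  have e : ∀ p : ℝ × ℝ, star ((p.1 : ℂ) + (p.2 : ℂ) * Complex.I) *
      ((p.1 : ℂ) + (p.2 : ℂ) * Complex.I) = ((p.1 ^ 2 + p.2 ^ 2 : ℝ) : ℂ) := fun p => by
    simp only [Complex.star_def, map_add, map_mul, Complex.conj_ofReal, Complex.conj_I]
    push_cast
    linear_combination (-(p.2 : ℂ) ^ 2) * Complex.I_sq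
  simp_rw [e]
  rw [integral_complex_ofReal, integral_add (hi.comp_fst _) (hi.comp_snd _)]
  rw [integral_fun_fst (fun x : ℝ => x ^ 2), integral_fun_snd (fun x : ℝ => x ^ 2), hsq]
  simp
  norm_num

theorem isProbabilityMeasure_uniformFin {N : ℕ} (hN : 1 ≤ N) :
    IsProbabilityMeasure (uniformFin N) := by
  constructor
  simp only [uniformFin, Measure.smul_apply, Measure.coe_finsetSum, Finset.sum_apply,
    measure_univ, Finset.sum_const, Finset.card_univ, Fintype.card_fin, nsmul_eq_mul, mul_one,
    smul_eq_mul]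
  exact ENNReal.inv_mul_cancel (by simpa using by omega) (ENNReal.natCast_ne_top N)

theorem uniformFin_singleton {N : ℕ} (i : Fin N) : uniformFin N {i} = (N : ℝ≥0∞)⁻¹ := by
  simp only [uniformFin, Measure.smul_apply, Measure.coe_finsetSum, Finset.sum_apply,
    Measure.dirac_apply, Set.indicator_apply, Set.mem_singleton_iff, Pi.one_apply]
  simp

theorem measurePreserving_perm_uniformFin {N : ℕ} (τ : Equiv.Perm (Fin N)) :
    MeasurePreserving τ (uniformFin N) (uniformFin N) := by
  refine ⟨measurable_of_finite _, ?_⟩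
  refine Measure.ext_of_singleton fun i => ?_
  rw [Measure.map_apply (measurable_of_finite _) (measurableSet_singleton i),
    uniformFin_singleton, show τ ⁻¹' {i} = {τ.symm i} by
      ext j; simp [Equiv.eq_symm_apply], uniformFin_singleton]

/-- The sample space of one vector of the model: the index `X` and the Gaussian vector `G`. -/
abbrev Sample (N : ℕ) : Type := Fin N × (Fin N → ℂ)

/-- The law of `(X, G)`. -/
def sampleLaw (N : ℕ) : Measure (Sample N) :=
  (uniformFin N).prod (Measure.pi fun _ : Fin N => stdCplxGaussian)

/-- The vector `U` of the model as a function of `(X, G)`. -/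
def modelVec (t : ℝ) (N : ℕ) (p : Sample N) : Fin N → ℂ := fun j =>
  ((Real.exp (-t / 2) * Real.sqrt N : ℝ) : ℂ) * (if j = p.1 then 1 else 0) +
    ((Real.sqrt (1 - Real.exp (-t)) : ℝ) : ℂ) * p.2 j

theorem gaussModelLaw_eq (t : ℝ) (N : ℕ) :
    gaussModelLaw t N = Measure.map (modelVec t N) (sampleLaw N) := rfl

instance sFinite_uniformFin (N : ℕ) : SFinite (uniformFin N) := by
  unfold uniformFin; infer_instance

theorem isProbabilityMeasure_sampleLaw {N : ℕ} (hN : 1 ≤ N) :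
    IsProbabilityMeasure (sampleLaw N) := by
  have := isProbabilityMeasure_uniformFin hN
  unfold sampleLaw; infer_instance

theorem measurable_modelVec (t : ℝ) (N : ℕ) : Measurable (modelVec t N) := by
  refine measurable_pi_lambda _ fun j => ?_
  refine Measurable.add (Measurable.const_mul ?_ _) (by fun_prop)
  exact (measurable_of_finite fun i : Fin N => if j = i then (1 : ℂ) else 0).comp measurable_fst

theorem allMom_modelVec (t : ℝ) {N : ℕ} (hN : 1 ≤ N) (j : Fin N) :
    AllMom (sampleLaw N) (fun p => modelVec t N p j) := by
  have := isProbabilityMeasure_sampleLaw hN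
  have := isProbabilityMeasure_uniformFin hN
  refine AllMom.add (AllMom.const_mul ?_ _) (AllMom.const_mul ?_ _)
  · refine (AllMom.const (1 : ℂ)).mono ?_ ?_
    · exact ((measurable_of_finite fun i : Fin N => if j = i then (1 : ℂ) else 0).comp
        measurable_fst).aestronglyMeasurable
    · intro p; split_ifs <;> simp
  · have h1 : MeasurePreserving (Prod.snd : Sample N → (Fin N → ℂ)) (sampleLaw N)
        (Measure.pi fun _ : Fin N => stdCplxGaussian) := measurePreserving_snd
    exact allMom_stdCplx.comp_mp ((measurePreserving_eval
      (fun _ : Fin N => stdCplxGaussian) j).comp h1)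

/-! ### Mean traces of words -/

/-- Functions of disjoint sets of coordinates are independent under a product measure. -/
theorem integral_mul_of_disjoint_coords {ι α : Type*} [Fintype ι] [MeasurableSpace α]
    [Nonempty α] (ν : Measure α) [IsProbabilityMeasure ν] (p : ι → Prop) [DecidablePred p]
    (F G : (ι → α) → ℂ) (hF : ∀ x y, (∀ i, p i → x i = y i) → F x = F y)
    (hG : ∀ x y, (∀ i, ¬ p i → x i = y i) → G x = G y) :
    ∫ x, F x * G x ∂(Measure.pi fun _ : ι => ν) =
      (∫ x, F x ∂(Measure.pi fun _ : ι => ν)) * ∫ x, G x ∂(Measure.pi fun _ : ι => ν) := by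
  obtain ⟨a⟩ := ‹Nonempty α›
  set e := MeasurableEquiv.piEquivPiSubtypeProd (fun _ : ι => α) p
  have he : MeasurePreserving e _ _ := measurePreserving_piEquivPiSubtypeProd (fun _ : ι => ν) p
  have hF' : ∀ x, F x = F (e.symm ((e x).1, fun _ => a)) := fun x => by
    apply hF
    intro i hi
    simp [e, MeasurableEquiv.piEquivPiSubtypeProd, Equiv.piEquivPiSubtypeProd, hi]
  have hG' : ∀ x, G x = G (e.symm (fun _ => a, (e x).2)) := fun x => by
    apply hG
    intro i hi
    simp [e, MeasurableEquiv.piEquivPiSubtypeProd, Equiv.piEquivPiSubtypeProd, hi]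
  have key : ∀ H : ({i // p i} → α) × ({i // ¬ p i} → α) → ℂ,
      ∫ x, H (e x) ∂(Measure.pi fun _ : ι => ν) = ∫ z, H z ∂((Measure.pi fun _ : {i // p i} => ν).prod
        (Measure.pi fun _ : {i // ¬ p i} => ν)) :=
    fun H => he.integral_comp e.measurableEmbedding H
  have h1 : ∫ x, F x ∂(Measure.pi fun _ : ι => ν) =
      ∫ u, F (e.symm (u, fun _ => a)) ∂(Measure.pi fun _ : {i // p i} => ν) := by
    rw [integral_congr_ae (ae_of_all _ hF'), key (fun z => F (e.symm (z.1, fun _ => a)))]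
    rw [integral_fun_fst (fun u => F (e.symm (u, fun _ => a)))]
    simp
  have h2 : ∫ x, G x ∂(Measure.pi fun _ : ι => ν) =
      ∫ v, G (e.symm (fun _ => a, v)) ∂(Measure.pi fun _ : {i // ¬ p i} => ν) := by
    rw [integral_congr_ae (ae_of_all _ hG'), key (fun z => G (e.symm (fun _ => a, z.2)))]
    rw [integral_fun_snd (fun u => G (e.symm (fun _ => a, u)))]
    simp
  rw [h1, h2, ← integral_prod_mul, ← key (fun z => F (e.symm (z.1, fun _ => a)) *
    G (e.symm (fun _ => a, z.2)))]
  exact integral_congr_ae (ae_of_all _ fun x => by simp only; rw [hF' x, hG' x])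

/-- The product of the rank-one matrices attached to the letters of a word. -/
def wordMat (t : ℝ) (N : ℕ) {k : ℕ} (x : Fin k → Sample N) (L : List (Fin k)) :
    Matrix (Fin N) (Fin N) ℂ :=
  (L.map fun a => rankOne (modelVec t N (x a))).prod

/-- The joint law of independent samples attached to the letters. -/
abbrev wordLaw (k N : ℕ) : Measure (Fin k → Sample N) := Measure.pi fun _ => sampleLaw N

/-- The normalized mean trace of a word: each letter contributes a factor `N`. -/
def wordMean (t : ℝ) (N : ℕ) {k : ℕ} (L : List (Fin k)) : ℂ :=
  (N : ℂ) ^ L.toFinset.card * (N : ℂ)⁻¹ * ∫ x, (wordMat t N x L).trace ∂(wordLaw k N)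

theorem wordMat_append (t : ℝ) (N : ℕ) {k : ℕ} (x : Fin k → Sample N) (L L' : List (Fin k)) :
    wordMat t N x (L ++ L') = wordMat t N x L * wordMat t N x L' := by
  simp [wordMat]

theorem wordMat_congr (t : ℝ) (N : ℕ) {k : ℕ} (x y : Fin k → Sample N) (L : List (Fin k))
    (h : ∀ a ∈ L, x a = y a) : wordMat t N x L = wordMat t N y L := by
  unfold wordMat
  congr 1
  exact List.map_congr_left fun a ha => by rw [h a ha]

theorem isProbabilityMeasure_wordLaw (k : ℕ) {N : ℕ} (hN : 1 ≤ N) :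
    IsProbabilityMeasure (wordLaw k N) := by
  have := isProbabilityMeasure_sampleLaw hN
  infer_instance

theorem allMom_wordMat (t : ℝ) {N : ℕ} (hN : 1 ≤ N) {k : ℕ} (L : List (Fin k)) :
    ∀ p q, AllMom (wordLaw k N) (fun x => wordMat t N x L p q) := by
  have := isProbabilityMeasure_sampleLaw hN
  induction L with
  | nil => intro p q; exact AllMom.const _
  | cons a L ih =>
    intro p q
    have : (fun x => wordMat t N x (a :: L) p q) = fun x => ∑ r, (N : ℂ)⁻¹ *
        (modelVec t N (x a) p * star (modelVec t N (x a) r)) * wordMat t N x L r q := by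
      funext x
      simp only [wordMat, List.map_cons, List.prod_cons, Matrix.mul_apply, rankOne_apply]
    rw [this]
    refine AllMom.sum _ fun r _ => AllMom.mul (AllMom.const_mul (AllMom.mul ?_ ?_) _) (ih r q)
    · exact (allMom_modelVec t hN p).comp_mp (measurePreserving_eval (fun _ => sampleLaw N) a)
    · exact ((allMom_modelVec t hN r).comp_mp
        (measurePreserving_eval (fun _ => sampleLaw N) a)).star

/-- A measure preserving transformation of one sample which acts on the rank-one matrices by
a multiplicative map acts in the same way on the mean of every word. -/
theorem integral_wordMat_symm (t : ℝ) {N : ℕ} (hN : 1 ≤ N) {k : ℕ} (L : List (Fin k))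
    (φ : Sample N → Sample N) (hφ : MeasurePreserving φ (sampleLaw N) (sampleLaw N))
    (Φ : Matrix (Fin N) (Fin N) ℂ →* Matrix (Fin N) (Fin N) ℂ)
    (hΦ : ∀ z, rankOne (modelVec t N (φ z)) = Φ (rankOne (modelVec t N z))) (p q : Fin N) :
    ∫ x, Φ (wordMat t N x L) p q ∂(wordLaw k N) = ∫ x, wordMat t N x L p q ∂(wordLaw k N) := by
  have := isProbabilityMeasure_sampleLaw hN
  have hψ : MeasurePreserving (fun (x : Fin k → Sample N) i => φ (x i)) (wordLaw k N)
      (wordLaw k N) := measurePreserving_pi _ _ fun _ => hφ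
  symm
  conv_lhs => rw [← hψ.map_eq]
  rw [integral_map hψ.measurable.aemeasurable
    (by rw [hψ.map_eq]; exact (allMom_wordMat t hN L p q 0).1)]
  refine integral_congr_ae (ae_of_all _ fun x => ?_)
  simp only [wordMat, map_list_prod, List.map_map, hΦ, Function.comp_def]

/-- The signs `-1` at `q` and `1` elsewhere. -/
def flipSign {N : ℕ} (q j : Fin N) : ℂ := if j = q then -1 else 1

theorem flipSign_mul_self {N : ℕ} (q j : Fin N) : flipSign q j * flipSign q j = 1 := by
  unfold flipSign; split_ifs <;> norm_num

theorem star_flipSign {N : ℕ} (q j : Fin N) : star (flipSign q j) = flipSign q j := by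
  unfold flipSign; split_ifs <;> simp

/-- Changing the sign of the coordinate `q` of the model vector, up to a global sign which the
matrix `u u*` does not see: the Gaussian vector is multiplied by the signs relative to that of the
index, and its law is invariant because the entries are symmetric. -/
theorem measurePreserving_flip {N : ℕ} (hN : 1 ≤ N) (q : Fin N) :
    MeasurePreserving (fun z : Sample N => ((z.1, fun j => flipSign q z.1 * flipSign q j * z.2 j) :
      Sample N)) (sampleLaw N) (sampleLaw N) := by
  have := isProbabilityMeasure_uniformFin hN
  unfold sampleLaw
  refine MeasurePreserving.skew_product (g := fun (i : Fin N) (v : Fin N → ℂ) (j : Fin N) =>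
    flipSign q i * flipSign q j * v j) (MeasurePreserving.id _) ?_ (ae_of_all _ fun i => ?_)
  · refine measurable_pi_lambda _ fun j => ?_
    have h : Measurable (fun p : Fin N × (Fin N → ℂ) => flipSign q p.1) :=
      (measurable_of_finite (flipSign q)).comp measurable_fst
    simp only [Function.uncurry_def]
    fun_prop
  · refine (measurePreserving_pi (fun _ : Fin N => stdCplxGaussian)
      (fun _ : Fin N => stdCplxGaussian)
      (f := fun j z => flipSign q i * flipSign q j * z) fun j => ?_).map_eq
    have h : flipSign q i * flipSign q j = 1 ∨ flipSign q i * flipSign q j = -1 := by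
      unfold flipSign; split_ifs <;> norm_num
    rcases h with h | h
    · simp only [h, one_mul]; exact MeasurePreserving.id stdCplxGaussian
    · simpa [h] using measurePreserving_neg_stdCplx

theorem modelVec_flip (t : ℝ) {N : ℕ} (q : Fin N) (z : Sample N) (j : Fin N) :
    modelVec t N (z.1, fun j => flipSign q z.1 * flipSign q j * z.2 j) j =
      flipSign q z.1 * flipSign q j * modelVec t N z j := by
  unfold modelVec
  by_cases h : j = z.1
  · subst h; simp [flipSign_mul_self]
  · simp [h]; ring

/-- Conjugation by a diagonal matrix of signs kills the off-diagonal means. -/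
theorem integral_wordMat_offdiag (t : ℝ) {N : ℕ} (hN : 1 ≤ N) {k : ℕ} (L : List (Fin k))
    {p q : Fin N} (hpq : p ≠ q) : ∫ x, wordMat t N x L p q ∂(wordLaw k N) = 0 := by
  let D : Matrix (Fin N) (Fin N) ℂ := Matrix.diagonal (flipSign q)
  have hD : D * D = 1 := by
    simp only [D, Matrix.diagonal_mul_diagonal, flipSign_mul_self, Matrix.diagonal_one]
  let Φ : Matrix (Fin N) (Fin N) ℂ →* Matrix (Fin N) (Fin N) ℂ :=
    { toFun := fun A => D * A * D
      map_one' := by simp [hD]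
      map_mul' := fun A B => by
        rw [show D * A * D * (D * B * D) = D * A * (D * D) * B * D by
          simp only [Matrix.mul_assoc], hD, Matrix.mul_one, Matrix.mul_assoc D A B] }
  have hent : ∀ A : Matrix (Fin N) (Fin N) ℂ, ∀ a b, Φ A a b = flipSign q a * A a b * flipSign q b :=
    fun A a b => by simp [Φ, D, Matrix.diagonal_mul, Matrix.mul_diagonal]
  have h := integral_wordMat_symm t hN L _ (measurePreserving_flip hN q) Φ (fun z => by
    ext a b
    rw [hent, rankOne_apply, rankOne_apply, modelVec_flip, modelVec_flip, star_mul', star_mul',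
      star_flipSign, star_flipSign]
    linear_combination ((N : ℂ)⁻¹ * flipSign q a * modelVec t N z a * flipSign q b *
      star (modelVec t N z b)) * flipSign_mul_self q z.1) p q
  simp only [hent] at h
  simp only [flipSign, hpq, if_true, if_false, one_mul, mul_neg, mul_one, integral_neg] at h
  have h2 : (2 : ℂ) * ∫ x, wordMat t N x L p q ∂(wordLaw k N) = 0 := by linear_combination -h
  simpa using h2

/-- The model is invariant under permutations of the coordinates. -/
theorem measurePreserving_permSample {N : ℕ} (hN : 1 ≤ N) (τ : Equiv.Perm (Fin N)) :
    MeasurePreserving (fun z : Sample N => ((τ z.1, fun j => z.2 (τ.symm j)) : Sample N))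
      (sampleLaw N) (sampleLaw N) := by
  have := isProbabilityMeasure_uniformFin hN
  have h := measurePreserving_piCongrLeft (fun _ : Fin N => stdCplxGaussian) τ
  have h2 := (measurePreserving_perm_uniformFin τ).prod h
  convert! h2 using 1
  funext z
  refine Prod.ext rfl ?_
  funext j
  obtain ⟨i, rfl⟩ := τ.surjective j
  simp [MeasurableEquiv.piCongrLeft, Equiv.piCongrLeft_apply_apply]

/-- Exchangeability of the coordinates makes the diagonal means equal. -/
theorem integral_wordMat_diag (t : ℝ) {N : ℕ} (hN : 1 ≤ N) {k : ℕ} (L : List (Fin k))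
    (p q : Fin N) : ∫ x, wordMat t N x L p p ∂(wordLaw k N) =
      ∫ x, wordMat t N x L q q ∂(wordLaw k N) := by
  let τ : Equiv.Perm (Fin N) := Equiv.swap p q
  let Φ : Matrix (Fin N) (Fin N) ℂ →* Matrix (Fin N) (Fin N) ℂ :=
    { toFun := fun A => A.submatrix τ.symm τ.symm
      map_one' := by simp
      map_mul' := fun A B => (Matrix.submatrix_mul_equiv A B _ τ.symm _).symm }
  have h := integral_wordMat_symm t hN L _ (measurePreserving_permSample hN τ) Φ (fun z => by
    have hv : ∀ j, modelVec t N (τ z.1, fun j => z.2 (τ.symm j)) j =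
        modelVec t N z (τ.symm j) := fun j => by
      simp [modelVec, Equiv.symm_apply_eq]
    ext a b
    simp [Φ, rankOne_apply, hv]) q q
  simpa [Φ, τ] using h

/-- The mean of a word is a scalar matrix. -/
theorem integral_wordMat (t : ℝ) {N : ℕ} (hN : 1 ≤ N) {k : ℕ} (L : List (Fin k)) (p q : Fin N) :
    ∫ x, wordMat t N x L p q ∂(wordLaw k N) =
      if p = q then (N : ℂ)⁻¹ * ∫ x, (wordMat t N x L).trace ∂(wordLaw k N) else 0 := by
  split_ifs with h
  · subst h
    simp only [Matrix.trace, Matrix.diag]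
    rw [integral_finsetSum _ fun i _ => (allMom_wordMat t hN L i i).integrable,
      Finset.sum_congr rfl fun i _ => integral_wordMat_diag t hN L i p]
    have : (N : ℂ) ≠ 0 := by exact_mod_cast (by omega : N ≠ 0)
    simp [this]
  · exact integral_wordMat_offdiag t hN L h

/-- A factor whose letters do not occur in the rest of the word splits off. -/
theorem wordMean_factor (t : ℝ) {N : ℕ} (hN : 1 ≤ N) {k : ℕ} (l1 l2 l3 : List (Fin k))
    (hd : ∀ a ∈ l2, a ∉ l1 ++ l3) :
    wordMean t N (l1 ++ l2 ++ l3) = wordMean t N l2 * wordMean t N (l1 ++ l3) := by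
  classical
  have := isProbabilityMeasure_sampleLaw hN
  have : Nonempty (Sample N) := ⟨(⟨0, hN⟩, 0)⟩
  have hcard : (l1 ++ l2 ++ l3).toFinset.card = l2.toFinset.card + (l1 ++ l3).toFinset.card := by
    rw [← Finset.card_union_of_disjoint]
    · congr 1; ext a; simp; tauto
    · rw [Finset.disjoint_left]
      intro a ha ha'
      exact hd a (by simpa using ha) (by simpa using ha')
  have htr : ∀ x, (wordMat t N x (l1 ++ l2 ++ l3)).trace =
      ∑ p, ∑ q, wordMat t N x l2 p q * wordMat t N x (l3 ++ l1) q p := fun x => by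
    rw [wordMat_append, wordMat_append, Matrix.mul_assoc, Matrix.trace_mul_comm, Matrix.mul_assoc,
      ← wordMat_append]
    simp [Matrix.trace, Matrix.mul_apply]
  have htr2 : ∀ x, (wordMat t N x (l1 ++ l3)).trace = ∑ p, wordMat t N x (l3 ++ l1) p p :=
    fun x => by
      rw [wordMat_append, Matrix.trace_mul_comm, ← wordMat_append]
      rfl
  have hsplit : ∀ p q, ∫ x, wordMat t N x l2 p q * wordMat t N x (l3 ++ l1) q p ∂(wordLaw k N) =
      (∫ x, wordMat t N x l2 p q ∂(wordLaw k N)) *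
        ∫ x, wordMat t N x (l3 ++ l1) q p ∂(wordLaw k N) := fun p q => by
    refine integral_mul_of_disjoint_coords (sampleLaw N) (fun a => a ∈ l2) _ _ ?_ ?_
    · intro x y h; rw [wordMat_congr t N x y l2 h]
    · intro x y h
      rw [wordMat_congr t N x y (l3 ++ l1) fun a ha => h a fun ha2 => hd a ha2 (by
        simp only [List.mem_append] at ha ⊢; tauto)]
  have hint : ∀ p q, Integrable (fun x => wordMat t N x l2 p q * wordMat t N x (l3 ++ l1) q p)
      (wordLaw k N) := fun p q =>
    ((allMom_wordMat t hN l2 p q).mul (allMom_wordMat t hN _ q p)).integrable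
  unfold wordMean
  rw [hcard, pow_add]
  simp_rw [htr, htr2]
  rw [integral_finsetSum _ fun p _ => integrable_finsetSum _ fun q _ => hint p q,
    Finset.sum_congr rfl fun p _ => integral_finsetSum _ fun q _ => hint p q]
  simp_rw [hsplit, integral_wordMat t hN l2]
  simp only [ite_mul, zero_mul, Finset.sum_ite_eq, Finset.mem_univ, if_true]
  rw [← Finset.mul_sum, integral_finsetSum _ fun p _ => (allMom_wordMat t hN _ p p).integrable]
  ring

theorem wordMean_nil (t : ℝ) {N : ℕ} (hN : 1 ≤ N) {k : ℕ} :
    wordMean t N ([] : List (Fin k)) = 1 := by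
  have := isProbabilityMeasure_sampleLaw hN
  have : (N : ℂ) ≠ 0 := by exact_mod_cast (by omega : N ≠ 0)
  simp [wordMean, wordMat, this]

/-- The trace of a word of rank-one matrices is the product of the normalized inner products
along its cyclic edges. -/
theorem trace_wordMat (t : ℝ) {N : ℕ} (hN : 1 ≤ N) {k : ℕ} (x : Fin k → Sample N)
    (L : List (Fin k)) (hL : L ≠ []) : (wordMat t N x L).trace = ((cycEdges L).map fun e =>
      (N : ℂ)⁻¹ * (star (modelVec t N (x e.1)) ⬝ᵥ modelVec t N (x e.2))).prod := by
  have hN0 : (N : ℂ) ≠ 0 := by exact_mod_cast (by omega : N ≠ 0)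
  have key : ∀ (l : List (Fin k)) (a b : Fin k),
      star (modelVec t N (x a)) ⬝ᵥ (wordMat t N x l *ᵥ modelVec t N (x b)) =
        (N : ℂ) * ((pathEdges a l b).map fun e =>
      (N : ℂ)⁻¹ * (star (modelVec t N (x e.1)) ⬝ᵥ modelVec t N (x e.2))).prod := by
    intro l
    induction l with
    | nil => intro a b; simp [wordMat, pathEdges, hN0]
    | cons c l ih =>
      intro a b
      have h1 : wordMat t N x (c :: l) = rankOne (modelVec t N (x c)) * wordMat t N x l := by
        simp [wordMat]
      rw [h1, ← Matrix.mulVec_mulVec, rankOne, Matrix.smul_mulVec, Matrix.vecMulVec_mulVec, ih]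
      simp only [pathEdges, List.map_cons, List.prod_cons, dotProduct_smul, op_smul_eq_smul,
        smul_eq_mul]
      field_simp
  cases L with
  | nil => exact absurd rfl hL
  | cons a l =>
    have h1 : wordMat t N x (a :: l) = rankOne (modelVec t N (x a)) * wordMat t N x l := by
      simp [wordMat]
    rw [h1, Matrix.trace_mul_comm, rankOne, Matrix.mul_smul, Matrix.trace_smul,
      Matrix.mul_vecMulVec, Matrix.trace_vecMulVec, dotProduct_comm, key]
    simp [cycEdges, hN0]

/-! ### Moments of sums of independent variables -/

theorem abs_pow_le_one_add_pow (a : ℝ) {i m : ℕ} (h : i ≤ 2 * m) :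
    |a| ^ i ≤ 1 + a ^ (2 * m) := by
  have h2 : a ^ (2 * m) = |a| ^ (2 * m) := by rw [pow_mul, pow_mul, sq_abs]
  rw [h2]
  rcases le_total |a| 1 with h1 | h1
  · have := pow_le_one₀ (n := i) (abs_nonneg a) h1
    have : 0 ≤ |a| ^ (2 * m) := by positivity
    linarith
  · have := pow_le_pow_right₀ h1 h
    linarith

/-- Taylor bound for even powers, with the linear term kept exactly: it disappears on average
against an independent centered `y`. -/
theorem add_pow_even_le (m : ℕ) : ∃ K : ℝ, 0 ≤ K ∧ ∀ a y : ℝ,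
    (a + y) ^ (2 * (m + 1)) ≤ a ^ (2 * (m + 1)) + (2 * (m + 1) : ℕ) * (a ^ (2 * m + 1) * y) +
      K * ((1 + a ^ (2 * m)) * (1 + y ^ (2 * (m + 1)))) := by
  refine ⟨∑ i ∈ Finset.range (2 * m + 1), ((2 * (m + 1)).choose (i + 2) : ℝ), by positivity,
    fun a y => ?_⟩
  rw [add_comm a y, add_pow, show 2 * (m + 1) + 1 = 2 * m + 1 + 1 + 1 by ring,
    Finset.sum_range_succ', Finset.sum_range_succ']
  have h : ∑ i ∈ Finset.range (2 * m + 1), y ^ (i + 1 + 1) * a ^ (2 * (m + 1) - (i + 1 + 1)) *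
      ((2 * (m + 1)).choose (i + 1 + 1) : ℝ) ≤
      (∑ i ∈ Finset.range (2 * m + 1), ((2 * (m + 1)).choose (i + 2) : ℝ)) *
        ((1 + a ^ (2 * m)) * (1 + y ^ (2 * (m + 1)))) := by
    rw [Finset.sum_mul]
    refine Finset.sum_le_sum fun i hi => ?_
    have hi' : i ≤ 2 * m := by have := Finset.mem_range.mp hi; omega
    rw [mul_comm]
    refine mul_le_mul_of_nonneg_left ?_ (by positivity)
    refine (le_abs_self _).trans ?_
    rw [abs_mul, abs_pow, abs_pow, mul_comm]
    refine mul_le_mul (abs_pow_le_one_add_pow a (by omega))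
      (abs_pow_le_one_add_pow y (by omega)) (by positivity) ?_
    have : 0 ≤ a ^ (2 * m) := by rw [pow_mul]; positivity
    linarith
  have e1 : 2 * (m + 1) - (0 + 1) = 2 * m + 1 := by omega
  simp only [e1, Nat.choose_zero_right, Nat.choose_one_right, zero_add, pow_one, pow_zero,
    Nat.cast_one, mul_one, one_mul, Nat.sub_zero] at h ⊢
  have e2 : ((2 * (m + 1) : ℕ) : ℝ) * (a ^ (2 * m + 1) * y) =
    y * a ^ (2 * m + 1) * ((2 * (m + 1) : ℕ) : ℝ) := by ring
  rw [e2]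
  linarith

theorem integrable_pow_of_allMom {Ω : Type*} [MeasurableSpace Ω] {μ : Measure Ω}
    [IsFiniteMeasure μ] {Y : Ω → ℝ} (hY : AllMom μ (fun x => (Y x : ℂ))) (n : ℕ) :
    Integrable (fun x => Y x ^ n) μ := by
  have h := (hY.pow n).integrable.re
  simpa [← Complex.ofReal_pow] using h

/-- Moments of sums of independent, identically distributed centered variables: the moment of
order `2m` of a sum of `N` terms is `O(N^m)`. -/
theorem moment_sum_bound {E : Type*} [MeasurableSpace E] (ν : Measure E) [IsProbabilityMeasure ν]
    (Y : E → ℝ) (hY : AllMom ν (fun e => (Y e : ℂ))) (h0 : ∫ e, Y e ∂ν = 0) (m : ℕ) :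
    ∃ C : ℝ, 0 ≤ C ∧ ∀ N : ℕ,
      ∫ w : Fin N → E, (∑ j, Y (w j)) ^ (2 * m) ∂(Measure.pi fun _ => ν) ≤ C * (N : ℝ) ^ m := by
  have hS : ∀ N : ℕ, AllMom (Measure.pi fun _ : Fin N => ν)
      (fun w => ((∑ j, Y (w j) : ℝ) : ℂ)) := fun N => by
    simp only [Complex.ofReal_sum]
    exact AllMom.sum _ fun j _ => hY.comp_mp (measurePreserving_eval (fun _ => ν) j)
  induction m with
  | zero => exact ⟨1, by norm_num, fun N => by simp⟩
  | succ m ih =>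
    obtain ⟨C, hC0, hC⟩ := ih
    obtain ⟨K, hK0, hK⟩ := add_pow_even_le m
    set B : ℝ := ∫ e, (1 + Y e ^ (2 * (m + 1))) ∂ν
    have hB0 : 0 ≤ B := integral_nonneg fun e => by
      have : 0 ≤ Y e ^ (2 * (m + 1)) := by rw [pow_mul]; positivity
      show 0 ≤ 1 + Y e ^ (2 * (m + 1))
      linarith
    have step : ∀ N : ℕ, ∫ w : Fin (N + 1) → E, (∑ j, Y (w j)) ^ (2 * (m + 1))
          ∂(Measure.pi fun _ => ν) ≤
        ∫ w : Fin N → E, (∑ j, Y (w j)) ^ (2 * (m + 1)) ∂(Measure.pi fun _ => ν) +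
          K * ((1 + C * (N : ℝ) ^ m) * B) := by
      intro N
      have hmp := measurePreserving_piFinSuccAbove (fun _ : Fin (N + 1) => ν) 0
      have hint := fun n => integrable_pow_of_allMom (hS N) n
      have hintY := fun n => integrable_pow_of_allMom hY n
      have i0 : Integrable (fun w : Fin N → E => 1 + (∑ j, Y (w j)) ^ (2 * m))
          (Measure.pi fun _ => ν) := (integrable_const 1).add (hint _)
      have i1 : Integrable (fun e => 1 + Y e ^ (2 * (m + 1))) ν :=
        (integrable_const 1).add (hintY _)
      have i2 : Integrable (fun z : E × (Fin N → E) => (∑ j, Y (z.2 j)) ^ (2 * (m + 1)))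
          (ν.prod (Measure.pi fun _ => ν)) := (hint _).comp_snd ν
      have i3 : Integrable (fun z : E × (Fin N → E) => Y z.1 * (∑ j, Y (z.2 j)) ^ (2 * m + 1))
          (ν.prod (Measure.pi fun _ => ν)) := by
        simpa using (hintY 1).mul_prod (hint (2 * m + 1))
      have i4 : Integrable (fun z : E × (Fin N → E) => (1 + Y z.1 ^ (2 * (m + 1))) *
          (1 + (∑ j, Y (z.2 j)) ^ (2 * m))) (ν.prod (Measure.pi fun _ => ν)) := i1.mul_prod i0
      have hmain : ∫ z : E × (Fin N → E), (∑ j, Y (z.2 j) + Y z.1) ^ (2 * (m + 1))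
          ∂(ν.prod (Measure.pi fun _ => ν)) ≤
          ∫ z : E × (Fin N → E), ((∑ j, Y (z.2 j)) ^ (2 * (m + 1)) + (2 * (m + 1) : ℕ) *
            (Y z.1 * (∑ j, Y (z.2 j)) ^ (2 * m + 1)) + K * ((1 + Y z.1 ^ (2 * (m + 1))) *
          (1 + (∑ j, Y (z.2 j)) ^ (2 * m)))) ∂(ν.prod (Measure.pi fun _ => ν)) := by
        refine integral_mono_of_nonneg (ae_of_all _ fun z => ?_)
          ((i2.add (i3.const_mul _)).add (i4.const_mul _)) (ae_of_all _ fun z => ?_)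
        · show 0 ≤ (_ : ℝ) ^ (2 * (m + 1))
          rw [pow_mul]; positivity
        · refine (hK _ _).trans (le_of_eq ?_)
          show _ = _ + _ * (_ * _) + _ * (_ * _)
          ring
      have i5 : Integrable (fun z : E × (Fin N → E) => (∑ j, Y (z.2 j)) ^ (2 * (m + 1)) +
          (2 * (m + 1) : ℕ) * (Y z.1 * (∑ j, Y (z.2 j)) ^ (2 * m + 1)))
          (ν.prod (Measure.pi fun _ => ν)) := i2.add (i3.const_mul _)
      rw [integral_add i5 (i4.const_mul _),
        integral_add i2 (i3.const_mul _), integral_const_mul, integral_const_mul,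
        integral_prod_mul Y (fun w : Fin N → E => (∑ j, Y (w j)) ^ (2 * m + 1)), h0,
        integral_prod_mul (fun e => 1 + Y e ^ (2 * (m + 1)))
          (fun w : Fin N → E => 1 + (∑ j, Y (w j)) ^ (2 * m)),
        integral_fun_snd (fun w : Fin N → E => (∑ j, Y (w j)) ^ (2 * (m + 1))),
        integral_add (integrable_const _) (hint _)] at hmain
      have hl : ∫ w : Fin (N + 1) → E, (∑ j, Y (w j)) ^ (2 * (m + 1)) ∂(Measure.pi fun _ => ν) =
          ∫ z : E × (Fin N → E), (∑ j, Y (z.2 j) + Y z.1) ^ (2 * (m + 1))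
          ∂(ν.prod (Measure.pi fun _ => ν)) := by
        rw [← hmp.integral_comp (MeasurableEquiv.measurableEmbedding _)]
        refine integral_congr_ae (ae_of_all _ fun w => ?_)
        simp only [Fin.sum_univ_succ]
        rw [add_comm (Y (w 0))]
        rfl
      rw [hl]
      refine hmain.trans ?_
      simp only [probReal_univ, one_mul, zero_mul, mul_zero, add_zero,
        integral_const, smul_eq_mul, mul_one]
      have h5 : B * (1 + ∫ w : Fin N → E, (∑ j, Y (w j)) ^ (2 * m) ∂(Measure.pi fun _ => ν)) ≤
          (1 + C * (N : ℝ) ^ m) * B := by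
        rw [mul_comm]
        exact mul_le_mul_of_nonneg_right (by linarith [hC N]) hB0
      have := mul_le_mul_of_nonneg_left h5 hK0
      linarith
    refine ⟨K * ((1 + C) * B), by positivity, fun N => ?_⟩
    induction N with
    | zero => simp
    | succ N ihN =>
      refine (step N).trans ?_
      have hN1 : (N : ℝ) ^ m ≤ ((N + 1 : ℕ) : ℝ) ^ m := by
        gcongr; simp
      have hN2 : (1 : ℝ) ≤ ((N + 1 : ℕ) : ℝ) ^ m := one_le_pow₀ (by push_cast; linarith [(Nat.cast_nonneg N : (0:ℝ) ≤ N)])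
      have hN3 : (N : ℝ) ^ (m + 1) ≤ N * ((N + 1 : ℕ) : ℝ) ^ m := by
        rw [pow_succ, mul_comm]; gcongr
      have h6 : K * ((1 + C * (N : ℝ) ^ m) * B) ≤ K * ((1 + C) * B) * ((N + 1 : ℕ) : ℝ) ^ m := by
        have : (1 + C * (N : ℝ) ^ m) ≤ (1 + C) * ((N + 1 : ℕ) : ℝ) ^ m := by nlinarith
        calc _ ≤ K * (((1 + C) * ((N + 1 : ℕ) : ℝ) ^ m) * B) := by gcongr
          _ = _ := by ring
      have h7 : K * ((1 + C) * B) * (N : ℝ) ^ (m + 1) ≤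
          K * ((1 + C) * B) * (N * ((N + 1 : ℕ) : ℝ) ^ m) := by gcongr
      calc _ ≤ K * ((1 + C) * B) * (N * ((N + 1 : ℕ) : ℝ) ^ m) +
            K * ((1 + C) * B) * ((N + 1 : ℕ) : ℝ) ^ m := by linarith
        _ = _ := by push_cast; ring

theorem measurePreserving_curry_pi {ι κ E : Type*} [Fintype ι] [Fintype κ] [MeasurableSpace E]
    (ν : Measure E) [IsProbabilityMeasure ν] :
    MeasurePreserving (MeasurableEquiv.curry ι κ E)
      (Measure.pi fun _ : ι × κ => ν) (Measure.pi fun _ : ι => Measure.pi fun _ : κ => ν) := by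
  refine ⟨MeasurableEquiv.measurable _, ?_⟩
  have h := Measure.infinitePi_map_curry (ι := ι) (κ := κ) (fun _ _ => ν)
  simpa only [Measure.infinitePi_eq_pi] using h

/-- Exchanging the two indices of a doubly indexed family of independent variables. -/
theorem measurePreserving_swap_pi {ι κ E : Type*} [Fintype ι] [Fintype κ] [MeasurableSpace E]
    (ν : Measure E) [IsProbabilityMeasure ν] :
    MeasurePreserving (fun (g : ι → κ → E) (j : κ) (i : ι) => g i j)
      (Measure.pi fun _ : ι => Measure.pi fun _ : κ => ν)
      (Measure.pi fun _ : κ => Measure.pi fun _ : ι => ν) := by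
  have h1 := (measurePreserving_curry_pi (ι := ι) (κ := κ) ν).symm
  have h2 := measurePreserving_piCongrLeft (fun _ : κ × ι => ν) (Equiv.prodComm ι κ)
  convert! (measurePreserving_curry_pi ν).comp (h2.comp h1) using 1

/-! ### Inner products of the model vectors -/

/-- The joint law of independent Gaussian vectors attached to the letters. -/
abbrev gaussLaw (k N : ℕ) : Measure (Fin k → Fin N → ℂ) :=
  Measure.pi fun _ => Measure.pi fun _ => stdCplxGaussian

theorem UnifMom.of_mp {I : Type*} {Ω : I → Type*} [∀ i, MeasurableSpace (Ω i)]
    {μ : ∀ i, Measure (Ω i)} {E : Type*} [MeasurableSpace E] {ν : Measure E} {f : E → ℂ}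
    (hf : AllMom ν f) (φ : ∀ i, Ω i → E) (hφ : ∀ i, MeasurePreserving (φ i) (μ i) ν) :
    UnifMom μ (fun i x => f (φ i x)) := by
  intro p
  refine ⟨(eLpNorm f p ν).toNNReal, fun i => ⟨((hf p).comp_measurePreserving (hφ i)).1, ?_⟩⟩
  have h := eLpNorm_comp_measurePreserving (p := (p : ℝ≥0∞)) (hf p).1 (hφ i)
  rw [ENNReal.coe_toNNReal (hf p).2.ne, ← h]
  rfl

/-- The indices `(N, X)` of the families over which moments are bounded uniformly, with
`N = n + 1`. -/
abbrev GIdx (k : ℕ) : Type := Σ n : ℕ, (Fin k → Fin (n + 1))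

/-- Normalized sums of centered functions of the independent columns have moments bounded
uniformly in `N`. -/
theorem unifMom_normalized_sum {k : ℕ} (Y : (Fin k → ℂ) → ℂ)
    (hY : AllMom (Measure.pi fun _ : Fin k => stdCplxGaussian) Y)
    (h0 : ∫ v, Y v ∂(Measure.pi fun _ : Fin k => stdCplxGaussian) = 0) :
    UnifMom (fun i : GIdx k => gaussLaw k (i.1 + 1)) (fun i G =>
      ((Real.sqrt (i.1 + 1 : ℕ))⁻¹ : ℝ) * ∑ j, Y (fun a => G a j)) := by
  have key : ∀ Z : (Fin k → ℂ) → ℝ,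
      AllMom (Measure.pi fun _ : Fin k => stdCplxGaussian) (fun v => (Z v : ℂ)) →
      ∫ v, Z v ∂(Measure.pi fun _ : Fin k => stdCplxGaussian) = 0 →
      UnifMom (fun i : GIdx k => gaussLaw k (i.1 + 1)) (fun i G =>
        (((Real.sqrt (i.1 + 1 : ℕ))⁻¹ * ∑ j, Z (fun a => G a j) : ℝ) : ℂ)) := by
    intro Z hZ hZ0
    have hS : ∀ i : GIdx k, AllMom (gaussLaw k (i.1 + 1))
        (fun G => ((∑ j, Z (fun a => G a j) : ℝ) : ℂ)) := fun i => by
      simp only [Complex.ofReal_sum]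
      refine AllMom.sum _ fun j _ => ?_
      exact (hZ.comp_mp (measurePreserving_eval (fun _ : Fin (i.1 + 1) =>
        Measure.pi fun _ : Fin k => stdCplxGaussian) j)).comp_mp
        (measurePreserving_swap_pi stdCplxGaussian)
    have hSY : ∀ i : GIdx k, AllMom (gaussLaw k (i.1 + 1))
        (fun G => (((Real.sqrt (i.1 + 1 : ℕ))⁻¹ * ∑ j, Z (fun a => G a j) : ℝ) : ℂ)) := fun i => by
      simpa only [Complex.ofReal_mul] using
        (hS i).const_mul (((Real.sqrt (i.1 + 1 : ℕ))⁻¹ : ℝ) : ℂ)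
    refine UnifMom.of_even_moments (I := GIdx k) (Ω := fun i => Fin k → Fin (i.1 + 1) → ℂ)
      (μ := fun i : GIdx k => gaussLaw k (i.1 + 1)) (Y := fun i G => (Real.sqrt (i.1 + 1 : ℕ))⁻¹ *
      ∑ j, Z (fun a => G a j)) (fun i => ?_)
      (fun m i => ?_) (fun m => ?_)
    · exact Complex.continuous_re.comp_aestronglyMeasurable (hSY i 0).1
    · exact integrable_pow_of_allMom (Y := fun G : Fin k → Fin (i.1 + 1) → ℂ =>
        (Real.sqrt (i.1 + 1 : ℕ))⁻¹ * ∑ j, Z (fun a => G a j)) (hSY i) (2 * m)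
    · obtain ⟨C, hC0, hC⟩ := moment_sum_bound _ Z hZ hZ0 m
      refine ⟨C, fun i => ?_⟩
      have hmp := measurePreserving_swap_pi (ι := Fin k) (κ := Fin (i.1 + 1)) stdCplxGaussian
      have hpos : (0 : ℝ) < ((i.1 + 1 : ℕ) : ℝ) := by positivity
      have h1 : ∫ G, (∑ j, Z (fun a => G a j)) ^ (2 * m) ∂(gaussLaw k (i.1 + 1)) =
          ∫ w, (∑ j, Z (w j)) ^ (2 * m) ∂(Measure.pi fun _ : Fin (i.1 + 1) =>
            Measure.pi fun _ : Fin k => stdCplxGaussian) := by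
        rw [← hmp.map_eq, integral_map hmp.measurable.aemeasurable]
        rw [hmp.map_eq]
        refine (integrable_pow_of_allMom (Y := fun w : Fin (i.1 + 1) → Fin k → ℂ =>
          ∑ j, Z (w j)) ?_ _).1
        simp only [Complex.ofReal_sum]
        exact AllMom.sum _ fun j _ => hZ.comp_mp (measurePreserving_eval _ j)
      simp_rw [mul_pow]
      rw [integral_const_mul, h1, pow_mul (Real.sqrt _)⁻¹, inv_pow, Real.sq_sqrt hpos.le]
      calc _ ≤ (((i.1 + 1 : ℕ) : ℝ)⁻¹) ^ m * (C * ((i.1 + 1 : ℕ) : ℝ) ^ m) := by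
            gcongr; exact hC _
        _ = C := by rw [inv_pow]; field_simp
  have hre : ∫ v, (Y v).re ∂(Measure.pi fun _ : Fin k => stdCplxGaussian) = 0 := by
    have := integral_re hY.integrable
    simpa [h0] using this
  have him : ∫ v, (Y v).im ∂(Measure.pi fun _ : Fin k => stdCplxGaussian) = 0 := by
    have := integral_im hY.integrable
    simpa [h0] using this
  have hYim : AllMom (Measure.pi fun _ : Fin k => stdCplxGaussian) (fun v => ((Y v).im : ℂ)) :=
    hY.mono ((Complex.continuous_ofReal.comp Complex.continuous_im).comp_aestronglyMeasurable
      (hY 0).1) (fun x => by simpa using Complex.abs_im_le_norm (Y x))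
  have h := (key _ hY.ofReal_re hre).add
    ((UnifMom.const (c := fun _ => Complex.I) 1 (by simp)).mul (key _ hYim him))
  convert! h using 3 with i G
  push_cast
  rw [← mul_assoc, mul_comm Complex.I, mul_assoc, Finset.mul_sum (a := Complex.I), ← mul_add,
    ← Finset.sum_add_distrib]
  congr 1
  refine Finset.sum_congr rfl fun j _ => ?_
  rw [mul_comm Complex.I, Complex.re_add_im]

/-- The normalized inner product of the vectors attached to two letters. -/
def edgeIp (t : ℝ) (N : ℕ) {k : ℕ} (X : Fin k → Fin N) (G : Fin k → Fin N → ℂ)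
    (e : Fin k × Fin k) : ℂ :=
  (N : ℂ)⁻¹ * (star (modelVec t N (X e.1, G e.1)) ⬝ᵥ modelVec t N (X e.2, G e.2))

/-- The limit of the normalized inner product of two letters, given the indices `X`. -/
def edgeLim (t : ℝ) {N k : ℕ} (X : Fin k → Fin N) (e : Fin k × Fin k) : ℂ :=
  if e.1 = e.2 then 1 else if X e.1 = X e.2 then (Real.exp (-t) : ℝ) else 0

/-- The centered product of two entries in the same column. -/
def colProd {k : ℕ} (e : Fin k × Fin k) (v : Fin k → ℂ) : ℂ :=
  star (v e.1) * v e.2 - if e.1 = e.2 then 1 else 0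

theorem allMom_colProd {k : ℕ} (e : Fin k × Fin k) :
    AllMom (Measure.pi fun _ : Fin k => stdCplxGaussian) (colProd e) := by
  have h := fun a : Fin k => allMom_stdCplx.comp_mp
    (measurePreserving_eval (fun _ : Fin k => stdCplxGaussian) a)
  exact ((h e.1).star.mul (h e.2)).sub (AllMom.const _)

theorem integral_eval_stdCplx {ι : Type*} [Fintype ι] (a : ι) (f : ℂ → ℂ)
    (hf : AEStronglyMeasurable f stdCplxGaussian) :
    ∫ v, f (v a) ∂(Measure.pi fun _ : ι => stdCplxGaussian) = ∫ z, f z ∂stdCplxGaussian := by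
  have h := measurePreserving_eval (fun _ : ι => stdCplxGaussian) a
  conv_rhs => rw [← h.map_eq]
  rw [integral_map h.measurable.aemeasurable (by rwa [h.map_eq])]

theorem integral_colProd {k : ℕ} (e : Fin k × Fin k) :
    ∫ v, colProd e v ∂(Measure.pi fun _ : Fin k => stdCplxGaussian) = 0 := by
  have h := fun a : Fin k => allMom_stdCplx.comp_mp
    (measurePreserving_eval (fun _ : Fin k => stdCplxGaussian) a)
  unfold colProd
  rw [integral_sub ((h e.1).star.mul (h e.2)).integrable (integrable_const _)]
  split_ifs with he
  · rw [← he, integral_eval_stdCplx e.1 (fun z => star z * z)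
      (allMom_stdCplx.star.mul allMom_stdCplx 0).1, integral_normSq_stdCplx]
    simp
  · rw [integral_mul_of_disjoint_coords stdCplxGaussian (fun a => a = e.1) (fun v => star (v e.1))
      (fun v => v e.2) (fun x y h => by rw [h _ rfl])
      (fun x y h => h _ (Ne.symm he)),
      integral_eval_stdCplx e.2 (fun z => z) (allMom_stdCplx 0).1, integral_stdCplx]
    simp

/-- The error in the normalized inner product consists of two single Gaussian entries and of a
normalized sum of centered independent variables. -/
theorem edgeIp_sub_edgeLim (t : ℝ) (ht : 0 ≤ t) {N k : ℕ} (hN : 1 ≤ N) (X : Fin k → Fin N)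
    (G : Fin k → Fin N → ℂ) (e : Fin k × Fin k) :
    (Real.sqrt N : ℝ) * (edgeIp t N X G e - edgeLim t X e) =
      (Real.exp (-t / 2) * Real.sqrt (1 - Real.exp (-t)) : ℝ) *
        (G e.2 (X e.1) + star (G e.1 (X e.2))) +
      ((1 - Real.exp (-t) : ℝ) : ℂ) *
        (((Real.sqrt N)⁻¹ : ℝ) * ∑ j, colProd e (fun a => G a j)) := by
  have hb : (Real.sqrt (1 - Real.exp (-t))) ^ 2 = 1 - Real.exp (-t) :=
    Real.sq_sqrt (by linarith [Real.exp_le_one_iff.mpr (neg_nonpos.mpr ht)])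
  have ha : (Real.exp (-t / 2)) ^ 2 = Real.exp (-t) := by
    rw [← Real.exp_nat_mul]; congr 1; push_cast; ring
  have hNpos : (0 : ℝ) < N := by exact_mod_cast hN
  have hs : (Real.sqrt N) ^ 2 = N := Real.sq_sqrt hNpos.le
  have hs0 : (Real.sqrt N : ℂ) ≠ 0 := by
    exact_mod_cast (Real.sqrt_pos.mpr hNpos).ne'
  set a : ℝ := Real.exp (-t / 2)
  set b : ℝ := Real.sqrt (1 - Real.exp (-t))
  set s : ℝ := Real.sqrt N
  have hNs : (N : ℂ) = (s : ℂ) ^ 2 := by exact_mod_cast hs.symm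
  have hdot : star (modelVec t N (X e.1, G e.1)) ⬝ᵥ modelVec t N (X e.2, G e.2) =
      (a * s : ℂ) ^ 2 * (if X e.1 = X e.2 then 1 else 0) +
        (a * s : ℂ) * b * (G e.2 (X e.1) + star (G e.1 (X e.2))) +
        (b : ℂ) ^ 2 * ∑ j, star (G e.1 j) * G e.2 j := by
    have hterm : ∀ j, star (modelVec t N (X e.1, G e.1) j) * modelVec t N (X e.2, G e.2) j =
        (a * s : ℂ) ^ 2 * (if j = X e.1 then (if X e.1 = X e.2 then 1 else 0) else 0) +
        (a * s : ℂ) * b * ((if j = X e.1 then G e.2 j else 0) +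
          (if j = X e.2 then star (G e.1 j) else 0)) +
        (b : ℂ) ^ 2 * (star (G e.1 j) * G e.2 j) := fun j => by
      have hst : star (modelVec t N (X e.1, G e.1) j) =
          ((a * s : ℝ) : ℂ) * (if j = X e.1 then 1 else 0) + (b : ℂ) * star (G e.1 j) := by
        simp only [modelVec, star_add, star_mul', Complex.star_def, Complex.conj_ofReal]
        congr 2
        split_ifs <;> simp
      rw [hst]
      simp only [modelVec]
      change _ * (((a * s : ℝ) : ℂ) * _ + (b : ℂ) * _) = _
      push_cast
      by_cases h1 : j = X e.1
      · by_cases h2 : X e.1 = X e.2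
        · simp only [← h1, ← h2]; simp; ring
        · have h3 : j ≠ X e.2 := by rwa [h1]
          simp only [if_pos h1, if_neg h2, if_neg h3]; ring
      · by_cases h3 : j = X e.2
        · simp only [if_neg h1, if_pos h3]; ring
        · simp only [if_neg h1, if_neg h3]; ring
    simp only [dotProduct, Pi.star_apply]
    rw [Finset.sum_congr rfl fun j _ => hterm j, Finset.sum_add_distrib, Finset.sum_add_distrib,
      ← Finset.mul_sum, ← Finset.mul_sum, ← Finset.mul_sum, Finset.sum_add_distrib]
    simp
  have hcol : ∑ j, colProd e (fun a => G a j) =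
      ∑ j, star (G e.1 j) * G e.2 j - (N : ℂ) * (if e.1 = e.2 then 1 else 0) := by
    simp [colProd, Finset.sum_sub_distrib]
  have hbC : (b : ℂ) ^ 2 = 1 - ((Real.exp (-t) : ℝ) : ℂ) := by exact_mod_cast hb
  have haC : (a : ℂ) ^ 2 = ((Real.exp (-t) : ℝ) : ℂ) := by exact_mod_cast ha
  have hlim : edgeLim t X e = (a : ℂ) ^ 2 * (if X e.1 = X e.2 then 1 else 0) +
      (b : ℂ) ^ 2 * (if e.1 = e.2 then 1 else 0) := by
    rw [hbC, haC, edgeLim]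
    by_cases h1 : e.1 = e.2
    · simp [h1]
    · simp [h1]
  rw [hcol, edgeIp, hdot, hlim, hNs]
  push_cast
  rw [show (1 : ℂ) - Complex.exp (-(t : ℂ)) = (b : ℂ) ^ 2 by rw [hbC]; push_cast; rfl]
  field_simp
  ring

/-- Each normalized inner product is within `O(N^{-1/2})` of its limit in every `L^p`, uniformly in
the indices. -/
theorem unifMom_edge_error (t : ℝ) (ht : 0 ≤ t) {k : ℕ} (e : Fin k × Fin k) :
    UnifMom (fun i : GIdx k => gaussLaw k (i.1 + 1)) (fun i G =>
      (Real.sqrt (i.1 + 1 : ℕ) : ℝ) * (edgeIp t (i.1 + 1) i.2 G e - edgeLim t i.2 e)) := by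
  simp_rw [fun i : GIdx k => fun G => edgeIp_sub_edgeLim t ht (Nat.le_add_left 1 i.1) i.2 G e]
  have hev : ∀ (a : Fin k) (f : ∀ i : GIdx k, Fin (i.1 + 1)),
      ∀ i : GIdx k, MeasurePreserving (fun G : Fin k → Fin (i.1 + 1) → ℂ => G a (f i))
        (gaussLaw k (i.1 + 1)) stdCplxGaussian := fun a f i =>
    (measurePreserving_eval (fun _ : Fin (i.1 + 1) => stdCplxGaussian) (f i)).comp
      (measurePreserving_eval (fun _ : Fin k => Measure.pi fun _ : Fin (i.1 + 1) =>
        stdCplxGaussian) a)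
  refine UnifMom.add (UnifMom.mul (UnifMom.const (‖((Real.exp (-t / 2) *
      Real.sqrt (1 - Real.exp (-t)) : ℝ) : ℂ)‖₊) fun i => le_rfl) (UnifMom.add ?_ ?_))
    (UnifMom.mul (UnifMom.const (‖((1 - Real.exp (-t) : ℝ) : ℂ)‖₊) fun i => le_rfl) ?_)
  · exact UnifMom.of_mp allMom_stdCplx _ (hev e.2 fun i => i.2 e.1)
  · exact UnifMom.of_mp allMom_stdCplx.star _ (hev e.1 fun i => i.2 e.2)
  · exact unifMom_normalized_sum _ (allMom_colProd e) (integral_colProd e)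

/-! ### Averaging over the indices -/

/-- Conditioning on the indices. -/
theorem integral_wordLaw {k N : ℕ} (hN : 1 ≤ N) (F : (Fin k → Sample N) → ℂ)
    (hF : Integrable F (wordLaw k N)) :
    ∫ x, F x ∂(wordLaw k N) = ((N : ℂ) ^ k)⁻¹ *
      ∑ X : Fin k → Fin N, ∫ G, F (fun a => (X a, G a)) ∂(gaussLaw k N) := by
  have := isProbabilityMeasure_uniformFin hN
  set e := MeasurableEquiv.arrowProdEquivProdArrow (Fin N) (Fin N → ℂ) (Fin k)
  have he : MeasurePreserving e (wordLaw k N)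
      ((Measure.pi fun _ : Fin k => uniformFin N).prod (gaussLaw k N)) :=
    measurePreserving_arrowProdEquivProdArrow (Fin N) (Fin N → ℂ) (Fin k)
      (fun _ => uniformFin N) (fun _ => Measure.pi fun _ : Fin N => stdCplxGaussian)
  have hFe : ∀ x, F x = F (e.symm (e x)) := fun x => by simp
  have hi : Integrable (fun z => F (e.symm z))
      ((Measure.pi fun _ : Fin k => uniformFin N).prod (gaussLaw k N)) := by
    rw [← he.integrable_comp_emb e.measurableEmbedding]
    simpa [Function.comp_def] using hF
  rw [integral_congr_ae (ae_of_all _ hFe),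
    he.integral_comp e.measurableEmbedding (fun z => F (e.symm z)), integral_prod _ hi,
    integral_fintype .of_finite, Finset.mul_sum]
  refine Finset.sum_congr rfl fun X _ => ?_
  have hX : (Measure.pi fun _ : Fin k => uniformFin N).real {X} = ((N : ℝ) ^ k)⁻¹ := by
    rw [Measure.real, Measure.pi_singleton]
    simp [uniformFin_singleton]
  rw [hX, Complex.real_smul]
  push_cast
  rfl

/-- The maps `X` constant on the fibers of a retraction `r` are determined by their values on its
image. -/
theorem card_comp_eq_self {k N : ℕ} (r : Fin k → Fin k) (hr : ∀ x, r (r x) = r x) :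
    (Finset.univ.filter fun X : Fin k → Fin N => ∀ x, X (r x) = X x).card =
      N ^ (Finset.univ.image r).card := by
  classical
  have e : {X : Fin k → Fin N // ∀ x, X (r x) = X x} ≃ ({j // j ∈ Finset.univ.image r} → Fin N) :=
    { toFun := fun X j => X.1 j.1
      invFun := fun Y => ⟨fun x => Y ⟨r x, Finset.mem_image_of_mem r (Finset.mem_univ x)⟩, fun x => by
        simp only [hr]⟩
      left_inv := fun X => Subtype.ext (funext fun x => X.2 x)
      right_inv := fun Y => by
        funext ⟨j, hj⟩
        obtain ⟨i, -, rfl⟩ := Finset.mem_image.mp hj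
        simp only [hr] }
  rw [← Fintype.card_subtype, Fintype.card_congr e, Fintype.card_fun, Fintype.card_fin,
    Fintype.card_coe]

/-- Every assignment of indices is constant along the fibers of an idempotent map whose range has
one point for each value taken on `T` and one for each point outside `T`. -/
theorem exists_representatives {k : ℕ} {κ : Type*} [DecidableEq κ] (T : Finset (Fin k))
    (X : Fin k → κ) : ∃ r : Fin k → Fin k, (∀ x, r (r x) = r x) ∧ (∀ x, X (r x) = X x) ∧
      (Finset.univ.image r).card + T.card = (T.image X).card + k := by
  classical
  rcases T.eq_empty_or_nonempty with rfl | ⟨y₀, hy₀⟩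
  · refine ⟨id, fun _ => rfl, fun _ => rfl, ?_⟩
    simp
  have h : ∀ v, ∃ y ∈ T, v ∈ T.image X → X y = v := fun v => by
    by_cases hv : v ∈ T.image X
    · obtain ⟨y, hy, h⟩ := Finset.mem_image.mp hv
      exact ⟨y, hy, fun _ => h⟩
    · exact ⟨y₀, hy₀, fun h => absurd h hv⟩
  choose g hgT hgX using h
  set r : Fin k → Fin k := fun x => if x ∈ T then g (X x) else x with hr
  have h1 : ∀ x ∈ T, r x = g (X x) := fun x hx => by simp [hr, hx]
  have h2 : ∀ x ∉ T, r x = x := fun x hx => by simp [hr, hx]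
  have hrX : ∀ x, X (r x) = X x := fun x => by
    by_cases hx : x ∈ T
    · rw [h1 x hx, hgX _ (Finset.mem_image_of_mem X hx)]
    · rw [h2 x hx]
  refine ⟨r, fun x => ?_, hrX, ?_⟩
  · by_cases hx : x ∈ T
    · have hxT : r x ∈ T := by rw [h1 x hx]; exact hgT _
      rw [h1 _ hxT, hrX, h1 x hx]
    · rw [h2 x hx, h2 x hx]
  · have himg : Finset.univ.image r = (T.image X).image g ∪ Tᶜ := by
      ext y
      simp only [Finset.mem_image, Finset.mem_univ, true_and, Finset.mem_union, Finset.mem_compl]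
      constructor
      · rintro ⟨x, rfl⟩
        by_cases hx : x ∈ T
        · exact Or.inl ⟨X x, ⟨x, hx, rfl⟩, (h1 x hx).symm⟩
        · exact Or.inr (by rwa [h2 x hx])
      · rintro (⟨v, ⟨x, hx, rfl⟩, rfl⟩ | hy)
        · exact ⟨x, h1 x hx⟩
        · exact ⟨y, h2 y hy⟩
    have hdis : Disjoint ((T.image X).image g) Tᶜ := by
      rw [Finset.disjoint_left]
      intro y hy
      obtain ⟨v, hv, rfl⟩ := Finset.mem_image.mp hy
      simpa using hgT v
    have hinj : Set.InjOn g (T.image X : Finset κ) := fun v hv w hw hvw => by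
      rw [← hgX v hv, ← hgX w hw, hvw]
    rw [himg, Finset.card_union_of_disjoint hdis, Finset.card_image_of_injOn hinj,
      Finset.card_compl, Fintype.card_fin]
    have := T.card_le_univ
    rw [Fintype.card_fin] at this
    omega

/-- The assignments of indices, weighted by `N` to the power minus the number of values taken on
`T`, contribute as many powers of `N` as there are points outside `T`. -/
theorem sum_inv_pow_card_image_le {k N : ℕ} (hN : 1 ≤ N) (T : Finset (Fin k)) :
    ∑ X : Fin k → Fin N, (N : ℝ) ^ T.card * ((N : ℝ) ^ (T.image X).card)⁻¹ ≤
      (k : ℝ) ^ k * (N : ℝ) ^ k := by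
  classical
  have hNpos : (0 : ℝ) < N := by exact_mod_cast hN
  let R : Finset (Fin k → Fin k) := Finset.univ.filter fun r => ∀ x, r (r x) = r x
  calc ∑ X : Fin k → Fin N, (N : ℝ) ^ T.card * ((N : ℝ) ^ (T.image X).card)⁻¹
      ≤ ∑ X : Fin k → Fin N, ∑ r ∈ R, if ∀ x, X (r x) = X x then
          (N : ℝ) ^ k * ((N : ℝ) ^ (Finset.univ.image r).card)⁻¹ else 0 := by
        refine Finset.sum_le_sum fun X _ => ?_
        obtain ⟨r, hr, hrX, hcard⟩ := exists_representatives T X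
        have hle := Finset.single_le_sum (s := R) (f := fun r => if ∀ x, X (r x) = X x then
          (N : ℝ) ^ k * ((N : ℝ) ^ (Finset.univ.image r).card)⁻¹ else 0)
          (fun r _ => by positivity) (Finset.mem_filter.mpr ⟨Finset.mem_univ r, hr⟩)
        refine le_trans (le_of_eq ?_) hle
        simp only [hrX, implies_true, if_true]
        rw [← div_eq_mul_inv, ← div_eq_mul_inv, div_eq_div_iff (by positivity) (by positivity),
          ← pow_add, ← pow_add]
        congr 1
        omega
    _ = ∑ r ∈ R, (N : ℝ) ^ k := by
        rw [Finset.sum_comm]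
        refine Finset.sum_congr rfl fun r hr => ?_
        rw [← Finset.sum_filter, Finset.sum_const, card_comp_eq_self r (Finset.mem_filter.mp hr).2,
          nsmul_eq_mul]
        push_cast
        field_simp
    _ ≤ (k : ℝ) ^ k * (N : ℝ) ^ k := by
        rw [Finset.sum_const, nsmul_eq_mul]
        gcongr
        have := Finset.card_le_univ R
        rw [Fintype.card_fun, Fintype.card_fin] at this
        exact_mod_cast this

/-- The index assignments constant on `T` are a proportion `N^{1 - |T|}` of all assignments. -/
theorem card_constant {k N : ℕ} (T : Finset (Fin k)) (hT : T.Nonempty) :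
    (Finset.univ.filter fun X : Fin k → Fin N => (T.image X).card = 1).card * N ^ T.card =
      N ^ k * N := by
  classical
  obtain ⟨a, ha⟩ := hT
  have h2 : ∀ x, (fun x => if x ∈ T then a else x) ((fun x => if x ∈ T then a else x) x) =
      (fun x => if x ∈ T then a else x) x := fun x => by
    by_cases hx : x ∈ T <;> simp [hx, ha]
  have h := card_comp_eq_self (N := N) (fun x => if x ∈ T then a else x) h2
  have hf : (Finset.univ.filter fun X : Fin k → Fin N => (T.image X).card = 1) =
      Finset.univ.filter fun X : Fin k → Fin N => ∀ x, X ((fun x => if x ∈ T then a else x) x) = X x := by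
    ext X
    simp only [Finset.mem_filter, Finset.mem_univ, true_and, Finset.card_eq_one]
    constructor
    · rintro ⟨v, hv⟩ x
      have hv' : ∀ y ∈ T, X y = v := fun y hy => by
        have := Finset.mem_image_of_mem X hy
        rw [hv] at this
        simpa using this
      by_cases hx : x ∈ T
      · simp [hx, hv' x hx, hv' a ha]
      · simp [hx]
    · intro hX
      refine ⟨X a, Finset.eq_singleton_iff_unique_mem.mpr ⟨Finset.mem_image_of_mem X ha, ?_⟩⟩
      intro v hv
      obtain ⟨y, hy, rfl⟩ := Finset.mem_image.mp hv
      simpa [hy] using (hX y).symm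
  have himg : Finset.univ.image (fun x => if x ∈ T then a else x) = insert a Tᶜ := by
    ext y
    simp only [Finset.mem_image, Finset.mem_univ, true_and, Finset.mem_insert, Finset.mem_compl]
    constructor
    · rintro ⟨x, rfl⟩
      by_cases hx : x ∈ T <;> simp [hx]
    · rintro (rfl | hy)
      · exact ⟨y, by simp [ha]⟩
      · exact ⟨y, by simp [hy]⟩
  rw [hf, h, himg, Finset.card_insert_of_notMem (by simpa using ha), Finset.card_compl,
    Fintype.card_fin, ← pow_add, ← pow_succ]
  congr 1
  have := T.card_le_univ
  rw [Fintype.card_fin] at this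
  omega

theorem norm_edgeLim_le (t : ℝ) (ht : 0 ≤ t) {N k : ℕ} (X : Fin k → Fin N) (e : Fin k × Fin k) :
    ‖edgeLim t X e‖ ≤ 1 := by
  unfold edgeLim
  split_ifs
  · simp
  · rw [Complex.norm_real, Real.norm_of_nonneg (Real.exp_nonneg _)]
    exact Real.exp_le_one_iff.mpr (by linarith)
  · simp

theorem one_le_sqrt_succ (n : ℕ) : 1 ≤ Real.sqrt (n + 1 : ℕ) := by
  rw [Real.one_le_sqrt]; push_cast; linarith [(Nat.cast_nonneg n : (0 : ℝ) ≤ n)]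

theorem unifMom_edgeIp (t : ℝ) (ht : 0 ≤ t) {k : ℕ} (e : Fin k × Fin k) :
    UnifMom (fun i : GIdx k => gaussLaw k (i.1 + 1)) (fun i G => edgeIp t (i.1 + 1) i.2 G e) := by
  have h1 := unifMom_edge_error t ht e
  have h2 : UnifMom (fun i : GIdx k => gaussLaw k (i.1 + 1)) (fun i G =>
      (((Real.sqrt (i.1 + 1 : ℕ))⁻¹ : ℝ) : ℂ) * ((Real.sqrt (i.1 + 1 : ℕ) : ℝ) *
        (edgeIp t (i.1 + 1) i.2 G e - edgeLim t i.2 e))) := by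
    refine UnifMom.mul (UnifMom.const 1 fun i => ?_) h1
    rw [Complex.norm_real, Real.norm_of_nonneg (by positivity)]
    exact inv_le_one_of_one_le₀ (one_le_sqrt_succ _)
  have h3 := h2.add (UnifMom.const (μ := fun i : GIdx k => gaussLaw k (i.1 + 1))
    (c := fun i => edgeLim t i.2 e) 1 fun i => norm_edgeLim_le t ht i.2 e)
  convert! h3 using 3 with i G
  have hs : ((Real.sqrt (i.1 + 1 : ℕ) : ℝ) : ℂ) ≠ 0 := by
    exact_mod_cast (zero_lt_one.trans_le (one_le_sqrt_succ i.1)).ne'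
  rw [Complex.ofReal_inv, inv_mul_cancel_left₀ hs, sub_add_cancel]

/-- The product of the inner products along a list of edges is within `O(N^{-1/2})` of the product
of their limits. -/
theorem unifMom_prod_error (t : ℝ) (ht : 0 ≤ t) {k : ℕ} (E : List (Fin k × Fin k)) :
    UnifMom (fun i : GIdx k => gaussLaw k (i.1 + 1)) (fun i G =>
      (Real.sqrt (i.1 + 1 : ℕ) : ℝ) * ((E.map fun e => edgeIp t (i.1 + 1) i.2 G e).prod -
        (E.map fun e => edgeLim t i.2 e).prod)) := by
  induction E with
  | nil =>
    have h0 : UnifMom (fun i : GIdx k => gaussLaw k (i.1 + 1)) (fun i G => (0 : ℂ)) :=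
      UnifMom.const (μ := fun i : GIdx k => gaussLaw k (i.1 + 1)) (c := fun _ => (0 : ℂ)) 0 (by simp)
    simpa using h0
  | cons e E ih =>
    have h1 := (unifMom_edge_error t ht e).mul
      (UnifMom.listProd (μ := fun i : GIdx k => gaussLaw k (i.1 + 1)) E
        (F := fun e i G => edgeIp t (i.1 + 1) i.2 G e) fun e _ => unifMom_edgeIp t ht e)
    have h2 := (UnifMom.const (μ := fun i : GIdx k => gaussLaw k (i.1 + 1))
      (c := fun i => edgeLim t i.2 e) 1 fun i => norm_edgeLim_le t ht i.2 e).mul ih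
    convert! h1.add h2 using 3 with i G
    simp only [List.map_cons, List.prod_cons]
    ring

/-- Every change of index along an edge costs a factor `N^{-1/2}`. -/
theorem unifMom_prod_scaled (t : ℝ) (ht : 0 ≤ t) {k : ℕ} (E : List (Fin k × Fin k)) :
    UnifMom (fun i : GIdx k => gaussLaw k (i.1 + 1)) (fun i G =>
      ((Real.sqrt (i.1 + 1 : ℕ) : ℝ) : ℂ) ^ E.countP (fun e => i.2 e.1 ≠ i.2 e.2) *
        (E.map fun e => edgeIp t (i.1 + 1) i.2 G e).prod) := by
  have hZ : ∀ e ∈ E, UnifMom (fun i : GIdx k => gaussLaw k (i.1 + 1)) (fun i G =>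
      (if i.2 e.1 ≠ i.2 e.2 then ((Real.sqrt (i.1 + 1 : ℕ) : ℝ) : ℂ) else 1) *
        edgeIp t (i.1 + 1) i.2 G e) := by
    intro e _
    refine UnifMom.mono ((unifMom_edge_error t ht e).ofReal_norm.add
      (unifMom_edgeIp t ht e).ofReal_norm) (fun i => ?_) (fun i G => ?_)
    · exact ((unifMom_edgeIp t ht e).meas i).const_mul _
    · rw [← Complex.ofReal_add, Complex.norm_real, Real.norm_of_nonneg (by positivity)]
      split_ifs with h
      · have h0 : edgeLim t i.2 e = 0 := by
          have : e.1 ≠ e.2 := fun h' => h (by rw [h'])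
          simp [edgeLim, this, h]
        rw [h0, sub_zero]
        linarith [norm_nonneg (edgeIp t (i.1 + 1) i.2 G e)]
      · rw [one_mul]
        linarith [norm_nonneg ((Real.sqrt (i.1 + 1 : ℕ) : ℝ) *
          (edgeIp t (i.1 + 1) i.2 G e - edgeLim t i.2 e))]
  have h := UnifMom.listProd E hZ
  convert! h using 3 with i G
  rw [List.prod_map_mul]
  congr 1
  clear hZ h
  induction E with
  | nil => simp
  | cons e E ih =>
    rw [List.countP_cons, List.map_cons, List.prod_cons, ← ih, pow_add, mul_comm]
    congr 1
    by_cases h : i.2 e.1 = i.2 e.2 <;> simp [h]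

/-! ### Limit of indecomposable words -/

/-- When every edge joins equal indices, each edge between distinct letters contributes `e^{-t}`, up
to a total error `O(N^{-1/2})`. -/
theorem integral_prod_edgeIp_const (t : ℝ) (ht : 0 ≤ t) {k : ℕ} (E : List (Fin k × Fin k)) :
    ∃ C : ℝ, 0 ≤ C ∧ ∀ N : ℕ, 1 ≤ N → ∀ X : Fin k → Fin N, (∀ e ∈ E, X e.1 = X e.2) →
      ‖(∫ G, (E.map fun e => edgeIp t N X G e).prod ∂(gaussLaw k N)) -
        ((Real.exp (-t) : ℝ) : ℂ) ^ E.countP (fun e => e.1 ≠ e.2)‖ ≤ C * (Real.sqrt N)⁻¹ := by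
  obtain ⟨C, hC, h⟩ := (unifMom_prod_error t ht E).integral_bound
  refine ⟨C, hC, fun N hN X hX => ?_⟩
  obtain ⟨n, rfl⟩ : ∃ n, N = n + 1 := ⟨N - 1, by omega⟩
  have h1 := h ⟨n, X⟩
  have hs : 0 < Real.sqrt (n + 1 : ℕ) := zero_lt_one.trans_le (one_le_sqrt_succ n)
  have hlim : (E.map fun e => edgeLim t X e).prod =
      ((Real.exp (-t) : ℝ) : ℂ) ^ E.countP (fun e => e.1 ≠ e.2) := by
    clear h1 h
    induction E with
    | nil => simp
    | cons e E ih =>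
      rw [List.map_cons, List.prod_cons, ih fun e he => hX e (List.mem_cons_of_mem _ he),
        List.countP_cons, pow_add, mul_comm]
      congr 1
      have := hX e List.mem_cons_self
      by_cases h : e.1 = e.2 <;> simp [edgeLim, h, this]
  have hprod : UnifMom (fun i : GIdx k => gaussLaw k (i.1 + 1))
      (fun i G => (E.map fun e => edgeIp t (i.1 + 1) i.2 G e).prod) :=
    UnifMom.listProd (μ := fun i : GIdx k => gaussLaw k (i.1 + 1)) E
      (F := fun e i G => edgeIp t (i.1 + 1) i.2 G e) fun e _ => unifMom_edgeIp t ht e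
  have hint : Integrable (fun G => (E.map fun e => edgeIp t (n + 1) X G e).prod)
      (gaussLaw k (n + 1)) := hprod.integrable ⟨n, X⟩
  dsimp only at h1
  rw [integral_const_mul, integral_sub hint (integrable_const _), integral_const, probReal_univ,
    one_smul, hlim, norm_mul, Complex.norm_real, Real.norm_of_nonneg hs.le] at h1
  rw [← div_eq_mul_inv, le_div_iff₀ hs, mul_comm]
  exact h1

/-- Index assignments with `c ≥ 2` values on an indecomposable word contribute `O(N^{-c})`: the index
changes at least `2c` times along the cycle, and every change costs a factor `N^{-1/2}`. -/
theorem norm_integral_prod_edgeIp_le (t : ℝ) (ht : 0 ≤ t) {k : ℕ} (L : List (Fin k))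
    (hL : Indecomp L) :
    ∃ C : ℝ, 0 ≤ C ∧ ∀ N : ℕ, 1 ≤ N → ∀ X : Fin k → Fin N, 2 ≤ (L.toFinset.image X).card →
      ‖∫ G, ((cycEdges L).map fun e => edgeIp t N X G e).prod ∂(gaussLaw k N)‖ ≤
        C * ((N : ℝ) ^ (L.toFinset.image X).card)⁻¹ := by
  obtain ⟨C, hC, h⟩ := (unifMom_prod_scaled t ht (cycEdges L)).integral_bound
  refine ⟨C, hC, fun N hN X hX => ?_⟩
  obtain ⟨n, rfl⟩ : ∃ n, N = n + 1 := ⟨N - 1, by omega⟩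
  have h1 := h ⟨n, X⟩
  have hs1 := one_le_sqrt_succ n
  have himg : (L.map X).toFinset = L.toFinset.image X := by ext; simp
  have h2 := two_mul_card_le_changes X L hL (by rwa [himg])
  rw [himg] at h2
  dsimp only at h1
  rw [integral_const_mul, norm_mul, norm_pow, Complex.norm_real,
    Real.norm_of_nonneg (Real.sqrt_nonneg _)] at h1
  have h3 : (((n + 1 : ℕ) : ℝ)) ^ (L.toFinset.image X).card ≤
      Real.sqrt (n + 1 : ℕ) ^ (cycEdges L).countP (fun e => X e.1 ≠ X e.2) := by
    calc (((n + 1 : ℕ) : ℝ)) ^ (L.toFinset.image X).card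
        = Real.sqrt (n + 1 : ℕ) ^ (2 * (L.toFinset.image X).card) := by
          rw [pow_mul, Real.sq_sqrt (Nat.cast_nonneg _)]
      _ ≤ _ := pow_le_pow_right₀ hs1 h2
  rw [← div_eq_mul_inv, le_div_iff₀ (by positivity), mul_comm]
  exact (mul_le_mul_of_nonneg_right h3 (norm_nonneg _)).trans h1

theorem wordMean_eq_sum (t : ℝ) {N : ℕ} (hN : 1 ≤ N) {k : ℕ} (L : List (Fin k)) (hL : L ≠ []) :
    wordMean t N L = ∑ X : Fin k → Fin N,
      (N : ℂ) ^ L.toFinset.card * (N : ℂ)⁻¹ * ((N : ℂ) ^ k)⁻¹ *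
        ∫ G, ((cycEdges L).map fun e => edgeIp t N X G e).prod ∂(gaussLaw k N) := by
  have := isProbabilityMeasure_wordLaw k hN
  have hint : Integrable (fun x => (wordMat t N x L).trace) (wordLaw k N) := by
    simp only [Matrix.trace, Matrix.diag]
    exact integrable_finsetSum _ fun p _ => (allMom_wordMat t hN L p p).integrable
  rw [wordMean, integral_wordLaw hN _ hint, Finset.mul_sum, Finset.mul_sum]
  refine Finset.sum_congr rfl fun X _ => ?_
  simp only [trace_wordMat t hN _ L hL, edgeIp]
  ring

/-- In the limit only the assignments giving the same index to all letters matter: their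
number, normalized, is `N`, while by indecomposability all other assignments together contribute
`O(1)`. -/
theorem tendsto_wordMean_indecomp (t : ℝ) (ht : 0 ≤ t) {k : ℕ} (L : List (Fin k)) (hL : L ≠ [])
    (hI : Indecomp L) : Tendsto (fun N => wordMean t N L) atTop
      (𝓝 (((Real.exp (-t) : ℝ) : ℂ) ^ (cycEdges L).countP (fun e => e.1 ≠ e.2))) := by
  classical
  obtain ⟨C1, hC1, h1⟩ := integral_prod_edgeIp_const t ht (cycEdges L)
  obtain ⟨C2, hC2, h2⟩ := norm_integral_prod_edgeIp_le t ht L hI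
  set w : ℂ := ((Real.exp (-t) : ℝ) : ℂ) ^ (cycEdges L).countP (fun e => e.1 ≠ e.2) with hw
  set T := L.toFinset with hT
  have hTne : T.Nonempty := by rw [hT, List.toFinset_nonempty_iff]; exact hL
  have hbound : ∀ N : ℕ, 1 ≤ N → ‖wordMean t N L - w‖ ≤
      C1 * (Real.sqrt N)⁻¹ + C2 * (k : ℝ) ^ k * (N : ℝ)⁻¹ := by
    intro N hN
    have hN0 : (0 : ℝ) < N := by exact_mod_cast hN
    set W : ℝ := (N : ℝ) ^ T.card * (N : ℝ)⁻¹ * ((N : ℝ) ^ k)⁻¹ with hW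
    have hWpos : 0 ≤ W := by positivity
    set J : (Fin k → Fin N) → ℂ := fun X =>
      ∫ G, ((cycEdges L).map fun e => edgeIp t N X G e).prod ∂(gaussLaw k N) with hJ
    have hcount : ∑ X : Fin k → Fin N, (if (T.image X).card = 1 then W else 0) = 1 := by
      rw [← Finset.sum_filter, Finset.sum_const, nsmul_eq_mul]
      have := card_constant (N := N) T hTne
      have h' : ((Finset.univ.filter fun X : Fin k → Fin N => (T.image X).card = 1).card : ℝ) *
        (N : ℝ) ^ T.card = (N : ℝ) ^ k * N := by exact_mod_cast this
      rw [hW, ← mul_assoc, ← mul_assoc, h']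
      field_simp
    have hwsum : w = ∑ X : Fin k → Fin N,
        (W : ℂ) * (if (T.image X).card = 1 then w else 0) := by
      have : ∀ X : Fin k → Fin N, (W : ℂ) * (if (T.image X).card = 1 then w else 0) =
          (((if (T.image X).card = 1 then W else 0 : ℝ)) : ℂ) * w := fun X => by
        split_ifs <;> simp
      simp only [this]
      rw [← Finset.sum_mul, ← Complex.ofReal_sum, hcount]
      simp
    have hms : wordMean t N L = ∑ X : Fin k → Fin N, (W : ℂ) * J X := by
      rw [wordMean_eq_sum t hN L hL]
      simp [hW, hJ, hT]
    have hterm : ∀ X : Fin k → Fin N, ‖J X - (if (T.image X).card = 1 then w else 0)‖ ≤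
        (if (T.image X).card = 1 then C1 * (Real.sqrt N)⁻¹ else 0) +
          C2 * ((N : ℝ) ^ (T.image X).card)⁻¹ := by
      intro X
      have hpos : 0 ≤ C2 * ((N : ℝ) ^ (T.image X).card)⁻¹ := by positivity
      by_cases hc : (T.image X).card = 1
      · simp only [hc, if_true] at hpos ⊢
        refine le_add_of_le_of_nonneg (h1 N hN X fun e he => ?_) hpos
        obtain ⟨v, hv⟩ := Finset.card_eq_one.mp hc
        have hmem : ∀ a ∈ L, X a = v := fun a ha => by
          have := Finset.mem_image_of_mem X (List.mem_toFinset.mpr ha)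
          rw [← hT, hv] at this
          simpa using this
        rw [hmem _ (mem_cycEdges L e he).1, hmem _ (mem_cycEdges L e he).2]
      · have h0 : 0 < (T.image X).card := (hTne.image X).card_pos
        simp only [hc, if_false, sub_zero, zero_add]
        exact h2 N hN X (by omega)
    calc ‖wordMean t N L - w‖
        = ‖∑ X : Fin k → Fin N, (W : ℂ) * (J X - (if (T.image X).card = 1 then w else 0))‖ := by
          simp only [mul_sub]
          rw [Finset.sum_sub_distrib, ← hms, ← hwsum]
      _ ≤ ∑ X : Fin k → Fin N, W * ((if (T.image X).card = 1 then C1 * (Real.sqrt N)⁻¹ else 0) +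
          C2 * ((N : ℝ) ^ (T.image X).card)⁻¹) := by
          refine (norm_sum_le _ _).trans (Finset.sum_le_sum fun X _ => ?_)
          rw [norm_mul, Complex.norm_real, Real.norm_of_nonneg hWpos]
          exact mul_le_mul_of_nonneg_left (hterm X) hWpos
      _ = (∑ X : Fin k → Fin N, (if (T.image X).card = 1 then W else 0)) * (C1 * (Real.sqrt N)⁻¹) +
          C2 * (N : ℝ)⁻¹ * ((N : ℝ) ^ k)⁻¹ *
            ∑ X : Fin k → Fin N, (N : ℝ) ^ T.card * ((N : ℝ) ^ (T.image X).card)⁻¹ := by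
          rw [Finset.sum_mul, Finset.mul_sum, ← Finset.sum_add_distrib]
          refine Finset.sum_congr rfl fun X _ => ?_
          rw [hW]
          split_ifs <;> ring
      _ ≤ C1 * (Real.sqrt N)⁻¹ + C2 * (N : ℝ)⁻¹ * ((N : ℝ) ^ k)⁻¹ * ((k : ℝ) ^ k * (N : ℝ) ^ k) := by
          rw [hcount, one_mul]
          gcongr
          exact sum_inv_pow_card_image_le hN T
      _ = C1 * (Real.sqrt N)⁻¹ + C2 * (k : ℝ) ^ k * (N : ℝ)⁻¹ := by
          field_simp
  rw [tendsto_iff_norm_sub_tendsto_zero]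
  have hlim : Tendsto (fun N : ℕ => C1 * (Real.sqrt N)⁻¹ + C2 * (k : ℝ) ^ k * (N : ℝ)⁻¹) atTop
      (𝓝 0) := by
    have ha : Tendsto (fun N : ℕ => (Real.sqrt N)⁻¹) atTop (𝓝 0) :=
      tendsto_inv_atTop_zero.comp (Real.tendsto_sqrt_atTop.comp tendsto_natCast_atTop_atTop)
    have hb : Tendsto (fun N : ℕ => (N : ℝ)⁻¹) atTop (𝓝 0) :=
      tendsto_inv_atTop_zero.comp tendsto_natCast_atTop_atTop
    simpa using (ha.const_mul C1).add (hb.const_mul (C2 * (k : ℝ) ^ k))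
  refine squeeze_zero' (Eventually.of_forall fun _ => norm_nonneg _) ?_ hlim
  filter_upwards [eventually_ge_atTop 1] with N hN using hbound N hN

/-! ### Noncrossing closure and removal of blocks -/

theorem le_ncPart {k : ℕ} (s : Setoid (Fin k)) : s ≤ ncPart s :=
  le_sInf fun _ hr => hr.1

theorem ncPart_le {k : ℕ} {s r : Setoid (Fin k)} (h : s ≤ r) (hr : NonCrossing r) :
    ncPart s ≤ r :=
  sInf_le ⟨h, hr⟩

theorem nonCrossing_ncPart {k : ℕ} (s : Setoid (Fin k)) : NonCrossing (ncPart s) :=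
  fun x y z w hxy hyz hzw hxz hyw r hr =>
    hr.2 x y z w hxy hyz hzw (hxz r hr) (hyw r hr)

theorem nextInClass_eq_of_lt {k : ℕ} (s : Setoid (Fin k)) {a z : Fin k} (haz : s.r a z)
    (hlt : a < z) (hmin : ∀ y, s.r a y → a < y → z ≤ y) : nextInClass s a = z := by
  classical
  have hne : (Finset.univ.filter fun x => s.r a x ∧ a < x).Nonempty :=
    ⟨z, by simp [haz, hlt]⟩
  rw [nextInClass, dif_pos (by convert! hne)]
  refine le_antisymm (Finset.min'_le _ _ (by simp [haz, hlt])) (Finset.le_min' _ _ _ fun y hy => ?_)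
  simp only [Finset.mem_filter, Finset.mem_univ, true_and] at hy
  exact hmin y hy.1 hy.2

theorem nextInClass_eq_of_last {k : ℕ} (s : Setoid (Fin k)) {a m : Fin k} (ham : s.r a m)
    (hlast : ∀ y, s.r a y → y ≤ a) (hmin : ∀ y, s.r a y → m ≤ y) : nextInClass s a = m := by
  classical
  have hne : ¬ (Finset.univ.filter fun x => s.r a x ∧ a < x).Nonempty := by
    rintro ⟨y, hy⟩
    simp only [Finset.mem_filter, Finset.mem_univ, true_and] at hy
    exact absurd hy.2 (not_lt.mpr (hlast y hy.1))
  rw [nextInClass, dif_neg (by convert! hne)]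
  refine le_antisymm (Finset.min'_le _ _ (by simp [ham])) (Finset.le_min' _ _ _ fun y hy => ?_)
  simp only [Finset.mem_filter, Finset.mem_univ, true_and] at hy
  exact hmin y hy

/-- Along the increasing enumeration of a class, closed up at its minimum `m`, the edges join each
point to its cyclic successor. The statement concerns a suffix `x :: l` of the enumeration, so as to
allow induction. -/
theorem pathEdges_nextInClass {k : ℕ} (s : Setoid (Fin k)) (m : Fin k) (l : List (Fin k)) :
    ∀ (p : List (Fin k)) (x : Fin k), (p ++ x :: l).Pairwise (· < ·) →
      (∀ a ∈ p ++ x :: l, ∀ y, s.r a y ↔ y ∈ p ++ x :: l) → m ∈ p ++ x :: l →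
      (∀ y ∈ p ++ x :: l, m ≤ y) →
      pathEdges x l m = (x :: l).map fun a => (a, nextInClass s a) := by
  induction l with
  | nil =>
    intro p x hp hcl hm hmin
    have hx : x ∈ p ++ [x] := by simp
    have hnext : nextInClass s x = m := by
      refine nextInClass_eq_of_last s ((hcl x hx m).mpr hm) (fun y hy => ?_)
        fun y hy => hmin y ((hcl x hx y).mp hy)
      have := (hcl x hx y).mp hy
      simp only [List.pairwise_append] at hp
      simp only [List.mem_append, List.mem_singleton] at this
      rcases this with h | rfl
      · exact (hp.2.2 y h x (by simp)).le
      · exact le_rfl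
    simp [pathEdges, hnext]
  | cons z l ih =>
    intro p x hp hcl hm hmin
    have hx : x ∈ p ++ x :: z :: l := by simp
    have hnext : nextInClass s x = z := by
      have hp' := hp
      simp only [List.pairwise_append, List.pairwise_cons, List.mem_cons] at hp'
      refine nextInClass_eq_of_lt s ((hcl x hx z).mpr (by simp)) (hp'.2.1.1 z (by simp))
        (fun y hy hlt => ?_)
      have := (hcl x hx y).mp hy
      simp only [List.mem_append, List.mem_cons] at this
      rcases this with h | rfl | rfl | h
      · exact absurd (hp'.2.2 y h x (by simp)) (not_lt.mpr hlt.le)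
      · exact absurd hlt (lt_irrefl _)
      · exact le_rfl
      · exact (hp'.2.1.2.1 y h).le
    have e : p ++ x :: z :: l = (p ++ [x]) ++ z :: l := by simp
    rw [e] at hp hcl hm hmin
    rw [pathEdges, ih (p ++ [x]) z hp hcl hm hmin]
    simp only [List.map_cons, hnext]

/-- The cyclic edges of a class of a partition, listed in increasing order, join every element to
its successor in the class. -/
theorem cycEdges_class {k : ℕ} (s : Setoid (Fin k)) (l : List (Fin k)) (hp : l.Pairwise (· < ·))
    (hcl : ∀ a ∈ l, ∀ y, s.r a y ↔ y ∈ l) :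
    cycEdges l = l.map fun a => (a, nextInClass s a) := by
  cases l with
  | nil => rfl
  | cons x l =>
    refine pathEdges_nextInClass s x l [] x hp hcl (by simp) fun y hy => ?_
    rcases List.mem_cons.mp hy with rfl | h
    · exact le_rfl
    · exact ((List.pairwise_cons.mp hp).1 y h).le

theorem pathEdges_map {ι κ : Type*} (f : ι → κ) (l : List ι) : ∀ x y,
    pathEdges (f x) (l.map f) (f y) = (pathEdges x l y).map fun e => (f e.1, f e.2) := by
  induction l with
  | nil => intro x y; rfl
  | cons z l ih => intro x y; simp [pathEdges, ih]

theorem cycEdges_map {ι κ : Type*} (f : ι → κ) (l : List ι) :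
    cycEdges (l.map f) = (cycEdges l).map fun e => (f e.1, f e.2) := by
  cases l with
  | nil => rfl
  | cons x l => exact pathEdges_map f l x x

theorem sort_union_of_lt {k : ℕ} (A B : Finset (Fin k)) (h : ∀ a ∈ A, ∀ b ∈ B, a < b) :
    (A ∪ B).sort = A.sort ++ B.sort := by
  have hp : (A.sort ++ B.sort).Pairwise (· < ·) := by
    rw [List.pairwise_append]
    exact ⟨A.sortedLT_sort.pairwise, B.sortedLT_sort.pairwise, fun a ha b hb =>
      h a (by simpa using ha) b (by simpa using hb)⟩
  have hnd : (A.sort ++ B.sort).Nodup := hp.imp fun h => h.ne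
  have hs := (List.toFinset_sort (· ≤ ·) hnd).mpr (hp.imp fun h => h.le)
  rw [← hs]
  congr 1
  ext; simp

/-- A block of the smallest noncrossing partition above the partition into the fibers of `b` gives
an indecomposable word: a decomposition could be used to refine the noncrossing partition. -/
theorem indecomp_class {k : ℕ} {κ : Type*} (b : Fin k → κ) (l : List (Fin k))
    (hp : l.Pairwise (· < ·)) (hcl : ∀ a ∈ l, ∀ y, (ncPart (Setoid.ker b)).r a y ↔ y ∈ l) :
    Indecomp (l.map b) := by
  intro l1 l2 l3 hL h2 h13
  by_contra hno
  push Not at hno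
  obtain ⟨A12, A3, rfl, hA12, rfl⟩ := List.map_eq_append_iff.mp hL
  obtain ⟨A1, A2, rfl, rfl, rfl⟩ := List.map_eq_append_iff.mp hA12
  set ν := ncPart (Setoid.ker b) with hν
  have hmem : ∀ y, y ∈ A1 ++ A2 ++ A3 ↔ y ∈ A1 ∨ y ∈ A2 ∨ y ∈ A3 := fun y => by simp
  have hpw := hp
  simp only [List.pairwise_append] at hpw
  -- the elements of the middle factor are convex within the class
  have hconv : ∀ x y z, x ∈ A2 → z ∈ A2 → x < y → y < z → y ∈ A1 ++ A2 ++ A3 → y ∈ A2 := by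
    intro x y z hx hz hxy hyz hy
    rcases (hmem y).mp hy with h | h | h
    · exact absurd (hpw.1.2.2 y h x hx) (not_lt.mpr hxy.le)
    · exact h
    · exact absurd (hpw.2.2 z (List.mem_append_right _ hz) y h) (not_lt.mpr hyz.le)
  let r : Setoid (Fin k) :=
    { r := fun x y => ν.r x y ∧ (x ∈ A2 ↔ y ∈ A2)
      iseqv :=
        { refl := fun x => ⟨ν.refl x, Iff.rfl⟩
          symm := fun h => ⟨ν.symm h.1, h.2.symm⟩
          trans := fun h h' => ⟨ν.trans h.1 h'.1, h.2.trans h'.2⟩ } }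
  have hker1 : ∀ x y, b x = b y → x ∈ A2 → y ∈ A2 := by
    intro x y hxy hx
    have hνxy : ν.r x y := le_ncPart (Setoid.ker b) hxy
    have hy := (hcl x ((hmem x).mpr (Or.inr (Or.inl hx))) y).mp hνxy
    have hbx := hno (b x) (List.mem_map_of_mem hx)
    rw [hxy, List.mem_append, not_or] at hbx
    rcases (hmem y).mp hy with h | h | h
    · exact absurd (List.mem_map_of_mem h) hbx.1
    · exact h
    · exact absurd (List.mem_map_of_mem h) hbx.2
  have hker : Setoid.ker b ≤ r := fun {x y} hxy =>
    ⟨le_ncPart (Setoid.ker b) hxy, hker1 x y hxy, hker1 y x (Eq.symm hxy)⟩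
  have hnc : NonCrossing r := by
    intro x y z w hxy hyz hzw hxz hyw
    have hν' : ν.r x y := nonCrossing_ncPart _ x y z w hxy hyz hzw hxz.1 hyw.1
    refine ⟨hν', fun hx => ?_, fun hy => ?_⟩
    · exact hconv x y z hx (hxz.2.mp hx) hxy hyz
        ((hcl x ((hmem x).mpr (Or.inr (Or.inl hx))) y).mp hν')
    · refine hxz.2.mpr (hconv y z w hy (hyw.2.mp hy) hyz hzw ?_)
      exact (hcl y ((hmem y).mpr (Or.inr (Or.inl hy))) z).mp (ν.trans (ν.symm hν') hxz.1)
  obtain ⟨a, ha⟩ := List.exists_mem_of_ne_nil A2 (by simpa using h2)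
  obtain ⟨c, hc⟩ := List.exists_mem_of_ne_nil (A1 ++ A3) (by simpa using h13)
  have hc' : c ∈ A1 ++ A2 ++ A3 := by
    rw [hmem]; rcases List.mem_append.mp hc with h | h <;> tauto
  have hνac : ν.r a c := (hcl a ((hmem a).mpr (Or.inr (Or.inl ha))) c).mpr hc'
  have hrac : r.r a c := ncPart_le hker hnc hνac
  have hc2 : c ∈ A2 := hrac.2.mp ha
  rcases List.mem_append.mp hc with h | h
  · exact lt_irrefl c (hpw.1.2.2 c h c hc2)
  · exact lt_irrefl c (hpw.2.2 c (List.mem_append_right _ hc2) c h)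

/-- The number of changes of letter between elements of `S` and their successors in the blocks of
the smallest noncrossing partition above the fibers of `b`. -/
def changes {k : ℕ} (b : Fin k → Fin k) (S : Finset (Fin k)) : ℕ :=
  (S.filter fun a => b a ≠ b (nextInClass (ncPart (Setoid.ker b)) a)).card

/-- The blocks of a noncrossing partition can be removed one at a time, each being an interval of
what is left: the block with the largest minimum is one. -/
theorem tendsto_wordMean (t : ℝ) (ht : 0 ≤ t) {k : ℕ} (b : Fin k → Fin k) (S : Finset (Fin k))
    (hS : ∀ x ∈ S, ∀ y, (ncPart (Setoid.ker b)).r x y → y ∈ S) :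
    Tendsto (fun N => wordMean t N (S.sort.map b)) atTop
      (𝓝 (((Real.exp (-t) : ℝ) : ℂ) ^ changes b S)) := by
  classical
  induction hn : S.card using Nat.strong_induction_on generalizing S with
  | _ n ih =>
  rcases S.eq_empty_or_nonempty with rfl | hne
  · refine tendsto_const_nhds.congr' ?_
    filter_upwards [eventually_ge_atTop 1] with N hN
    simp [changes, wordMean_nil t hN]
  set ν := ncPart (Setoid.ker b) with hν
  have hnc : NonCrossing ν := nonCrossing_ncPart _
  set mins := S.filter fun m => ∀ y, ν.r y m → m ≤ y with hmins
  have hminsne : mins.Nonempty := by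
    refine ⟨S.min' hne, Finset.mem_filter.mpr ⟨S.min'_mem hne, fun y hy => ?_⟩⟩
    exact S.min'_le y (hS _ (S.min'_mem hne) y (ν.symm hy))
  set m := mins.max' hminsne with hm
  have hmS : m ∈ S ∧ ∀ y, ν.r y m → m ≤ y := Finset.mem_filter.mp (mins.max'_mem hminsne)
  set C := S.filter fun y => ν.r m y with hC
  have hmemC : ∀ y, y ∈ C ↔ ν.r m y := fun y => by
    rw [hC, Finset.mem_filter]
    exact ⟨fun h => h.2, fun h => ⟨hS m hmS.1 y h, h⟩⟩
  -- every element of `S` lying between two elements of the block `C` is in `C`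
  have hconv : ∀ y ∈ S, ∀ z ∈ C, m < y → y < z → y ∈ C := by
    intro y hy z hz hmy hyz
    have hcls : (S.filter fun x => ν.r y x).Nonempty := ⟨y, Finset.mem_filter.mpr ⟨hy, ν.refl y⟩⟩
    set q := (S.filter fun x => ν.r y x).min' hcls with hq
    have hqS : q ∈ S ∧ ν.r y q := Finset.mem_filter.mp (Finset.min'_mem _ hcls)
    have hqmin : q ∈ mins := Finset.mem_filter.mpr ⟨hqS.1, fun x hx => Finset.min'_le _ _
      (Finset.mem_filter.mpr ⟨hS q hqS.1 x (ν.symm hx), ν.trans hqS.2 (ν.symm hx)⟩)⟩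
    have hqm : q ≤ m := Finset.le_max' _ _ hqmin
    rw [hmemC]
    rcases hqm.lt_or_eq with hlt | heq
    · have := hnc q m y z hlt hmy hyz (ν.symm hqS.2) ((hmemC z).mp hz)
      exact ν.trans (ν.symm this) (ν.symm hqS.2)
    · rw [← heq]; exact ν.symm hqS.2
  set A := S.filter fun y => y < m with hA
  set B := S.filter fun y => m < y ∧ y ∉ C with hB
  have hAC : ∀ a ∈ A, ∀ c ∈ C, a < c := fun a ha c hc =>
    (Finset.mem_filter.mp ha).2.trans_le (hmS.2 c (ν.symm ((hmemC c).mp hc)))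
  have hCB : ∀ c ∈ C, ∀ y ∈ B, c < y := fun c hc y hy => by
    obtain ⟨hyS, hmy, hyC⟩ := Finset.mem_filter.mp hy
    by_contra hle
    rcases (not_lt.mp hle).lt_or_eq with hlt | heq
    · exact hyC (hconv y hyS c hc hmy hlt)
    · exact hyC (heq ▸ hc)
  have hAB : ∀ a ∈ A, ∀ y ∈ B, a < y := fun a ha y hy =>
    (Finset.mem_filter.mp ha).2.trans (Finset.mem_filter.mp hy).2.1
  have hmC : m ∈ C := (hmemC m).mpr (ν.refl m)
  have hdiff : S \ C = A ∪ B := by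
    ext y
    simp only [hA, hB, Finset.mem_sdiff, Finset.mem_union, Finset.mem_filter]
    constructor
    · rintro ⟨hy, hyC⟩
      rcases lt_trichotomy y m with h | h | h
      · exact Or.inl ⟨hy, h⟩
      · exact absurd (h ▸ hmC) hyC
      · exact Or.inr ⟨hy, h, hyC⟩
    · rintro (⟨hy, h⟩ | ⟨hy, h, hyC⟩)
      · exact ⟨hy, fun hyC => lt_irrefl y (hAC y (Finset.mem_filter.mpr ⟨hy, h⟩) y hyC)⟩
      · exact ⟨hy, hyC⟩
  have hCS : C ⊆ S := Finset.filter_subset _ _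
  have hSsort : S.sort = A.sort ++ C.sort ++ B.sort := by
    rw [← sort_union_of_lt A C hAC, ← sort_union_of_lt (A ∪ C) B]
    · congr 1
      rw [Finset.union_right_comm, ← hdiff, Finset.sdiff_union_of_subset hCS]
    · intro x hx y hy
      rcases Finset.mem_union.mp hx with h | h
      · exact hAB x h y hy
      · exact hCB x h y hy
  have hDsort : (S \ C).sort = A.sort ++ B.sort := by rw [hdiff, sort_union_of_lt A B hAB]
  have hCsort : C.sort.Pairwise (· < ·) := C.sortedLT_sort.pairwise
  have hcl : ∀ a ∈ C.sort, ∀ y, ν.r a y ↔ y ∈ C.sort := by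
    intro a ha y
    rw [Finset.mem_sort, hmemC] at *
    exact ⟨fun h => ν.trans ha h, fun h => ν.trans (ν.symm ha) h⟩
  have h1 : Tendsto (fun N => wordMean t N (C.sort.map b)) atTop
      (𝓝 (((Real.exp (-t) : ℝ) : ℂ) ^ changes b C)) := by
    have h := tendsto_wordMean_indecomp t ht (C.sort.map b) (fun h => by
      have : m ∈ C.sort := (Finset.mem_sort _).mpr hmC
      rw [List.map_eq_nil_iff.mp h] at this
      simp at this) (indecomp_class b _ hCsort hcl)
    convert! h using 3
    rw [cycEdges_map, cycEdges_class ν _ hCsort hcl, List.map_map, List.countP_map, changes,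
      Finset.card_def, Finset.filter_val, ← Multiset.countP_eq_card_filter,
      ← Finset.sort_eq C (· ≤ ·), Multiset.coe_countP]
    congr 1
  have h2 : Tendsto (fun N => wordMean t N ((S \ C).sort.map b)) atTop
      (𝓝 (((Real.exp (-t) : ℝ) : ℂ) ^ changes b (S \ C))) := by
    refine ih _ ?_ (S \ C) (fun x hx y hxy => ?_) rfl
    · rw [← hn]
      exact Finset.card_lt_card (Finset.sdiff_ssubset hCS ⟨m, hmC⟩)
    · rw [Finset.mem_sdiff, hmemC] at hx ⊢
      exact ⟨hS x hx.1 y hxy, fun h => hx.2 (ν.trans h (ν.symm hxy))⟩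
  have hchanges : changes b S = changes b C + changes b (S \ C) := by
    rw [changes, changes, changes, ← Finset.card_union_of_disjoint
      (Finset.disjoint_filter_filter Finset.disjoint_sdiff), ← Finset.filter_union,
      Finset.union_sdiff_of_subset hCS]
  rw [hchanges, pow_add]
  refine (h1.mul h2).congr' ?_
  filter_upwards [eventually_ge_atTop 1] with N hN
  rw [hSsort, hDsort, List.map_append, List.map_append, List.map_append]
  refine (wordMean_factor t hN _ _ _ ?_).symm
  intro v hv hv'
  rw [← List.map_append, ← hDsort] at hv'
  obtain ⟨c, hc, rfl⟩ := List.mem_map.mp hv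
  obtain ⟨y, hy, hyc⟩ := List.mem_map.mp hv'
  rw [Finset.mem_sort] at hc hy
  refine (Finset.mem_sdiff.mp hy).2 ((hmemC y).mpr (ν.trans ((hmemC c).mp hc) ?_))
  exact le_ncPart (Setoid.ker b) hyc.symm

/-! ### The limiting moments -/

theorem kappa_ker {k : ℕ} (b : Fin k → Fin k) :
    kappa (Setoid.ker b) = changes b Finset.univ := by
  unfold kappa changes
  congr 1
  ext a
  simp only [Finset.mem_filter, Finset.mem_univ, true_and]
  exact Iff.rfl

theorem ofFn_eq_sort_map {k : ℕ} (b : Fin k → Fin k) :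
    List.ofFn b = (Finset.univ : Finset (Fin k)).sort.map b := by
  rw [List.ofFn_eq_map]
  congr 1
  exact (Fin.sort_univ k).symm

/-- The exact formula at finite `N`: the mean trace is the sum over partitions of the cumulants times
the normalized mean of the word which spells the partition. -/
theorem expected_trace_eq
    {Ω : Type*} [MeasurableSpace Ω] (P : Measure Ω) [IsProbabilityMeasure P]
    (t : ℝ) (γ : ℝ) (σ : Measure ℝ) [IsFiniteMeasure σ]
    (hσc : ∃ R : ℝ, σ (Set.Icc (-R) R)ᶜ = 0) {N : ℕ} (hN : 1 ≤ N)
    (M : Ω → Matrix (Fin N) (Fin N) ℂ) (hMmeas : Measurable M) (hHerm : ∀ ω, (M ω).IsHermitian)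
    (hlaw : ∀ A : Matrix (Fin N) (Fin N) ℂ, A.IsHermitian →
      ∫ ω, Complex.exp (Complex.I * (A * M ω).trace) ∂P =
        Complex.exp ((N : ℂ) *
          ∫ u, levyExponent γ σ ((star u ⬝ᵥ A.mulVec u).re / N) ∂(gaussModelLaw t N))) (k : ℕ) :
    ∫ ω, (N : ℂ)⁻¹ * ((M ω) ^ k).trace ∂P = ∑ b ∈ leaderFuns k,
      ((∏ j ∈ Finset.univ.image b, cum γ σ (fiberCard b j) : ℝ) : ℂ) *
        wordMean t N (List.ofFn b) := by
  have := isProbabilityMeasure_sampleLaw hN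
  have hcont : Continuous (levyExponent γ σ) := by
    obtain ⟨D, hD0, hD, -⟩ := levyExponent_smooth γ σ hσc
    rw [← hD0]
    exact continuous_iff_continuousAt.mpr fun ξ => (hD 0 ξ).continuousAt
  have h := trace_moment_formula (P := P) (μ := sampleLaw N) (k := k) (modelVec t N)
    (measurable_modelVec t N) (allMom_modelVec t hN) γ σ hσc M hMmeas hHerm (fun A hA => by
      have hc : Continuous fun u : Fin N → ℂ =>
          levyExponent γ σ ((star u ⬝ᵥ A.mulVec u).re / N) := by fun_prop
      rw [hlaw A hA, gaussModelLaw_eq, integral_map (measurable_modelVec t N).aemeasurable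
        hc.aestronglyMeasurable])
  rw [integral_const_mul, h, Finset.mul_sum]
  refine Finset.sum_congr rfl fun b _ => ?_
  have hT : (List.ofFn b).toFinset = Finset.univ.image b := by ext; simp
  rw [wordMean, hT, Finset.prod_mul_distrib, Finset.prod_const]
  simp only [wordMat, List.map_ofFn, Function.comp_def]
  push_cast
  ring

theorem stmt17
    {Ω : Type*} [MeasurableSpace Ω] (P : Measure Ω) [IsProbabilityMeasure P]
    (t : ℝ) (ht : 0 ≤ t)
    (γ : ℝ) (σ : Measure ℝ) [IsFiniteMeasure σ]
    -- σ has compact support: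
    (hσc : ∃ R : ℝ, σ (Set.Icc (-R) R)ᶜ = 0)
    (M : (N : ℕ) → Ω → Matrix (Fin N) (Fin N) ℂ)
    (hMmeas : ∀ N, Measurable (M N))
    (hHerm : ∀ N ω, (M N ω).IsHermitian)
    -- the Fourier transform of M N is A ↦ exp(N E[Ψ_{γ,σ}(U_{N,t}* A U_{N,t} / N)]):
    (hlaw : ∀ N, 1 ≤ N → ∀ A : Matrix (Fin N) (Fin N) ℂ, A.IsHermitian →
      ∫ ω, Complex.exp (Complex.I * (A * M N ω).trace) ∂P =
        Complex.exp ((N : ℂ) *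
          ∫ u, levyExponent γ σ ((star u ⬝ᵥ A.mulVec u).re / N) ∂(gaussModelLaw t N))) :
    ∀ k : ℕ, 1 ≤ k →
      Tendsto (fun N : ℕ => ∫ ω, (N : ℂ)⁻¹ * ((M N ω) ^ k).trace ∂P) atTop
        (𝓝 ((∑ b ∈ leaderFuns k, Real.exp (-(kappa (Setoid.ker b) : ℝ) * t) *
            ∏ j ∈ Finset.univ.image b, cum γ σ (fiberCard b j) : ℝ) : ℂ)) := by
  intro k _
  have hlim : Tendsto (fun N : ℕ => ∑ b ∈ leaderFuns k,
      ((∏ j ∈ Finset.univ.image b, cum γ σ (fiberCard b j) : ℝ) : ℂ) *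
        wordMean t N (List.ofFn b)) atTop
      (𝓝 (∑ b ∈ leaderFuns k,
        ((∏ j ∈ Finset.univ.image b, cum γ σ (fiberCard b j) : ℝ) : ℂ) *
          ((Real.exp (-t) : ℝ) : ℂ) ^ changes b Finset.univ)) := by
    refine tendsto_finsetSum _ fun b _ => Tendsto.const_mul _ ?_
    simp only [ofFn_eq_sort_map]
    exact tendsto_wordMean t ht b Finset.univ fun _ _ y _ => Finset.mem_univ y
  have hval : ((∑ b ∈ leaderFuns k, Real.exp (-(kappa (Setoid.ker b) : ℝ) * t) *
      ∏ j ∈ Finset.univ.image b, cum γ σ (fiberCard b j) : ℝ) : ℂ) = ∑ b ∈ leaderFuns k,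
        ((∏ j ∈ Finset.univ.image b, cum γ σ (fiberCard b j) : ℝ) : ℂ) *
          ((Real.exp (-t) : ℝ) : ℂ) ^ changes b Finset.univ := by
    rw [Complex.ofReal_sum]
    refine Finset.sum_congr rfl fun b _ => ?_
    rw [kappa_ker, neg_mul, ← mul_neg, Real.exp_nat_mul, mul_comm, Complex.ofReal_mul,
      Complex.ofReal_pow]
  rw [hval]
  refine hlim.congr' ?_
  filter_upwards [eventually_ge_atTop 1] with N hN
  exact (expected_trace_eq P t γ σ hσc hN (M N) (hMmeas N) (hHerm N) (hlaw N hN) k).symm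

end
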